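/- arXiv:1404.1598 — 2 statements merged into one kernel-verified Lean document; each statement's English description precedes it below -/
import Mathlib

section
/- Suppose |S(X,P)| ≥ 3. Then the rank of T(X,P) equals max{2, 2p+q+g(t)} + C(p+q,2) + 2p + q + g'(t) − 1 + l + h(p,q,t). -/
open Function Set

/-- The monoid (as a subset of `Function.End X`) of all transformations preserving
the partition induced by the equivalence relation `r`. -/
def TSet {X : Type*} (r : Setoid X) : Set (Function.End X) :=
  {f | ∀ x y : X, r x y → r (f x) (f y)}

/-- The group of units of `TSet r` (i.e. `S(X,P)`): the permutations `g` of `X` with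
`x ∼ y ↔ g x ∼ g y`. -/
def SXP {X : Type*} (r : Setoid X) : Set (Function.End X) :=
  {f | Function.Bijective f ∧ ∀ x y : X, r (f x) (f y) ↔ r x y}

/-- The submonoid (as a subset) of transformations preserving the partition whose
image meets every block of the partition. -/
def SigmaSet {X : Type*} (r : Setoid X) : Set (Function.End X) :=
  {f | f ∈ TSet r ∧ ∀ B ∈ Setoid.classes r, (Set.range f ∩ B).Nonempty}

/-- The number of blocks of the partition having size `s`. -/
noncomputable def blockCount {X : Type*} (r : Setoid X) (s : ℕ) : ℕ :=
  {B | B ∈ Setoid.classes r ∧ B.ncard = s}.ncard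

/-- The rank of a (sub)monoid, given as the subset `A` of a monoid `M`:
the least cardinality of a subset whose generated submonoid is `A`. -/
noncomputable def setRank {M : Type*} [Monoid M] (A : Set M) : ℕ :=
  sInf {k | ∃ S : Set M, S.Finite ∧ S.ncard = k ∧ (Submonoid.closure S : Set M) = A}

/-- `g(0) = g(1) = 0` and `g(t) = 1` for `t ≥ 2`. -/
def gg (t : ℕ) : ℕ := if 2 ≤ t then 1 else 0

/-- `g'(0) = 0` and `g'(t) = 1` for `t ≥ 1`. -/
def gg' (t : ℕ) : ℕ := if 1 ≤ t then 1 else 0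

/-- `h(p,q,0) = 0`, `h(p,q,1) = p + q`, and `h(p,q,t) = p + q + 1` for `t ≥ 2`. -/
def hh (p q t : ℕ) : ℕ := if t = 0 then 0 else if t = 1 then p + q else p + q + 1


/-- coordinates on a set with a partition into blocks. -/
structure Coord (X I : Type*) where build ::
  pr : X → I
  s : I → ℕ
  ka : X → ℕ
  mk : I → ℕ → X
  pr_mk : ∀ i a, pr (mk i a) = i
  ka_mk' : ∀ i a, ka (mk i a) = min a (s i - 1)
  ka_lt : ∀ x, ka x < s (pr x)
  mk_eq : ∀ x, mk (pr x) (ka x) = x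

namespace Coord
variable {X I : Type*} (c : Coord X I)

attribute [simp] pr_mk mk_eq ka_lt

lemma s_pos (i : I) : 0 < c.s i := by
  have := c.ka_lt (c.mk i 0)
  rw [c.pr_mk] at this; omega

lemma ka_mk {i : I} {a : ℕ} (h : a < c.s i) : c.ka (c.mk i a) = a := by
  rw [c.ka_mk']; omega

lemma ext' {x y : X} (h1 : c.pr x = c.pr y) (h2 : c.ka x = c.ka y) : x = y := by
  rw [← c.mk_eq x, ← c.mk_eq y, h1, h2]

lemma mk_ka {x : X} {i : I} (h : c.pr x = i) : c.mk i (c.ka x) = x := by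
  subst h; exact c.mk_eq x

/-- transformations preserving the blocks -/
def T : Submonoid (Function.End X) where
  carrier := {f | ∀ x y, c.pr x = c.pr y → c.pr (f x) = c.pr (f y)}
  one_mem' := fun _ _ h => h
  mul_mem' := fun hf hg x y h => hf _ _ (hg x y h)

/-- induced map on blocks -/
def bar (f : X → X) (i : I) : I := c.pr (f (c.mk i 0))

lemma mem_T {f : Function.End X} : f ∈ c.T ↔ ∀ x y, c.pr x = c.pr y → c.pr (f x) = c.pr (f y) :=
  Iff.rfl

lemma pr_apply {f : Function.End X} (hf : f ∈ c.T) (x : X) : c.pr (f x) = c.bar f (c.pr x) :=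
  hf _ _ (by simp)

lemma bar_mul {f g : Function.End X} (hf : f ∈ c.T) (i : I) :
    c.bar (f * g : Function.End X) i = c.bar f (c.bar g i) := by
  show c.pr (f (g _)) = _
  rw [c.pr_apply hf]; rfl

/-- block map with clamping -/
def P (σ : I → I) : Function.End X := fun x => c.mk (σ (c.pr x)) (c.ka x)

@[simp] lemma pr_P (σ : I → I) (x : X) : c.pr (c.P σ x) = σ (c.pr x) := by simp [P]

lemma P_mem (σ : I → I) : c.P σ ∈ c.T := by
  intro x y h; simp [h]

lemma ka_P {σ : I → I} {x : X} (h : c.ka x < c.s (σ (c.pr x))) : c.ka (c.P σ x) = c.ka x := by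
  simp only [P]; exact c.ka_mk h

@[simp] lemma bar_P (σ : I → I) (i : I) : c.bar (c.P σ) i = σ i := by
  simp [bar]

section
variable [DecidableEq I]

/-- local map -/
def L (i : I) (f : X → X) : Function.End X := fun x => if c.pr x = i then f x else x

end

/-- the units -/
def IsU (g : Function.End X) : Prop :=
  Bijective g ∧ ∀ x y, c.pr (g x) = c.pr (g y) ↔ c.pr x = c.pr y

/-- Decomposition along periodic points. -/
theorem dec [Finite I] (N : Submonoid (Function.End X))
    (hA : ∀ f ∈ c.T, Bijective (c.bar f) → f ∈ N)
    (hM : ∀ (i j : I) (m : Function.End X), i ≠ j → (∀ x, c.pr x ≠ i → m x = x) →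
      (∀ x, c.pr x = i → c.pr (m x) = j) → m ∈ N) : c.T ≤ N := by
  classical
  have : ∀ (n : ℕ) (f : Function.End X), f ∈ c.T →
      Set.ncard {i : I | ∃ x, c.pr x = i ∧ f x ≠ x} = n → f ∈ N := by
    intro n
    induction n using Nat.strong_induction_on with
    | _ n ih =>
    intro f hf hn
    set b := c.bar f with hb
    by_cases hall : ∀ i, b i ∈ periodicPts b → i ∈ periodicPts b
    · have hall' : ∀ i, i ∈ periodicPts b := by
        intro i
        by_contra hi
        have hk : ∀ k, b^[k] i ∉ periodicPts b := by
          intro k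
          induction k with
          | zero => exact hi
          | succ k ihk =>
            rw [Function.iterate_succ_apply']
            exact fun h => ihk (hall _ h)
        obtain ⟨k1, k2, hne, he⟩ := Finite.exists_ne_map_eq_of_infinite (fun k : ℕ => b^[k] i)
        wlog hlt : k1 < k2 generalizing k1 k2
        · exact this k2 k1 hne.symm he.symm (by omega)
        apply hk k1
        refine ⟨k2 - k1, by omega, ?_⟩
        show b^[k2 - k1] (b^[k1] i) = _
        rw [← Function.iterate_add_apply]
        change b^[k1] i = b^[k2] i at he
        rw [he]; congr 1; omega
      apply hA f hf
      have := Function.bijOn_periodicPts b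
      rw [show periodicPts b = Set.univ from Set.eq_univ_of_forall hall'] at this
      exact Set.bijOn_univ.1 this
    · push Not at hall
      obtain ⟨j, hj1, hj2⟩ := hall
      have hbi := Function.bijOn_periodicPts b
      let α : Function.End X := fun x => if c.pr x ∈ periodicPts b then f x else x
      let m : Function.End X := fun x => if c.pr x = j then f x else x
      let g : Function.End X := fun x => if c.pr x ∈ periodicPts b ∨ c.pr x = j then x else f x
      have hprf : ∀ x, c.pr (f x) = b (c.pr x) := c.pr_apply hf
      have hjn : b j ≠ j := fun h => hj2 (h ▸ hj1)
      have e : f = g * m * α := by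
        funext x
        show f x = g (m (α x))
        by_cases h1 : c.pr x ∈ periodicPts b
        · have h2 : c.pr (f x) ∈ periodicPts b := by rw [hprf]; exact hbi.mapsTo h1
          have h3 : c.pr (f x) ≠ j := fun h => hj2 (h ▸ h2)
          simp [α, m, g, h1, h2, h3]
        · by_cases h2 : c.pr x = j
          · have h4 : c.pr (f x) ∈ periodicPts b := by rw [hprf, h2]; exact hj1
            simp [α, m, g, h2, hj2, h4]
          · simp [α, m, g, h1, h2]
      have hα : α ∈ N := by
        apply hA
        · intro x y hxy
          simp only [α, hxy]
          split_ifs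
          · exact hf _ _ hxy
          · exact hxy
        · apply Finite.injective_iff_bijective.1
          have hba : ∀ i, c.bar α i = if i ∈ periodicPts b then b i else i := by
            intro i
            simp only [bar, α, c.pr_mk]
            split_ifs
            · rfl
            · simp
          intro i i' h
          rw [hba, hba] at h
          split_ifs at h with h1 h2 h2
          · exact hbi.injOn h1 h2 h
          · exact absurd (h ▸ hbi.mapsTo h1) h2
          · exact absurd (h ▸ hbi.mapsTo h2) h1
          · exact h
      have hm : m ∈ N := by
        apply hM j (b j) m hjn.symm
        · intro x hx; simp [m, hx]
        · intro x hx; simp [m, hx, hprf]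
      have hg : g ∈ N := by
        apply ih _ _ g _ rfl
        · rw [← hn]
          apply Set.ncard_lt_ncard _ (Set.toFinite _)
          constructor
          · rintro i ⟨x, hx, hx2⟩
            refine ⟨x, hx, ?_⟩
            simp only [g] at hx2
            split_ifs at hx2 with h
            · exact absurd rfl hx2
            · exact hx2
          · intro hsub
            have : j ∈ {i : I | ∃ x, c.pr x = i ∧ f x ≠ x} := by
              refine ⟨c.mk j 0, by simp, ?_⟩
              intro h
              apply hjn
              show c.pr (f (c.mk j 0)) = j
              rw [h, c.pr_mk]
            obtain ⟨x, hx, hx2⟩ := hsub this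
            simp [g, hx] at hx2
        · intro x y hxy
          simp only [g, hxy]
          split_ifs
          · exact hxy
          · exact hf _ _ hxy
      rw [e]
      exact N.mul_mem (N.mul_mem hg hm) hα
  intro f hf
  exact this _ f hf rfl

end Coord


namespace Coord
variable {X I : Type*} (c : Coord X I)

lemma isU_perm [DecidableEq I] {σ : Equiv.Perm I} (h : ∀ i, c.s (σ i) = c.s i) : c.IsU (c.P σ) := by
  have hinv : ∀ τ : Equiv.Perm I, (∀ i, c.s (τ i) = c.s i) → LeftInverse (c.P τ.symm) (c.P τ) := by
    intro τ hτ x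
    have h1 : c.ka (c.P τ x) = c.ka x := c.ka_P (by rw [hτ]; exact c.ka_lt x)
    simp only [P] at h1 ⊢
    simp [h1]
  have hs : ∀ i, c.s (σ.symm i) = c.s i := by
    intro i; conv_rhs => rw [← σ.apply_symm_apply i, h]
  refine ⟨⟨(hinv σ h).injective, (hinv σ.symm hs).surjective⟩, fun x y => ?_⟩
  simp

lemma P_comp {σ τ : I → I} (h : ∀ i, c.s i ≤ c.s (τ i)) : c.P σ * c.P τ = c.P (σ ∘ τ) := by
  funext x
  show c.P σ (c.P τ x) = _
  have h1 : c.ka (c.P τ x) = c.ka x := c.ka_P (lt_of_lt_of_le (c.ka_lt x) (h _))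
  simp only [P] at h1 ⊢
  simp [h1]

/-- A permutation with two prescribed values. -/
lemma exists_perm_two {Y : Type*} [DecidableEq Y] (s : Y → ℕ) {i0 d0 i d : Y} (h0 : i0 ≠ d0)
    (h : i ≠ d) (hi : s i0 = s i) (hd : s d0 = s d) :
    ∃ σ : Equiv.Perm Y, (∀ j, s (σ j) = s j) ∧ σ i0 = i ∧ σ d0 = d := by
  have hsw : ∀ a b : Y, s a = s b → ∀ j, s (Equiv.swap a b j) = s j := by
    intro a b hab j
    rw [Equiv.swap_apply_def]; split_ifs with h1 h2
    · rw [h1, hab]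
    · rw [h2, hab]
    · rfl
  set d1 := Equiv.swap i0 i d0 with hd1
  have hsd1 : s d1 = s d := by rw [hd1, hsw _ _ hi, hd]
  have hne : d1 ≠ i := by
    intro h'
    apply h0
    have := (Equiv.swap i0 i).injective (a₁ := i0) (a₂ := d0) (by rw [Equiv.swap_apply_left, ← hd1, h'])
    exact this
  refine ⟨Equiv.swap d1 d * Equiv.swap i0 i, fun j => ?_, ?_, ?_⟩
  · rw [Equiv.Perm.mul_apply, hsw _ _ hsd1, hsw _ _ hi]
  · rw [Equiv.Perm.mul_apply, Equiv.swap_apply_left, Equiv.swap_apply_of_ne_of_ne hne.symm h]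
  · rw [Equiv.Perm.mul_apply, ← hd1, Equiv.swap_apply_left]

/-- conjugation of block maps -/
lemma conj_P [DecidableEq I] (M : Submonoid (Function.End X)) (hG : ∀ g, c.IsU g → g ∈ M)
    {σ : Equiv.Perm I} (h : ∀ i, c.s (σ i) = c.s i) {τ : I → I} (hτ : c.P τ ∈ M) :
    c.P (σ ∘ τ ∘ σ.symm) ∈ M := by
  have hs : ∀ i, c.s (σ.symm i) = c.s i := by
    intro i; conv_rhs => rw [← σ.apply_symm_apply i, h]
  have e : c.P (σ ∘ τ ∘ σ.symm) = c.P σ * c.P τ * c.P σ.symm := by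
    rw [mul_assoc, c.P_comp (fun i => (hs i).ge)]
    funext x
    show _ = c.P σ (c.P _ x)
    apply c.ext'
    · simp
    · simp only [P, ka_mk', comp_apply, c.pr_mk, h]
      omega
  rw [e]
  exact M.mul_mem (M.mul_mem (hG _ (c.isU_perm h)) hτ) (hG _ (c.isU_perm hs))

/-- collapse of the last two points of a block -/
def col [DecidableEq I] (i : I) : Function.End X :=
  c.L i (fun x => c.mk i (min (c.ka x) (c.s i - 2)))

/-- extension of a transformation of a block by the identity -/
def ofBlock [DecidableEq I] (i : I) : Function.End {x // c.pr x = i} →* Function.End X where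
  toFun f := fun x => if h : c.pr x = i then (f ⟨x, h⟩ : X) else x
  map_one' := by
    funext x
    show (if h : c.pr x = i then x else x) = x
    split_ifs <;> rfl
  map_mul' f g := by
    funext x
    show _ = (fun x => if h : c.pr x = i then (f ⟨x, h⟩ : X) else x) ((fun x => if h : c.pr x = i then (g ⟨x, h⟩ : X) else x) x)
    by_cases h : c.pr x = i
    · have := (g ⟨x, h⟩).2
      simp only [h, this, dite_true]
      rfl
    · simp [h]

lemma ofBlock_apply [DecidableEq I] {i : I} (f : Function.End {x // c.pr x = i}) {x : X} (h : c.pr x = i) :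
    c.ofBlock i f x = f ⟨x, h⟩ := by
  show (if h : c.pr x = i then (f ⟨x, h⟩ : X) else x) = _
  simp [h]

lemma ofBlock_apply' [DecidableEq I] {i : I} (f : Function.End {x // c.pr x = i}) {x : X} (h : c.pr x ≠ i) :
    c.ofBlock i f x = x := by
  show (if h : c.pr x = i then (f ⟨x, h⟩ : X) else x) = _
  simp [h]

/-- a permutation as an endofunction -/
def toE {Y : Type*} (g : Equiv.Perm Y) : Function.End Y := fun y => g y

@[simp] lemma toE_apply {Y : Type*} (g : Equiv.Perm Y) (y : Y) : toE g y = g y := rfl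

lemma isU_ofBlock [DecidableEq I] {i : I} (f : Equiv.Perm {x // c.pr x = i}) :
    c.IsU (c.ofBlock i (toE f)) := by
  have hinv : ∀ g : Equiv.Perm {x // c.pr x = i}, LeftInverse (c.ofBlock i (toE g.symm)) (c.ofBlock i (toE g)) := by
    intro g x
    by_cases h : c.pr x = i
    · rw [c.ofBlock_apply _ h, toE_apply, c.ofBlock_apply _ (g ⟨x, h⟩).2]; simp
    · rw [c.ofBlock_apply' _ h, c.ofBlock_apply' _ h]
  have hpr : ∀ x, c.pr (c.ofBlock i (toE f) x) = c.pr x := by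
    intro x
    by_cases h : c.pr x = i
    · rw [c.ofBlock_apply _ h, toE_apply, (f ⟨x, h⟩).2, h]
    · rw [c.ofBlock_apply' _ h]
  refine ⟨⟨(hinv f).injective, (hinv f.symm).surjective⟩, fun x y => ?_⟩
  rw [hpr, hpr]

/-- trivial coordinates -/
def triv (Y : Type*) : Coord Y Y where
  pr := id
  s := fun _ => 1
  ka := fun _ => 0
  mk := fun i _ => i
  pr_mk := fun _ _ => rfl
  ka_mk' := fun _ _ => by simp
  ka_lt := fun _ => Nat.one_pos
  mk_eq := fun _ => rfl

/-- all local maps from the collapse -/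
theorem loc_mem [Finite X] [DecidableEq I] (M : Submonoid (Function.End X)) (hG : ∀ g, c.IsU g → g ∈ M)
    (i : I) (hcol : 2 ≤ c.s i → c.col i ∈ M) (f : X → X) (hf : ∀ x, c.pr x = i → c.pr (f x) = i) :
    c.L i f ∈ M := by
  classical
  set Y := {x // c.pr x = i} with hY
  have hN : (triv Y).T ≤ M.comap (c.ofBlock i) := by
    apply (triv Y).dec
    · intro g _ hg
      have hg' : Bijective g := hg
      exact hG _ (c.isU_ofBlock (Equiv.ofBijective g hg'))
    · intro x y m hxy hm1 hm2
      have hm2 : m x = y := hm2 x rfl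
      have hm1 : ∀ z, z ≠ x → m z = z := hm1
      -- block has size at least two
      have h2 : 2 ≤ c.s i := by
        by_contra hlt
        apply hxy
        have h1 := c.ka_lt x.1
        have h2 := c.ka_lt y.1
        have := c.s_pos i
        rw [x.2] at h1
        rw [y.2] at h2
        apply Subtype.ext
        apply c.ext'
        · rw [x.2, y.2]
        · omega
      have hcol := hcol h2
      let x0 : Y := ⟨c.mk i (c.s i - 1), by simp⟩
      let y0 : Y := ⟨c.mk i (c.s i - 2), by simp⟩
      have hx0 : c.ka x0.1 = c.s i - 1 := c.ka_mk (by omega)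
      have hy0 : c.ka y0.1 = c.s i - 2 := c.ka_mk (by omega)
      have hne : x0 ≠ y0 := by
        intro h
        rw [h, hy0] at hx0
        omega
      obtain ⟨σ, -, hσ1, hσ2⟩ := exists_perm_two (fun _ : Y => 0) hne hxy rfl rfl
      have e : c.ofBlock i m = c.ofBlock i (toE σ) * c.col i * c.ofBlock i (toE σ.symm) := by
        funext z
        show _ = c.ofBlock i (toE σ) (c.col i (c.ofBlock i (toE σ.symm) z))
        by_cases hz : c.pr z = i
        · rw [c.ofBlock_apply _ hz, c.ofBlock_apply _ hz, toE_apply]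
          set w := σ.symm ⟨z, hz⟩ with hw
          have hzw : (⟨z, hz⟩ : Y) = σ w := by simp [hw]
          rw [hzw]
          have hpw : c.pr (w : X) = i := w.2
          by_cases hw0 : w = x0
          · rw [hw0, hσ1, hm2]
            have : c.col i x0 = y0.1 := by
              simp only [col, L]
              rw [if_pos x0.2, hx0]
              simp only [y0]
              congr 1; omega
            rw [this, c.ofBlock_apply _ y0.2, toE_apply]
            simp only [Subtype.coe_eta, hσ2]
          · rw [hm1 _ (by rw [← hσ1]; exact fun h => hw0 (σ.injective h))]
            have : c.col i w = w.1 := by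
              simp only [col, L]
              rw [if_pos hpw]
              have h3 : c.ka w.1 ≠ c.s i - 1 := by
                intro h
                apply hw0
                apply Subtype.ext
                apply c.ext'
                · rw [hpw, x0.2]
                · rw [h, hx0]
              have h4 := c.ka_lt w.1
              rw [hpw] at h4
              rw [min_eq_left (by omega)]
              exact c.mk_ka hpw
            rw [this, c.ofBlock_apply _ hpw, toE_apply]
        · rw [c.ofBlock_apply' _ hz, c.ofBlock_apply' _ hz]
          have : c.col i z = z := by simp [col, L, hz]
          rw [this, c.ofBlock_apply' _ hz]
      show c.ofBlock i m ∈ M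
      rw [e]
      exact M.mul_mem (M.mul_mem (hG _ (c.isU_ofBlock σ)) hcol) (hG _ (c.isU_ofBlock σ.symm))
  let g : Function.End Y := fun y => ⟨f y, hf _ y.2⟩
  have hg : g ∈ (triv Y).T := by
    intro x y h
    have : x = y := h
    rw [this]
  have := hN hg
  have e : c.L i f = c.ofBlock i g := by
    funext x
    by_cases hx : c.pr x = i
    · rw [c.ofBlock_apply _ hx]; simp [L, hx, g]
    · rw [c.ofBlock_apply' _ hx]; simp [L, hx]
  rw [e]; exact this

end Coord


namespace Coord
variable {X I : Type*} (c : Coord X I)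

/-- canonical exchange of two blocks -/
lemma swap_mul_swap [DecidableEq I] {i d : I} (hid : c.s d + 1 = c.s i) :
    c.P (Equiv.swap i d) * c.P (Equiv.swap i d) = c.col i := by
  funext x
  show c.P (Equiv.swap i d) (c.P (Equiv.swap i d) x) = c.col i x
  have hx := c.ka_lt x
  by_cases hi : c.pr x = i
  · rw [hi] at hx
    apply c.ext'
    · simp [col, L, hi]
    · simp only [P, col, L, hi, Equiv.swap_apply_left, Equiv.swap_apply_right, c.pr_mk, ka_mk', if_true]
      omega
  · by_cases hd : c.pr x = d
    · rw [hd] at hx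
      have hne : d ≠ i := fun h => hi (hd.trans h)
      apply c.ext'
      · simp [col, L, hd, hne]
      · simp only [P, col, L, hd, hne, Equiv.swap_apply_left, Equiv.swap_apply_right, c.pr_mk, ka_mk', if_false]
        omega
    · have hsw : Equiv.swap i d (c.pr x) = c.pr x := Equiv.swap_apply_of_ne_of_ne hi hd
      simp [P, col, L, hsw, hi]

lemma swap_triple [DecidableEq I] {i e d : I} (h1 : c.s d < c.s e) (h2 : c.s e < c.s i) :
    c.P (Equiv.swap i e) * c.P (Equiv.swap e d) * c.P (Equiv.swap i e) = c.P (Equiv.swap i d) := by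
  have hie : i ≠ e := by rintro rfl; omega
  have hed : e ≠ d := by rintro rfl; omega
  have hid : i ≠ d := by rintro rfl; omega
  funext x
  show c.P (Equiv.swap i e) (c.P (Equiv.swap e d) (c.P (Equiv.swap i e) x)) = _
  have hx := c.ka_lt x
  by_cases hi : c.pr x = i
  · rw [hi] at hx
    apply c.ext'
    · simp [hi, Equiv.swap_apply_of_ne_of_ne hid.symm hed.symm]
    · simp only [P, hi, Equiv.swap_apply_left, Equiv.swap_apply_right, c.pr_mk, ka_mk', Equiv.swap_apply_of_ne_of_ne hid.symm hed.symm]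
      omega
  · by_cases he : c.pr x = e
    · rw [he] at hx
      apply c.ext'
      · simp [he, Equiv.swap_apply_of_ne_of_ne hie hid, Equiv.swap_apply_of_ne_of_ne hie.symm hed]
      · simp only [P, he, Equiv.swap_apply_left, Equiv.swap_apply_right, c.pr_mk, ka_mk', Equiv.swap_apply_of_ne_of_ne hie hid, Equiv.swap_apply_of_ne_of_ne hie.symm hed]
        omega
    · by_cases hd : c.pr x = d
      · rw [hd] at hx
        apply c.ext'
        · simp [hd, Equiv.swap_apply_of_ne_of_ne hid.symm hed.symm]
        · simp only [P, hd, Equiv.swap_apply_left, Equiv.swap_apply_right, c.pr_mk, ka_mk', Equiv.swap_apply_of_ne_of_ne hid.symm hed.symm]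
          omega
      · simp [P, Equiv.swap_apply_of_ne_of_ne hi he, Equiv.swap_apply_of_ne_of_ne he hd, Equiv.swap_apply_of_ne_of_ne hi hd]

/-- transport of collapses -/
lemma conj_col [DecidableEq I] (M : Submonoid (Function.End X)) (hG : ∀ g, c.IsU g → g ∈ M)
    {i i' : I} (h : c.s i' = c.s i) (hi : c.col i' ∈ M) : c.col i ∈ M := by
  have hsw : ∀ j, c.s (Equiv.swap i i' j) = c.s j := by
    intro j
    rw [Equiv.swap_apply_def]; split_ifs with h1 h2
    · rw [h1, h]
    · rw [h2, h]
    · rfl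
  have e : c.col i = c.P (Equiv.swap i i') * c.col i' * c.P (Equiv.swap i i') := by
    funext x
    show _ = c.P (Equiv.swap i i') (c.col i' (c.P (Equiv.swap i i') x))
    have hx := c.ka_lt x
    by_cases hi : c.pr x = i
    · rw [hi] at hx
      apply c.ext'
      · simp [col, L, hi]
      · simp only [col, L, P, hi, Equiv.swap_apply_left, Equiv.swap_apply_right, c.pr_mk, ka_mk', if_true, h]
        omega
    · have h1 : Equiv.swap i i' (c.pr x) ≠ i' := by
        rw [Ne, Equiv.swap_apply_eq_iff, Equiv.swap_apply_right]; exact hi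
      apply c.ext'
      · simp [col, L, hi, h1]
      · simp only [col, L, P, hi, h1, c.pr_mk, ka_mk', if_false, hsw]
        omega
  rw [e]
  exact M.mul_mem (M.mul_mem (hG _ (c.isU_perm hsw)) hi) (hG _ (c.isU_perm hsw))

theorem rel_upper [Finite X] [Finite I] [DecidableEq I] (M : Submonoid (Function.End X))
    (hG : ∀ g, c.IsU g → g ∈ M)
    (hC : ∀ i, 2 ≤ c.s i → (∀ j, c.s j ≠ c.s i - 1) → ∃ i', c.s i' = c.s i ∧ c.col i' ∈ M)
    (hW : ∀ i d, c.s d < c.s i → (∀ j, ¬ (c.s d < c.s j ∧ c.s j < c.s i)) →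
      ∃ i' d', c.s i' = c.s i ∧ c.s d' = c.s d ∧ c.P (Equiv.swap i' d') ∈ M)
    (hMg : ∀ i d, d ≠ i → c.s d ≤ c.s i →
      ∃ i' d', d' ≠ i' ∧ c.s i' = c.s i ∧ c.s d' = c.s d ∧ c.P (Function.update id d' i') ∈ M) :
    c.T ≤ M := by
  classical
  -- all exchanges
  have hW1 : ∀ n i d, c.s i - c.s d = n → c.s d < c.s i → c.P (Equiv.swap i d) ∈ M := by
    intro n
    induction n using Nat.strong_induction_on with
    | _ n ih =>
    intro i d hn hlt
    by_cases hcons : ∀ j, ¬ (c.s d < c.s j ∧ c.s j < c.s i)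
    · obtain ⟨i', d', hi', hd', hm⟩ := hW i d hlt hcons
      obtain ⟨σ, hσ, h1, h2⟩ := exists_perm_two c.s (i0 := i') (d0 := d') (i := i) (d := d)
        (by rintro rfl; omega) (by rintro rfl; omega) hi' hd'
      have := c.conj_P M hG hσ hm
      convert this using 2
      rw [← h1, ← h2, Equiv.swap_apply_apply]
      rfl
    · push Not at hcons
      obtain ⟨e, he1, he2⟩ := hcons
      rw [← c.swap_triple he1 he2]
      have a1 := ih (c.s i - c.s e) (by omega) i e rfl he2
      have a2 := ih (c.s e - c.s d) (by omega) e d rfl he1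
      exact M.mul_mem (M.mul_mem a1 a2) a1
  have hW2 : ∀ i d, c.s d ≤ c.s i → c.P (Equiv.swap i d) ∈ M := by
    intro i d h
    rcases h.lt_or_eq with h | h
    · exact hW1 _ i d rfl h
    · apply hG
      apply c.isU_perm
      intro j
      rw [Equiv.swap_apply_def]; split_ifs with h1 h2
      · rw [h1, h]
      · rw [h2, h]
      · rfl
  -- collapses
  have hC1 : ∀ i, 2 ≤ c.s i → c.col i ∈ M := by
    intro i hi
    by_cases h : ∀ j, c.s j ≠ c.s i - 1
    · obtain ⟨i', h1, h2⟩ := hC i hi h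
      exact c.conj_col M hG h1 h2
    · push Not at h
      obtain ⟨d, hd⟩ := h
      rw [← c.swap_mul_swap (i := i) (d := d) (by omega)]
      exact M.mul_mem (hW2 _ _ (by omega)) (hW2 _ _ (by omega))
  have hL : ∀ i f, (∀ x, c.pr x = i → c.pr (f x) = i) → c.L i f ∈ M :=
    fun i f hf => c.loc_mem M hG i (hC1 i) f hf
  -- block permutations
  have hA : ∀ (n : ℕ) (f : Function.End X), f ∈ c.T → Bijective (c.bar f) →
      Set.ncard {i : I | ∃ x, c.pr x = i ∧ f x ≠ x} = n → f ∈ M := by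
    intro n
    induction n using Nat.strong_induction_on with
    | _ n ih =>
    intro f hf hb hn
    have hprf : ∀ x, c.pr (f x) = c.bar f (c.pr x) := c.pr_apply hf
    by_cases hfix : ∃ i, c.bar f i = i ∧ ∃ x, c.pr x = i ∧ f x ≠ x
    · obtain ⟨i, hi, x0, hx0, hx1⟩ := hfix
      let g : Function.End X := fun x => if c.pr x = i then x else f x
      have e : f = g * c.L i f := by
        funext x
        show f x = g (c.L i f x)
        by_cases hx : c.pr x = i
        · have : c.pr (f x) = i := by rw [hprf, hx, hi]
          simp [L, g, hx, this]
        · simp [L, g, hx]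
      have hgb : c.bar g = c.bar f := by
        funext j
        simp only [bar, g, c.pr_mk]
        split_ifs with h
        · rw [h, c.pr_mk]; exact hi.symm
        · rfl
      rw [e]
      refine M.mul_mem (ih _ ?_ g ?_ (hgb ▸ hb) rfl) (hL i f (fun x hx => by rw [hprf, hx, hi]))
      · rw [← hn]
        apply Set.ncard_lt_ncard _ (Set.toFinite _)
        constructor
        · rintro j ⟨x, hx, hx2⟩
          refine ⟨x, hx, ?_⟩
          simp only [g] at hx2
          split_ifs at hx2 with h
          · exact absurd rfl hx2
          · exact hx2
        · intro hsub
          obtain ⟨x, hx, hx2⟩ := hsub ⟨x0, hx0, hx1⟩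
          simp [g, hx] at hx2
      · intro x y hxy
        simp only [g, hxy]
        split_ifs
        · exact hxy
        · exact hf _ _ hxy
    · by_cases hmv : ∃ i, c.bar f i ≠ i
      · obtain ⟨i, hi, hmax⟩ : ∃ i, c.bar f i ≠ i ∧ ∀ j, c.bar f j ≠ j → c.s j ≤ c.s i := by
          obtain ⟨i, hi, h⟩ := Set.exists_max_image {i | c.bar f i ≠ i} c.s (Set.toFinite _) hmv
          exact ⟨i, hi, h⟩
        set d := c.bar f i with hd
        have hdd : c.bar f d ≠ d := fun h => hi (hb.1 h)
        have hsd : c.s d ≤ c.s i := hmax d hdd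
        let g : Function.End X := fun x => if c.pr x = d then x else
          if c.pr x = i then f (c.mk d (c.ka x)) else f x
        let u : X → X := fun x => c.mk i (c.ka (f x))
        have e : f = g * (c.P (Equiv.swap i d) * c.L i u) := by
          funext x
          show f x = g (c.P (Equiv.swap i d) (c.L i u x))
          by_cases hx : c.pr x = i
          · have h1 : c.pr (f x) = d := by rw [hprf, hx]
            have h2 := c.ka_lt (f x)
            rw [h1] at h2
            simp only [L, hx, if_true, u]
            have h3 : c.P (Equiv.swap i d) (c.mk i (c.ka (f x))) = f x := by
              simp only [P, c.pr_mk, Equiv.swap_apply_left]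
              rw [c.ka_mk (by omega), c.mk_ka h1]
            rw [h3]
            simp [g, h1]
          · simp only [L, hx, if_false]
            by_cases hx2 : c.pr x = d
            · have h2 := c.ka_lt x
              rw [hx2] at h2
              simp only [P, hx2, Equiv.swap_apply_right, g, c.pr_mk, hi.symm, if_false, if_true]
              rw [c.ka_mk (by omega), c.mk_ka hx2]
            · simp [P, Equiv.swap_apply_of_ne_of_ne hx hx2, g, hx, hx2]
        have hgT : g ∈ c.T := by
          intro x y hxy
          simp only [g, hxy]
          split_ifs
          · exact hxy
          · exact hf _ _ (by simp)
          · exact hf _ _ hxy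
        have hgb : Bijective (c.bar g) := by
          apply Finite.injective_iff_bijective.1
          apply Finite.injective_iff_surjective.2
          have h1 : ∀ j, c.bar f j = c.bar g (Equiv.swap i d j) := by
            intro j
            by_cases h1 : j = i
            · rw [h1, Equiv.swap_apply_left, ← hd]; simp [bar, g]
            · by_cases h2 : j = d
              · rw [h2, Equiv.swap_apply_right]
                simp only [bar, g, c.pr_mk, if_neg hi.symm, if_true]
                exact hf _ _ (by simp)
              · rw [Equiv.swap_apply_of_ne_of_ne h1 h2]
                simp only [bar, g, c.pr_mk, if_neg h1, if_neg h2]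
          intro j
          obtain ⟨k, rfl⟩ := hb.2 j
          exact ⟨_, (h1 k).symm⟩
        rw [e]
        refine M.mul_mem (ih _ ?_ g hgT hgb rfl) (M.mul_mem (hW2 _ _ hsd) (hL i u (fun x hx => by simp [u])))
        rw [← hn]
        apply Set.ncard_lt_ncard _ (Set.toFinite _)
        constructor
        · rintro j ⟨x, hx, hx2⟩
          simp only [g] at hx2
          split_ifs at hx2 with h1 h2
          · exact absurd rfl hx2
          · refine ⟨x, hx, fun h => hi ?_⟩
            rw [hd, ← h2, ← hprf, h]
          · exact ⟨x, hx, hx2⟩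
        · intro hsub
          have : d ∈ {i : I | ∃ x, c.pr x = i ∧ f x ≠ x} := by
            refine ⟨c.mk d 0, by simp, fun h => hdd ?_⟩
            show c.pr (f (c.mk d 0)) = d
            rw [h, c.pr_mk]
          obtain ⟨x, hx, hx2⟩ := hsub this
          simp [g, hx] at hx2
      · push Not at hfix hmv
        have : f = 1 := by
          funext x
          exact hfix _ (hmv _) x rfl
        rw [this]; exact M.one_mem
  have hA' : ∀ f ∈ c.T, Bijective (c.bar f) → f ∈ M := fun f hf hb => hA _ f hf hb rfl
  -- merges
  have hMg1 : ∀ i d, d ≠ i → c.s d ≤ c.s i → c.P (Function.update id d i) ∈ M := by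
    intro i d hne hle
    obtain ⟨i', d', hne', hi', hd', hm⟩ := hMg i d hne hle
    obtain ⟨σ, hσ, h1, h2⟩ := exists_perm_two c.s (i0 := i') (d0 := d') (i := i) (d := d)
      hne'.symm hne.symm hi' hd'
    have := c.conj_P M hG hσ hm
    convert this using 2
    funext j
    simp only [comp_apply, Function.update_apply, id]
    rw [← h1, ← h2]
    by_cases hj : σ.symm j = d'
    · simp [← hj]
    · rw [if_neg hj, if_neg (fun h => hj (by simp [h]))]; simp
  apply c.dec M hA'
  intro i j m hij hm1 hm2
  rcases le_or_gt (c.s i) (c.s j) with hle | hlt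
  · -- injective part
    set U : Set X := m '' {x | c.pr x = i} with hU
    have hUj : ∀ y ∈ U, c.pr y = j := by
      rintro y ⟨x, hx, rfl⟩; exact hm2 x hx
    have hsec : ∀ y ∈ U, ∃ x, c.pr x = i ∧ m x = y := by
      rintro y ⟨x, hx, rfl⟩; exact ⟨x, hx, rfl⟩
    choose! t ht1 ht2 using hsec
    let θ : X → X := fun y => if c.pr y = j then c.mk j (c.ka (t y)) else y
    have hθka : ∀ y ∈ U, c.ka (θ y) = c.ka (t y) := by
      intro y hy
      have h2 := c.ka_lt (t y)
      rw [ht1 y hy] at h2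
      simp only [θ, hUj y hy, if_true]
      exact c.ka_mk (by omega)
    have hθpr : ∀ y, c.pr (θ y) = c.pr y := by
      intro y; simp only [θ]; split_ifs with h
      · rw [c.pr_mk, h]
      · rfl
    have hinj : Set.InjOn θ (U ∪ {x | c.pr x ≠ j}) := by
      intro y hy y' hy' h
      have hp : c.pr y = c.pr y' := by rw [← hθpr y, ← hθpr y', h]
      by_cases hyj : c.pr y = j
      · have hyU : y ∈ U := hy.resolve_right (fun h => h hyj)
        have hyU' : y' ∈ U := hy'.resolve_right (fun h => h (hp ▸ hyj))
        have : t y = t y' := by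
          apply c.ext'
          · rw [ht1 y hyU, ht1 y' hyU']
          · rw [← hθka y hyU, ← hθka y' hyU', h]
        rw [← ht2 y hyU, ← ht2 y' hyU', this]
      · simp only [θ, if_neg hyj, if_neg (hp ▸ hyj)] at h
        exact h
    have := Fintype.ofFinite X
    obtain ⟨g, hg⟩ : ∃ g : Equiv.Perm X, ∀ y ∈ U ∪ {x | c.pr x ≠ j}, g y = θ y := by
      obtain ⟨g, hg⟩ := Set.MapsTo.exists_equiv_extend_of_card_eq (t := (Finset.univ : Finset X))
        (s := U ∪ {x | c.pr x ≠ j}) (f := θ) (by simp) (fun _ _ => by simp) hinj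
      refine ⟨g.trans (Equiv.subtypeUnivEquiv (by simp)), fun y hy => ?_⟩
      rw [← hg y hy]; rfl
    have hgout : ∀ y, c.pr y ≠ j → g y = y := by
      intro y hy
      rw [hg y (Or.inr hy)]
      simp [θ, hy]
    have hgpr : ∀ y, c.pr (g y) = c.pr y := by
      intro y
      by_cases hy : c.pr y = j
      · by_contra h
        have h1 : c.pr (g y) ≠ j := fun h' => h (h'.trans hy.symm)
        have h2 := hgout _ h1
        exact h1 (by rw [g.injective h2]; exact hy)
      · rw [hgout y hy]
    have hgspr : ∀ y, c.pr (g.symm y) = c.pr y := by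
      intro y; conv_rhs => rw [← g.apply_symm_apply y, hgpr]
    have hU1 : c.IsU (toE g) := ⟨g.bijective, fun x y => by simp [hgpr]⟩
    have hU2 : c.IsU (toE g.symm) := ⟨g.symm.bijective, fun x y => by simp [hgspr]⟩
    let u : X → X := fun x => t (m x)
    have e : m = toE g.symm * (c.P (Function.update id i j) * (toE g * c.L i u)) := by
      funext x
      show m x = g.symm (c.P (Function.update id i j) (g (c.L i u x)))
      rw [Equiv.eq_symm_apply]
      by_cases hx : c.pr x = i
      · have hmU : m x ∈ U := ⟨x, hx, rfl⟩
        have h1 := ht1 _ hmU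
        simp only [L, hx, if_true, u]
        rw [hgout (t (m x)) (by rw [h1]; exact hij), hg _ (Or.inl hmU)]
        simp [θ, hm2 x hx, P, h1]
      · have h1 : c.pr (g x) ≠ i := by rw [hgpr]; exact hx
        rw [hm1 x hx]
        simp [L, hx, P, h1, Function.update_of_ne]
    rw [e]
    refine M.mul_mem (hG _ hU2) (M.mul_mem (hMg1 _ _ hij hle) (M.mul_mem (hG _ hU1) (hL i u ?_)))
    intro x hx
    exact ht1 _ ⟨x, hx, rfl⟩
  · let α : Function.End X := fun x => if c.pr x = j then c.mk i (c.ka x) else m x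
    have hprα : ∀ x, c.pr (α x) = Equiv.swap i j (c.pr x) := by
      intro x
      simp only [α]
      split_ifs with h
      · simp [h]
      · by_cases h2 : c.pr x = i
        · rw [hm2 x h2, h2]; simp
        · rw [hm1 x h2, Equiv.swap_apply_of_ne_of_ne h2 h]
    have e : m = c.P (Equiv.swap i j) * (c.P (Function.update id j i) * α) := by
      funext x
      show m x = c.P (Equiv.swap i j) (c.P (Function.update id j i) (α x))
      by_cases h : c.pr x = j
      · have hx := c.ka_lt x
        rw [h] at hx
        have h1 : α x = c.mk i (c.ka x) := by simp [α, h]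
        rw [h1, hm1 x (by rw [h]; exact hij.symm)]
        have h2 : c.P (Function.update id j i) (c.mk i (c.ka x)) = c.mk i (c.ka x) := by
          simp only [P, c.pr_mk, Function.update_of_ne hij, id]
          rw [c.ka_mk (by omega)]
        rw [h2]
        simp only [P, c.pr_mk, Equiv.swap_apply_left]
        rw [c.ka_mk (by omega), c.mk_ka h]
      · have h1 : α x = m x := by simp [α, h]
        rw [h1]
        by_cases h2 : c.pr x = i
        · have h3 := hm2 x h2
          have hx := c.ka_lt (m x)
          rw [h3] at hx
          have h4 : c.P (Function.update id j i) (m x) = c.mk i (c.ka (m x)) := by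
            simp only [P, h3, Function.update_self]
          rw [h4]
          simp only [P, c.pr_mk, Equiv.swap_apply_left]
          rw [c.ka_mk (by omega), c.mk_ka h3]
        · rw [hm1 x h2]
          have h4 : c.P (Function.update id j i) x = x := by
            simp [P, Function.update_of_ne h]
          rw [h4]
          simp [P, Equiv.swap_apply_of_ne_of_ne h2 h]
    rw [e]
    refine M.mul_mem (hW2 _ _ hlt.le) (M.mul_mem (hMg1 _ _ hij.symm hlt.le) (hA' α ?_ ?_))
    · intro x y hxy; rw [hprα, hprα, hxy]
    · have : c.bar α = Equiv.swap i j := by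
        funext k; simp only [bar, hprα, c.pr_mk]
      rw [this]; exact (Equiv.swap i j).bijective

end Coord


namespace Coord
variable {X I : Type*} (c : Coord X I)

/-- A permutation preserving a map is generated by transpositions inside the fibres. -/
lemma swap_gen {Y J : Type*} [Finite Y] [DecidableEq Y] (ρ : Y → J) (H : Subgroup (Equiv.Perm Y))
    (h : ∀ x y, ρ x = ρ y → Equiv.swap x y ∈ H) :
    ∀ g : Equiv.Perm Y, (∀ x, ρ (g x) = ρ x) → g ∈ H := by
  have := Fintype.ofFinite Y
  have : ∀ (n : ℕ) (g : Equiv.Perm Y), g.support.card = n → (∀ x, ρ (g x) = ρ x) → g ∈ H := by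
    intro n
    induction n using Nat.strong_induction_on with
    | _ n ih =>
    intro g hn hg
    by_cases h1 : g = 1
    · rw [h1]; exact H.one_mem
    obtain ⟨x, hx⟩ : ∃ x, g x ≠ x := by
      by_contra hcon
      push Not at hcon
      exact h1 (Equiv.ext hcon)
    have hsw : Equiv.swap x (g x) ∈ H := h _ _ (hg x).symm
    have := ih _ (hn ▸ Equiv.Perm.card_support_swap_mul hx) _ rfl (by
      intro y
      rw [Equiv.Perm.mul_apply, Equiv.swap_apply_def]
      split_ifs with h2 h3
      · rw [hg, ← hg y, h2]
      · rw [← hg y, h3, hg x]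
      · exact hg y)
    exact (H.mul_mem_cancel_left hsw).1 this
  intro g hg
  exact this _ g rfl hg

/-- the group of units as a group of permutations -/
def Gp : Subgroup (Equiv.Perm X) where
  carrier := {g | ∀ x y, c.pr (g x) = c.pr (g y) ↔ c.pr x = c.pr y}
  one_mem' := fun _ _ => Iff.rfl
  mul_mem' := fun hf hg x y => (hf _ _).trans (hg x y)
  inv_mem' := by
    intro g hg x y
    have := hg (g⁻¹ x) (g⁻¹ y)
    simpa using this.symm

lemma mem_Gp {g : Equiv.Perm X} : g ∈ c.Gp ↔ ∀ x y, c.pr (g x) = c.pr (g y) ↔ c.pr x = c.pr y := Iff.rfl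

/-- size preserving permutations of the blocks -/
def SI : Subgroup (Equiv.Perm I) where
  carrier := {σ | ∀ i, c.s (σ i) = c.s i}
  one_mem' := fun _ => rfl
  mul_mem' := fun hf hg i => (hf _).trans (hg i)
  inv_mem' := by
    intro g hg i
    have := hg (g⁻¹ i)
    simpa using this.symm

lemma mem_SI {σ : Equiv.Perm I} : σ ∈ c.SI ↔ ∀ i, c.s (σ i) = c.s i := Iff.rfl

lemma P_inv {σ τ : Equiv.Perm I} (h : σ ∈ c.SI) (hτ : τ * σ = 1) (x : X) : c.P τ (c.P σ x) = x := by
  have h1 : c.ka (c.P σ x) = c.ka x := c.ka_P (by rw [h]; exact c.ka_lt x)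
  simp only [P] at h1 ⊢
  have h2 : τ (σ (c.pr x)) = c.pr x := by
    rw [← Equiv.Perm.mul_apply, hτ]; rfl
  simp [h1, h2]

/-- lifting of block permutations -/
def B : c.SI →* Equiv.Perm X where
  toFun σ := ⟨c.P σ.1, c.P ((σ⁻¹ : c.SI) : Equiv.Perm I), c.P_inv σ.2 (by simp), c.P_inv (σ⁻¹).2 (by simp)⟩
  map_one' := by
    ext x
    show c.P _ x = x
    simp [P]
  map_mul' σ τ := by
    ext x
    show c.P _ x = c.P _ (c.P _ x)
    have h1 : c.ka (c.P τ.1 x) = c.ka x := c.ka_P (by rw [τ.2]; exact c.ka_lt x)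
    simp only [P] at h1 ⊢
    simp [h1]

lemma B_apply (σ : c.SI) (x : X) : c.B σ x = c.mk (σ.1 (c.pr x)) (c.ka x) := rfl

@[simp] lemma pr_B (σ : c.SI) (x : X) : c.pr (c.B σ x) = σ.1 (c.pr x) := by simp [B_apply]
@[simp] lemma ka_B (σ : c.SI) (x : X) : c.ka (c.B σ x) = c.ka x :=
  c.ka_P (by rw [σ.2]; exact c.ka_lt x)

lemma B_mem (σ : c.SI) : c.B σ ∈ c.Gp := by
  intro x y; simp

lemma B_eq_P (σ : c.SI) : toE (c.B σ) = c.P σ.1 := rfl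

lemma swap_mem_SI [DecidableEq I] {i j : I} (h : c.s i = c.s j) : Equiv.swap i j ∈ c.SI := by
  intro k
  rw [Equiv.swap_apply_def]; split_ifs with h1 h2
  · rw [h1, h]
  · rw [h2, h]
  · rfl

/-- block permutations whose lift lies in H -/
def HB (H : Subgroup (Equiv.Perm X)) : Subgroup (Equiv.Perm I) := (H.comap c.B).map c.SI.subtype

lemma mem_HB {H : Subgroup (Equiv.Perm X)} {σ : Equiv.Perm I} :
    σ ∈ c.HB H ↔ ∃ h : σ ∈ c.SI, c.B ⟨σ, h⟩ ∈ H := by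
  simp only [HB, Subgroup.mem_map, Subgroup.mem_comap]
  constructor
  · rintro ⟨x, hx, rfl⟩; exact ⟨x.2, hx⟩
  · rintro ⟨h, h2⟩; exact ⟨⟨σ, h⟩, h2, rfl⟩

/-- induced block permutation -/
def barG (g : Equiv.Perm X) (hg : g ∈ c.Gp) : Equiv.Perm I where
  toFun i := c.pr (g (c.mk i 0))
  invFun i := c.pr (g⁻¹ (c.mk i 0))
  left_inv i := by
    have h := (c.Gp.inv_mem hg (c.mk (c.pr (g (c.mk i 0))) 0) (g (c.mk i 0))).2 (by simp)
    exact h.trans (by simp)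
  right_inv i := by
    have h := (hg (c.mk (c.pr (g⁻¹ (c.mk i 0))) 0) (g⁻¹ (c.mk i 0))).2 (by simp)
    exact h.trans (by simp)

lemma pr_barG {g : Equiv.Perm X} (hg : g ∈ c.Gp) (x : X) : c.pr (g x) = c.barG g hg (c.pr x) := by
  show _ = c.pr (g (c.mk (c.pr x) 0))
  exact (hg _ _).2 (by simp)

/-- points of a block -/
def blockEquiv (i : I) : {x // c.pr x = i} ≃ Fin (c.s i) where
  toFun x := ⟨c.ka x.1, by have := c.ka_lt x.1; rwa [x.2] at this⟩
  invFun a := ⟨c.mk i a, by simp⟩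
  left_inv x := Subtype.ext (c.mk_ka x.2)
  right_inv a := Fin.ext (c.ka_mk a.2)

lemma barG_mem {g : Equiv.Perm X} (hg : g ∈ c.Gp) : c.barG g hg ∈ c.SI := by
  intro i
  have e : {x // c.pr x = i} ≃ {x // c.pr x = c.barG g hg i} := by
    refine g.subtypeEquiv (fun x => ?_)
    rw [c.pr_barG hg]
    simp
  have e2 := ((c.blockEquiv i).symm.trans e).trans (c.blockEquiv _)
  have := Fintype.card_congr e2
  simpa using this.symm

lemma Gp_le [Finite X] [Finite I] [DecidableEq X] [DecidableEq I] (H : Subgroup (Equiv.Perm X))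
    (h1 : ∀ x y, c.pr x = c.pr y → Equiv.swap x y ∈ H)
    (h2 : ∀ i j, c.s i = c.s j → Equiv.swap i j ∈ c.HB H) : c.Gp ≤ H := by
  intro g hg
  have hb := swap_gen c.s (c.HB H) h2 (c.barG g hg) (c.barG_mem hg)
  rw [mem_HB] at hb
  obtain ⟨hS, hB⟩ := hb
  have h3 := swap_gen c.pr H h1 ((c.B ⟨_, hS⟩)⁻¹ * g) (by
    intro x
    rw [Equiv.Perm.mul_apply, ← map_inv, pr_B, c.pr_barG hg]
    simp)
  exact (H.mul_mem_cancel_left (H.inv_mem hB)).1 h3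

/-- equivalence from equality of cardinalities -/
noncomputable def eqvCard {Y Z : Type*} [Finite Y] [Finite Z] (h : Nat.card Y = Nat.card Z) : Y ≃ Z :=
  (Finite.equivFin Y).trans ((finCongr h).trans (Finite.equivFin Z).symm)

/-- Transposition and odd order permutation generating a symmetric group, on equivalence relations. -/
lemma tg (Y : Type*) [Finite Y] (hY : 2 ≤ Nat.card Y) : ∃ (x0 x1 : Y) (γ : Equiv.Perm Y) (o : ℕ),
    x0 ≠ x1 ∧ Odd o ∧ γ ^ o = 1 ∧ ∀ R : Y → Y → Prop, Equivalence R →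
      (∀ x y, R x y → R (γ x) (γ y)) → R x0 x1 → ∀ x y, R x y := by
  obtain ⟨n, hn⟩ : ∃ n, Nat.card Y = n := ⟨_, rfl⟩
  have key : ∀ (Z : Type) (e : Y ≃ Z), (∃ (x0 x1 : Z) (γ : Equiv.Perm Z) (o : ℕ),
      x0 ≠ x1 ∧ Odd o ∧ γ ^ o = 1 ∧ ∀ R : Z → Z → Prop, Equivalence R →
      (∀ x y, R x y → R (γ x) (γ y)) → R x0 x1 → ∀ x y, R x y) → ∃ (x0 x1 : Y) (γ : Equiv.Perm Y) (o : ℕ),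
      x0 ≠ x1 ∧ Odd o ∧ γ ^ o = 1 ∧ ∀ R : Y → Y → Prop, Equivalence R →
      (∀ x y, R x y → R (γ x) (γ y)) → R x0 x1 → ∀ x y, R x y := by
    rintro Z e ⟨x0, x1, γ, o, h1, h2, h3, h4⟩
    refine ⟨e.symm x0, e.symm x1, e.symm.permCongr γ, o, by simpa using h1, h2, ?_, ?_⟩
    · have : e.symm.permCongr γ = e.symm.permCongrHom γ := rfl
      rw [this, ← map_pow, h3, map_one]
    · intro R hR hinv h0 x y
      have := h4 (fun x y => R (e.symm x) (e.symm y)) ⟨fun _ => hR.refl _, hR.symm, hR.trans⟩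
        (fun x y h => by simpa using hinv _ _ h) h0 (e x) (e y)
      simpa using this
  rcases Nat.even_or_odd n with hev | hodd
  · obtain ⟨k, hk, hk1⟩ : ∃ k, n = k + 1 ∧ Odd k := by
      refine ⟨n - 1, by omega, ?_⟩
      exact Nat.Even.sub_odd (by omega) hev odd_one
    have : NeZero k := ⟨by rcases hk1 with ⟨j, hj⟩; omega⟩
    have e : Y ≃ Option (ZMod k) := eqvCard (by
      rw [Finite.card_option, Nat.card_zmod]; omega)
    apply key _ e
    have hz : (Equiv.addRight (1 : ZMod k)) ^ k = 1 := by
      ext x; simp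
    refine ⟨none, some 0, Equiv.optionCongr (Equiv.addRight (1 : ZMod k)), k, by simp, hk1, ?_, ?_⟩
    · have : ∀ j : ℕ, (Equiv.optionCongr (Equiv.addRight (1 : ZMod k))) ^ j = Equiv.optionCongr ((Equiv.addRight (1 : ZMod k)) ^ j) := by
        intro j
        induction j with
        | zero => ext x; cases x <;> simp
        | succ j ih =>
          rw [pow_succ, ih, pow_succ]
          ext x; cases x <;> simp [add_assoc]
      rw [this, hz]; ext x; cases x <;> simp
    · intro R hR hinv h0
      have h1 : ∀ j : ℕ, R none (some (j : ZMod k)) := by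
        intro j
        induction j with
        | zero => simpa using h0
        | succ j ih => simpa using hinv _ _ ih
      have h2 : ∀ x, R none x := by
        intro x
        cases x with
        | none => exact hR.refl _
        | some x => simpa using h1 x.val
      exact fun x y => hR.trans (hR.symm (h2 x)) (h2 y)
  · have : NeZero n := ⟨by omega⟩
    have : Fact (1 < n) := ⟨by omega⟩
    have e : Y ≃ ZMod n := eqvCard (by rw [Nat.card_zmod]; omega)
    apply key _ e
    refine ⟨0, 1, Equiv.addRight (1 : ZMod n), n, by simp, hodd, ?_, ?_⟩
    · ext x; simp
    · intro R hR hinv h0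
      have h1 : ∀ j : ℕ, R (j : ZMod n) ((j : ZMod n) + 1) := by
        intro j
        induction j with
        | zero => simpa using h0
        | succ j ih => simpa using hinv _ _ ih
      have h3 : ∀ j : ℕ, R 0 (j : ZMod n) := by
        intro j
        induction j with
        | zero => simpa using hR.refl _
        | succ j ih => simpa using hR.trans ih (h1 j)
      have h2 : ∀ x, R 0 x := by
        intro x
        simpa using h3 x.val
      exact fun x y => hR.trans (hR.symm (h2 x)) (h2 y)

lemma split_mem {G : Type*} [Group G] (H : Subgroup G) {u v : G} {o : ℕ} (hc : Commute u v)
    (hu : u * u = 1) (ho : Odd o) (hv : v ^ o = 1) (h : u * v ∈ H) : u ∈ H ∧ v ∈ H := by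
  have h1 : u ∈ H := by
    have := H.pow_mem h o
    rw [hc.mul_pow, hv, mul_one] at this
    obtain ⟨k, rfl⟩ := ho
    rw [pow_succ, pow_mul, pow_two, hu, one_pow, one_mul] at this
    exact this
  exact ⟨h1, (H.mul_mem_cancel_left h1).1 h⟩

end Coord


namespace Coord
variable {X I : Type*} (c : Coord X I)

/-- action of a permutation of the positions on all the blocks of size a -/
def Dg (a : ℕ) : Equiv.Perm (Fin a) →* Equiv.Perm X where
  toFun γ :=
    { toFun := fun x => if h : c.s (c.pr x) = a then c.mk (c.pr x) (γ ⟨c.ka x, h ▸ c.ka_lt x⟩) else x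
      invFun := fun x => if h : c.s (c.pr x) = a then c.mk (c.pr x) (γ⁻¹ ⟨c.ka x, h ▸ c.ka_lt x⟩) else x
      left_inv := by
        intro x
        by_cases h : c.s (c.pr x) = a
        · have h2 : ∀ b : Fin a, c.ka (c.mk (c.pr x) b) = b := fun b => c.ka_mk (by rw [h]; exact b.2)
          simp [h, h2]
        · simp [h]
      right_inv := by
        intro x
        by_cases h : c.s (c.pr x) = a
        · have h2 : ∀ b : Fin a, c.ka (c.mk (c.pr x) b) = b := fun b => c.ka_mk (by rw [h]; exact b.2)
          simp [h, h2]
        · simp [h] }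
  map_one' := by
    ext x
    simp
  map_mul' γ δ := by
    ext x
    by_cases h : c.s (c.pr x) = a
    · have h2 : ∀ b : Fin a, c.ka (c.mk (c.pr x) b) = b := fun b => c.ka_mk (by rw [h]; exact b.2)
      simp [h, h2]
    · simp [h]

lemma Dg_apply {a : ℕ} (γ : Equiv.Perm (Fin a)) {x : X} (h : c.s (c.pr x) = a) :
    c.Dg a γ x = c.mk (c.pr x) (γ ⟨c.ka x, h ▸ c.ka_lt x⟩) := by
  show (if h : c.s (c.pr x) = a then c.mk (c.pr x) (γ ⟨c.ka x, h ▸ c.ka_lt x⟩) else x) = _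
  rw [dif_pos h]

lemma Dg_apply' {a : ℕ} (γ : Equiv.Perm (Fin a)) {x : X} (h : c.s (c.pr x) ≠ a) :
    c.Dg a γ x = x := by
  show (if h : c.s (c.pr x) = a then c.mk (c.pr x) (γ ⟨c.ka x, h ▸ c.ka_lt x⟩) else x) = _
  rw [dif_neg h]

lemma pr_Dg {a : ℕ} (γ : Equiv.Perm (Fin a)) (x : X) : c.pr (c.Dg a γ x) = c.pr x := by
  by_cases h : c.s (c.pr x) = a
  · rw [c.Dg_apply _ h]; simp
  · rw [c.Dg_apply' _ h]

lemma Dg_comm {a : ℕ} (γ : Equiv.Perm (Fin a)) (σ : c.SI) : Commute (c.B σ) (c.Dg a γ) := by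
  ext x
  show c.B σ (c.Dg a γ x) = c.Dg a γ (c.B σ x)
  have h1 : c.s (c.pr (c.B σ x)) = c.s (c.pr x) := by rw [pr_B, σ.2]
  by_cases h : c.s (c.pr x) = a
  · have h2 : ∀ b : Fin a, c.ka (c.mk (c.pr x) b) = b := fun b => c.ka_mk (by rw [h]; exact b.2)
    rw [c.Dg_apply _ h, c.Dg_apply _ (h1.trans h), B_apply]
    simp [h2]
  · rw [c.Dg_apply' _ h, c.Dg_apply' _ (by rwa [h1])]

lemma pres_mem {g : Equiv.Perm X} (h : ∀ x, c.pr (g x) = c.pr x) : g ∈ c.Gp := by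
  intro x y; rw [h, h]

lemma swap_self_mem {Y : Type*} [DecidableEq Y] (H : Subgroup (Equiv.Perm Y)) (y : Y) :
    Equiv.swap y y ∈ H := by
  rw [Equiv.swap_self]; exact H.one_mem

lemma base_slot [DecidableEq X] (i : I) (h : 2 ≤ c.s i) : ∃ (u v : Equiv.Perm X) (o : ℕ),
    u * u = 1 ∧ Odd o ∧ v ^ o = 1 ∧ u ∈ c.Gp ∧ v ∈ c.Gp ∧ (∀ x, c.pr x ≠ i → u x = x) ∧
    (∀ x, c.s (c.pr x) ≠ c.s i → v x = x) ∧ (∀ σ, Commute (c.B σ) v) ∧ (∀ x, c.pr (u x) = c.pr x) ∧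
    ∀ H : Subgroup (Equiv.Perm X), u ∈ H → v ∈ H → ∀ x y, c.pr x = i → c.pr y = i → Equiv.swap x y ∈ H := by
  obtain ⟨x0, x1, γ, o, -, ho, hγ, hR⟩ := tg (Fin (c.s i)) (by simpa using h)
  have hu : ∀ x, c.pr (Equiv.swap (c.mk i x0) (c.mk i x1) x) = c.pr x := by
    intro x
    rw [Equiv.swap_apply_def]; split_ifs with h1 h2
    · rw [h1]; simp
    · rw [h2]; simp
    · rfl
  refine ⟨Equiv.swap (c.mk i x0) (c.mk i x1), c.Dg _ γ, o, by simp, ho, ?_, c.pres_mem hu,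
    c.pres_mem (c.pr_Dg γ), ?_, fun x hx => c.Dg_apply' _ hx, c.Dg_comm γ, hu, ?_⟩
  · rw [← map_pow, hγ, map_one]
  · intro x hx
    apply Equiv.swap_apply_of_ne_of_ne <;> (rintro rfl; simp at hx)
  · intro H h1 h2 x y hx hy
    have hD : ∀ b : Fin (c.s i), c.Dg (c.s i) γ (c.mk i b) = c.mk i (γ b) := by
      intro b
      rw [c.Dg_apply _ (by simp)]
      simp [c.ka_mk b.2]
    have := hR (fun x y => Equiv.swap (c.mk i x) (c.mk i y) ∈ H) ⟨fun x => swap_self_mem H _,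
      fun {x y} h => by rwa [Equiv.swap_comm], fun {x y z} h1 h2 => SubmonoidClass.swap_mem_trans H h1 h2⟩ (by
        intro x y h
        have := H.mul_mem (H.mul_mem h2 h) (H.inv_mem h2)
        rw [← Equiv.swap_apply_apply, hD, hD] at this
        exact this) h1 (c.blockEquiv i ⟨x, hx⟩) (c.blockEquiv i ⟨y, hy⟩)
    simp only [blockEquiv, Equiv.coe_fn_mk] at this
    rwa [c.mk_ka hx, c.mk_ka hy] at this

lemma ofSubtype_mem_SI [DecidableEq I] (a : ℕ) (γ : Equiv.Perm {i // c.s i = a}) :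
    Equiv.Perm.ofSubtype γ ∈ c.SI := by
  intro i
  by_cases h : c.s i = a
  · rw [Equiv.Perm.ofSubtype_apply_of_mem γ h, h, (γ ⟨i, h⟩).2]
  · rw [Equiv.Perm.ofSubtype_apply_of_not_mem γ h]

lemma HB_conj {H : Subgroup (Equiv.Perm X)} [DecidableEq I] {τ : c.SI} {i j : I} (hτ : c.B τ ∈ H)
    (h : Equiv.swap i j ∈ c.HB H) : Equiv.swap (τ.1 i) (τ.1 j) ∈ c.HB H := by
  have h2 : τ.1 ∈ c.HB H := (c.mem_HB).2 ⟨τ.2, hτ⟩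
  have := (c.HB H).mul_mem ((c.HB H).mul_mem h2 h) ((c.HB H).inv_mem h2)
  rwa [← Equiv.swap_apply_apply] at this

lemma B_fix {σ : c.SI} {x : X} (h : σ.1 (c.pr x) = c.pr x) : c.B σ x = x := by
  rw [B_apply, h]; simp

lemma top_slot [Finite I] [DecidableEq I] (a : ℕ) (h : 2 ≤ Nat.card {i // c.s i = a}) :
    ∃ (σ τ : c.SI) (o : ℕ),
    σ * σ = 1 ∧ Odd o ∧ τ ^ o = 1 ∧ (∀ i, c.s i ≠ a → σ.1 i = i) ∧ (∀ i, c.s i ≠ a → τ.1 i = i) ∧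
    ∀ H : Subgroup (Equiv.Perm X), c.B σ ∈ H → c.B τ ∈ H →
      ∀ i j, c.s i = a → c.s j = a → Equiv.swap i j ∈ c.HB H := by
  obtain ⟨x0, x1, γ, o, -, ho, hγ, hR⟩ := tg {i // c.s i = a} h
  refine ⟨⟨Equiv.swap x0.1 x1.1, c.swap_mem_SI (by rw [x0.2, x1.2])⟩,
    ⟨Equiv.Perm.ofSubtype γ, c.ofSubtype_mem_SI a γ⟩, o, ?_, ho, ?_, ?_, ?_, ?_⟩
  · apply Subtype.ext; simp
  · apply Subtype.ext
    show Equiv.Perm.ofSubtype γ ^ o = 1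
    rw [← map_pow, hγ, map_one]
  · intro i hi
    apply Equiv.swap_apply_of_ne_of_ne
    · rintro rfl; exact hi x0.2
    · rintro rfl; exact hi x1.2
  · intro i hi
    exact Equiv.Perm.ofSubtype_apply_of_not_mem γ hi
  · intro H h1 h2 i j hi hj
    refine hR (fun x y => Equiv.swap x.1 y.1 ∈ c.HB H) ⟨fun x => ?_,
      fun {x y} h => by rwa [Equiv.swap_comm], fun {x y z} h1 h2 => SubmonoidClass.swap_mem_trans (c.HB H) h1 h2⟩ (by
        intro x y h
        have := c.HB_conj h2 h
        simpa using this) ((c.mem_HB).2 ⟨_, h1⟩) ⟨i, hi⟩ ⟨j, hj⟩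
    exact swap_self_mem _ _

/-- conditions for generating the group -/
lemma gen_all [Finite X] [Finite I] [DecidableEq X] [DecidableEq I] (H : Subgroup (Equiv.Perm X))
    (h1 : ∀ a, 2 ≤ a → (∃ i, c.s i = a) → ∃ i, c.s i = a ∧
      ∀ x y, c.pr x = i → c.pr y = i → Equiv.swap x y ∈ H)
    (h2 : ∀ a, 2 ≤ Nat.card {i // c.s i = a} → ∀ i j, c.s i = a → c.s j = a → Equiv.swap i j ∈ c.HB H) :
    c.Gp ≤ H := by
  have h3 : ∀ i j, c.s i = c.s j → Equiv.swap i j ∈ c.HB H := by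
    intro i j hij
    by_cases hne : i = j
    · subst hne
      exact swap_self_mem _ _
    · apply h2 (c.s j) _ i j hij rfl
      have : Nontrivial {k // c.s k = c.s j} := ⟨⟨i, hij⟩, ⟨j, rfl⟩, by simpa using hne⟩
      exact Finite.one_lt_card
  apply c.Gp_le H _ h3
  intro x y hxy
  by_cases hs : 2 ≤ c.s (c.pr x)
  · obtain ⟨i, hi, hi2⟩ := h1 _ hs ⟨_, rfl⟩
    obtain ⟨hS, hB⟩ := (c.mem_HB).1 (h3 _ _ hi)
    set b := c.B ⟨_, hS⟩ with hb
    have hbx : ∀ z, c.pr z = c.pr x → c.pr (b⁻¹ z) = i := by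
      intro z hz
      rw [hb, ← map_inv, pr_B]
      simp [hz]
    have := H.mul_mem (H.mul_mem hB (hi2 _ _ (hbx x rfl) (hbx y hxy.symm))) (H.inv_mem hB)
    rw [← Equiv.swap_apply_apply] at this
    simpa using this
  · have h1 := c.ka_lt x
    have h2 := c.ka_lt y
    rw [← hxy] at h2
    have : x = y := c.ext' hxy (by omega)
    rw [this]
    exact swap_self_mem _ _

lemma hall {Λ : Finset (ℕ × Bool)} (h : ∀ a, ∃ μ ∈ Λ, μ.1 ≠ a) :
    ∃ θ : Λ → Λ, Injective θ ∧ ∀ x, (θ x).1.1 ≠ x.1.1 ∨ (x.1.2 = true ∧ (θ x).1.2 = false) := by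
  classical
  let t : Λ → Finset Λ := fun x => Finset.univ.filter
    (fun y : Λ => y.1.1 ≠ x.1.1 ∨ (x.1.2 = true ∧ y.1.2 = false))
  have hall := (Finset.all_card_le_biUnion_card_iff_exists_injective t).1 (by
    intro A
    by_cases hu : A.biUnion t = Finset.univ
    · rw [hu]; exact Finset.card_le_univ A
    obtain ⟨μ, hμ⟩ : ∃ μ, μ ∉ A.biUnion t := by
      by_contra hcon
      push Not at hcon
      exact hu (Finset.eq_univ_of_forall hcon)
    have hA : ∀ x ∈ A, x.1.1 = μ.1.1 ∧ (x.1.2 = true → μ.1.2 = true) := by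
      intro x hx
      have : ¬ μ ∈ t x := fun h => hμ (Finset.mem_biUnion.2 ⟨x, hx, h⟩)
      simp only [t, Finset.mem_filter, Finset.mem_univ, true_and, not_or, not_and, not_not] at this
      exact ⟨this.1.symm, fun h => by simpa using this.2 h⟩
    obtain ⟨ν, hν, hνa⟩ := h μ.1.1
    rcases Nat.lt_or_ge A.card 2 with hlt | hge
    · rcases Finset.eq_empty_or_nonempty A with rfl | ⟨x, hx⟩
      · simp
      · have : (⟨ν, hν⟩ : Λ) ∈ A.biUnion t := Finset.mem_biUnion.2 ⟨x, hx, by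
          simp only [t, Finset.mem_filter, Finset.mem_univ, true_and]
          left; rw [(hA x hx).1]; exact hνa⟩
        have := Finset.card_pos.2 ⟨_, this⟩
        omega
    · obtain ⟨x, hx, y, hy, hxy⟩ := Finset.one_lt_card.1 hge
      have hAB : A.card ≤ 2 := by
        have : A.card ≤ (Finset.univ : Finset Bool).card := by
          apply Finset.card_le_card_of_injOn (fun z : Λ => z.1.2) (fun _ _ => Finset.mem_coe.2 (Finset.mem_univ _))
          intro z hz w hw hzw
          apply Subtype.ext
          exact Prod.ext ((hA z hz).1.trans (hA w hw).1.symm) hzw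
        simpa using this
      wlog hxt : x.1.2 = true generalizing x y
      · apply this y hy x hx hxy.symm
        by_contra hyt
        apply hxy
        apply Subtype.ext
        apply Prod.ext ((hA x hx).1.trans (hA y hy).1.symm)
        simp at hxt hyt
        rw [hxt, hyt]
      have hyf : y.1.2 = false := by
        by_contra hyt
        apply hxy
        apply Subtype.ext
        apply Prod.ext ((hA x hx).1.trans (hA y hy).1.symm)
        simp at hyt
        rw [hxt, hyt]
      have h1 : (⟨ν, hν⟩ : Λ) ∈ A.biUnion t := Finset.mem_biUnion.2 ⟨x, hx, by
          simp only [t, Finset.mem_filter, Finset.mem_univ, true_and]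
          left; rw [(hA x hx).1]; exact hνa⟩
      have h2 : y ∈ A.biUnion t := Finset.mem_biUnion.2 ⟨x, hx, by
          simp only [t, Finset.mem_filter, Finset.mem_univ, true_and]
          right; exact ⟨hxt, hyf⟩⟩
      have h3 : (⟨ν, hν⟩ : Λ) ≠ y := by
        rintro rfl
        exact hνa (hA _ hy).1
      have := Finset.one_lt_card.2 ⟨_, h1, _, h2, h3⟩
      omega)
  obtain ⟨θ, h1, h2⟩ := hall
  refine ⟨θ, h1, fun x => ?_⟩
  simpa [t] using h2 x

end Coord


namespace Coord
variable {X I : Type*} (c : Coord X I)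

lemma disj_comm {a b : ℕ} (hab : a ≠ b) {u v : Equiv.Perm X} (hu : ∀ x, c.s (c.pr x) ≠ a → u x = x)
    (hv : ∀ x, c.s (c.pr x) ≠ b → v x = x) : Commute u v := by
  apply Equiv.Perm.Disjoint.commute
  intro x
  by_cases h : c.s (c.pr x) = a
  · right; apply hv; rw [h]; exact hab
  · left; exact hu x h

/-- the special case of a single block size at least 2 -/
lemma special [Finite X] [Finite I] [DecidableEq X] [DecidableEq I] (a : ℕ) (ha : 2 ≤ a)
    (hD : ∀ i, 2 ≤ c.s i → c.s i = a) (hm : 2 ≤ Nat.card {i // c.s i = a})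
    (ht : ∀ b, 2 ≤ Nat.card {i // c.s i = b} → b = a) :
    ∃ y z : Equiv.Perm X, y ∈ c.Gp ∧ z ∈ c.Gp ∧ ∀ H : Subgroup (Equiv.Perm X), y ∈ H → z ∈ H → c.Gp ≤ H := by
  obtain ⟨m, hm'⟩ : ∃ m, Nat.card {i // c.s i = a} = m + 2 := ⟨_, (Nat.sub_add_cancel hm).symm⟩
  have e : Fin (m + 2) ≃ {i // c.s i = a} := eqvCard (by rw [hm', Nat.card_fin])
  set b : Fin (m+2) → I := fun j => (e j).1 with hb
  have hbs : ∀ j, c.s (b j) = a := fun j => (e j).2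
  have hbinj : Injective b := fun x y h => e.injective (Subtype.ext h)
  have hbsurj : ∀ i, c.s i = a → ∃ j, b j = i := by
    intro i hi
    exact ⟨e.symm ⟨i, hi⟩, by simp [hb]⟩
  have hsb : ∀ i j, c.s (b i) = c.s (b j) := fun i j => by rw [hbs, hbs]
  obtain ⟨u, v, o, hu, ho, hv, huG, hvG, hu1, hv1, hvB, hupr, hgen⟩ := c.base_slot (b 0) (by rw [hbs]; exact ha)
  let ρ0 : Equiv.Perm {i // c.s i = a} := e.permCongr (finRotate (m+2))
  let ρ : c.SI := ⟨Equiv.Perm.ofSubtype ρ0, c.ofSubtype_mem_SI a ρ0⟩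
  have hρ : ∀ j, ρ.1 (b j) = b (finRotate (m+2) j) := by
    intro j
    show Equiv.Perm.ofSubtype ρ0 _ = _
    rw [Equiv.Perm.ofSubtype_apply_of_mem ρ0 (hbs j)]
    simp [ρ0, hb]
  let σ : c.SI := ⟨Equiv.swap (b 0) (b 1), c.swap_mem_SI (hsb _ _)⟩
  have hσ : c.B σ * c.B σ = 1 := by
    rw [← map_mul]
    have : σ * σ = 1 := by apply Subtype.ext; simp [σ]
    rw [this, map_one]
  refine ⟨c.B σ * v, u * c.B ρ, c.Gp.mul_mem (c.B_mem _) hvG, c.Gp.mul_mem huG (c.B_mem _), ?_⟩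
  intro H hy hz
  obtain ⟨h1, h2⟩ := split_mem H (hvB σ) hσ ho hv hy
  -- adjacent transpositions
  have hadj : ∀ j : ℕ, ∀ hj : j + 1 < m + 2,
      Equiv.swap (b ⟨j, by omega⟩) (b ⟨j+1, hj⟩) ∈ c.HB H := by
    intro j
    induction j with
    | zero => intro hj; exact (c.mem_HB).2 ⟨_, h1⟩
    | succ j ih =>
      intro hj
      have ih := ih (by omega)
      obtain ⟨hS, hB⟩ := (c.mem_HB).1 ih
      have hr1 : finRotate (m+2) ⟨j, by omega⟩ = ⟨j+1, by omega⟩ := finRotate_of_lt (by omega)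
      have hr2 : finRotate (m+2) ⟨j+1, by omega⟩ = ⟨j+1+1, by omega⟩ := finRotate_of_lt (by omega)
      rw [mem_HB]
      refine ⟨c.swap_mem_SI (hsb _ _), ?_⟩
      set τ : c.SI := ⟨_, hS⟩ with hτ
      set τ' : c.SI := ⟨Equiv.swap (b ⟨j+1, by omega⟩) (b ⟨j+1+1, hj⟩), c.swap_mem_SI (hsb _ _)⟩ with hτ'
      have e1 : ρ * τ * ρ⁻¹ = τ' := by
        apply Subtype.ext
        show ρ.1 * Equiv.swap _ _ * ρ.1⁻¹ = Equiv.swap _ _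
        rw [← Equiv.swap_apply_apply, hρ, hρ, hr1, hr2]
      have hcomm : Commute u (c.B τ') := by
        apply Equiv.Perm.Disjoint.commute
        intro x
        by_cases hx : c.pr x = b 0
        · right
          apply c.B_fix
          rw [hx]
          apply Equiv.swap_apply_of_ne_of_ne
          · intro h; have := hbinj h; simp [Fin.ext_iff] at this
          · intro h; have := hbinj h; simp [Fin.ext_iff] at this
        · left; exact hu1 x hx
      have := H.mul_mem (H.mul_mem hz hB) (H.inv_mem hz)
      have e2 : u * c.B ρ * c.B τ * (u * c.B ρ)⁻¹ = c.B τ' := by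
        rw [← e1] at hcomm ⊢
        simp only [map_mul, map_inv] at hcomm ⊢
        have := hcomm.eq
        rw [mul_inv_rev]
        calc _ = (u * (c.B ρ * c.B τ * (c.B ρ)⁻¹)) * u⁻¹ := by group
          _ = _ := by rw [this]; group
      rwa [e2] at this
  have hall : ∀ i j, c.s i = a → c.s j = a → Equiv.swap i j ∈ c.HB H := by
    have h0 : ∀ j : ℕ, ∀ hj : j < m + 2, Equiv.swap (b 0) (b ⟨j, hj⟩) ∈ c.HB H := by
      intro j
      induction j with
      | zero => intro hj; exact swap_self_mem _ _
      | succ j ih => intro hj; exact SubmonoidClass.swap_mem_trans (c.HB H) (ih (by omega)) (hadj j hj)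
    intro i j hi hj
    obtain ⟨i, rfl⟩ := hbsurj i hi
    obtain ⟨j, rfl⟩ := hbsurj j hj
    refine SubmonoidClass.swap_mem_trans (c.HB H) ?_ (h0 j j.2)
    rw [Equiv.swap_comm]
    exact h0 i i.2
  have hρH : c.B ρ ∈ H := by
    have : ρ.1 ∈ c.HB H := by
      apply swap_gen c.s (c.HB H) _ _ ρ.2
      intro i j hij
      by_cases hia : c.s i = a
      · exact hall i j hia (hij ▸ hia)
      · have hij' : i = j := by
          by_contra hne
          apply hia
          have : Nontrivial {k // c.s k = c.s j} := ⟨⟨i, hij⟩, ⟨j, rfl⟩, by simpa using hne⟩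
          rw [hij]
          exact ht _ Finite.one_lt_card
        rw [hij']; exact swap_self_mem _ _
    obtain ⟨_, h⟩ := (c.mem_HB).1 this
    exact h
  have huH : u ∈ H := (H.mul_mem_cancel_right hρH).1 hz
  apply c.gen_all H
  · rintro d hd ⟨i, rfl⟩
    refine ⟨b 0, by rw [hbs, hD i hd], ?_⟩
    exact hgen H huH h2
  · intro d hd
    rw [ht d hd]
    exact hall

/-- upper bound on the number of generators of the group of units -/
theorem group_upper [Finite X] [Finite I] (D E' : Finset ℕ)
    (hD : ∀ a, a ∈ D ↔ 2 ≤ a ∧ ∃ i, c.s i = a) (hE : ∀ a, a ∈ E' ↔ 2 ≤ Nat.card {i // c.s i = a}) :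
    ∃ S : Finset (Equiv.Perm X), S.card ≤ max 2 (D.card + E'.card) ∧ Subgroup.closure (S : Set (Equiv.Perm X)) = c.Gp := by
  classical
  let Λ : Finset (ℕ × Bool) := D.image (fun a => (a, false)) ∪ E'.image (fun a => (a, true))
  have hΛ1 : ∀ a, (a, false) ∈ Λ ↔ a ∈ D := by simp [Λ]
  have hΛ2 : ∀ a, (a, true) ∈ Λ ↔ a ∈ E' := by simp [Λ]
  have hcard : Λ.card ≤ D.card + E'.card :=
    (Finset.card_union_le _ _).trans (Nat.add_le_add Finset.card_image_le Finset.card_image_le)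
  have hslot : ∀ x : Λ, ∃ (u v : Equiv.Perm X) (o : ℕ),
      u * u = 1 ∧ Odd o ∧ v ^ o = 1 ∧ u ∈ c.Gp ∧ v ∈ c.Gp ∧ (∀ y, c.s (c.pr y) ≠ x.1.1 → u y = y) ∧
      (∀ y, c.s (c.pr y) ≠ x.1.1 → v y = y) ∧ (x.1.2 = false → ∀ σ, Commute (c.B σ) v) ∧
      (x.1.2 = true → ∃ σ, u = c.B σ) ∧
      ∀ H : Subgroup (Equiv.Perm X), u ∈ H → v ∈ H →
        (x.1.2 = false → ∃ i, c.s i = x.1.1 ∧ ∀ x y, c.pr x = i → c.pr y = i → Equiv.swap x y ∈ H) ∧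
        (x.1.2 = true → ∀ i j, c.s i = x.1.1 → c.s j = x.1.1 → Equiv.swap i j ∈ c.HB H) := by
    rintro ⟨⟨a, b⟩, hx⟩
    cases b with
    | false =>
      obtain ⟨ha, i, rfl⟩ := (hD a).1 ((hΛ1 a).1 hx)
      obtain ⟨u, v, o, h1, h2, h3, h4, h5, h6, h7, h8, -, h9⟩ := c.base_slot i ha
      refine ⟨u, v, o, h1, h2, h3, h4, h5, ?_, h7, fun _ => h8, by simp, fun H hu hv => ⟨fun _ => ⟨i, rfl, h9 H hu hv⟩, by simp⟩⟩
      intro y hy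
      apply h6
      rintro rfl
      exact hy rfl
    | true =>
      obtain ⟨σ, τ, o, h1, h2, h3, h4, h5, h6⟩ := c.top_slot a ((hE a).1 ((hΛ2 a).1 hx))
      refine ⟨c.B σ, c.B τ, o, ?_, h2, ?_, c.B_mem _, c.B_mem _, fun y hy => c.B_fix (h4 _ hy),
        fun y hy => c.B_fix (h5 _ hy), by simp, fun _ => ⟨σ, rfl⟩, fun H hu hv => ⟨by simp, fun _ => h6 H hu hv⟩⟩
      · rw [← map_mul, h1, map_one]
      · rw [← map_pow, h3, map_one]
  choose u v o h1 h2 h3 h4 h5 h6 h7 h8 h9 h10 using hslot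
  have hgen : ∀ H : Subgroup (Equiv.Perm X), (∀ x, u x ∈ H) → (∀ x, v x ∈ H) → c.Gp ≤ H := by
    intro H hu hv
    apply c.gen_all H
    · intro a ha hi
      have := (hΛ1 a).2 ((hD a).2 ⟨ha, hi⟩)
      exact (h10 ⟨_, this⟩ H (hu _) (hv _)).1 rfl
    · intro a ha
      have := (hΛ2 a).2 ((hE a).2 ha)
      exact (h10 ⟨_, this⟩ H (hu _) (hv _)).2 rfl
  have fin : ∀ S : Finset (Equiv.Perm X), (∀ g ∈ S, g ∈ c.Gp) →
      (c.Gp ≤ Subgroup.closure (S : Set (Equiv.Perm X))) → Subgroup.closure (S : Set (Equiv.Perm X)) = c.Gp :=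
    fun S ha hb => le_antisymm ((Subgroup.closure_le _).2 ha) hb
  by_cases htwo : ∀ a, ∃ μ ∈ Λ, μ.1 ≠ a
  · obtain ⟨θ, hθ1, hθ2⟩ := hall htwo
    have hθs : Surjective θ := Finite.injective_iff_surjective.1 hθ1
    have hcomm : ∀ x, Commute (u x) (v (θ x)) := by
      intro x
      rcases hθ2 x with h | ⟨ha, hb⟩
      · exact c.disj_comm h.symm (h6 x) (h7 (θ x))
      · obtain ⟨σ, hσ⟩ := h9 x ha
        rw [hσ]
        exact h8 _ hb σ
    refine ⟨Finset.univ.image (fun x => u x * v (θ x)), ?_, fin _ ?_ ?_⟩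
    · refine Finset.card_image_le.trans ?_
      rw [Finset.card_univ, Fintype.card_coe]
      exact hcard.trans (le_max_right _ _)
    · intro g hg
      obtain ⟨x, -, rfl⟩ := Finset.mem_image.1 hg
      exact c.Gp.mul_mem (h4 _) (h5 _)
    · have hsp : ∀ x, _ := fun x => split_mem (Subgroup.closure ((Finset.univ.image (fun x => u x * v (θ x)) : Finset (Equiv.Perm X)) : Set (Equiv.Perm X)))
        (hcomm x) (h1 x) (h2 (θ x)) (h3 (θ x)) (Subgroup.subset_closure (by simp))
      apply hgen
      · exact fun x => (hsp x).1
      · intro x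
        obtain ⟨y, rfl⟩ := hθs x
        exact (hsp y).2
  · push Not at htwo
    obtain ⟨a, ha⟩ := htwo
    by_cases hsp : (a, false) ∈ Λ ∧ (a, true) ∈ Λ
    · have hs1 := (hD a).1 ((hΛ1 a).1 hsp.1)
      obtain ⟨y, z, hy, hz, hyz⟩ := c.special a hs1.1
        (fun i hi => ha _ ((hΛ1 _).2 ((hD _).2 ⟨hi, i, rfl⟩)))
        ((hE a).1 ((hΛ2 a).1 hsp.2)) (fun b hb => ha _ ((hΛ2 _).2 ((hE _).2 hb)))
      refine ⟨{y, z}, Finset.card_le_two.trans (le_max_left _ _), fin _ ?_ ?_⟩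
      · intro g hg
        simp only [Finset.mem_insert, Finset.mem_singleton] at hg
        rcases hg with rfl | rfl <;> assumption
      · apply hyz <;> apply Subgroup.subset_closure <;> simp
    · have hsub : Subsingleton Λ := by
        constructor
        rintro ⟨⟨a1, b1⟩, hx1⟩ ⟨⟨a2, b2⟩, hx2⟩
        have e1 := ha _ hx1
        have e2 := ha _ hx2
        dsimp only at e1 e2
        subst e1 e2
        cases b1 <;> cases b2 <;> first | rfl | (exfalso; apply hsp; constructor <;> assumption)
      by_cases hne : Nonempty Λ
      · obtain ⟨x⟩ := hne
        refine ⟨{u x, v x}, Finset.card_le_two.trans (le_max_left _ _), fin _ ?_ ?_⟩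
        · intro g hg
          simp only [Finset.mem_insert, Finset.mem_singleton] at hg
          rcases hg with rfl | rfl
          · exact h4 x
          · exact h5 x
        · apply hgen <;> intro y <;> rw [Subsingleton.elim y x] <;> apply Subgroup.subset_closure <;> simp
      · refine ⟨∅, by simp, fin _ (by simp) ?_⟩
        apply hgen <;> intro y <;> exact (hne ⟨y⟩).elim

end Coord


namespace Coord
variable {X I : Type*} (c : Coord X I)

/-- a commutative group of exponent two generated by k elements -/
lemma exp_two_card {V : Type*} [CommGroup V] (hV : ∀ x : V, x * x = 1) (S : Finset V)
    (hS : Subgroup.closure (S : Set V) = ⊤) : Nat.card V ≤ 2 ^ S.card := by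
  classical
  have key : ∀ x : V, ∃ A ∈ S.powerset, ∏ y ∈ A, y = x := by
    intro x
    have hx : x ∈ Subgroup.closure (S : Set V) := by rw [hS]; trivial
    have hinv : ∀ x : V, x⁻¹ = x := fun x => inv_eq_of_mul_eq_one_left (hV x)
    induction hx using Subgroup.closure_induction_left with
    | one => exact ⟨∅, by simp, by simp⟩
    | mul_left x hx y _ ih =>
      obtain ⟨A, hA, rfl⟩ := ih
      rw [Finset.mem_powerset] at hA
      by_cases hxA : x ∈ A
      · refine ⟨A.erase x, Finset.mem_powerset.2 ((Finset.erase_subset _ _).trans hA), ?_⟩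
        rw [← Finset.mul_prod_erase A _ hxA, ← mul_assoc, hV, one_mul]
      · refine ⟨insert x A, Finset.mem_powerset.2 (Finset.insert_subset hx hA), ?_⟩
        rw [Finset.prod_insert hxA]
    | inv_mul_cancel x hx y _ ih =>
      rw [hinv]
      obtain ⟨A, hA, rfl⟩ := ih
      rw [Finset.mem_powerset] at hA
      by_cases hxA : x ∈ A
      · refine ⟨A.erase x, Finset.mem_powerset.2 ((Finset.erase_subset _ _).trans hA), ?_⟩
        rw [← Finset.mul_prod_erase A _ hxA, ← mul_assoc, hV, one_mul]
      · refine ⟨insert x A, Finset.mem_powerset.2 (Finset.insert_subset hx hA), ?_⟩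
        rw [Finset.prod_insert hxA]
  let f : S.powerset → V := fun A => ∏ y ∈ A.1, y
  have hf : Surjective f := by
    intro x
    obtain ⟨A, hA, h⟩ := key x
    exact ⟨⟨A, hA⟩, h⟩
  have := Nat.card_le_card_of_surjective f hf
  rwa [Nat.card_eq_fintype_card (α := S.powerset), Fintype.card_coe, Finset.card_powerset] at this

/-- permutations preserving a function -/
def Fib {Y : Type*} (ρ : Y → ℕ) : Subgroup (Equiv.Perm Y) where
  carrier := {g | ∀ y, ρ (g y) = ρ y}
  one_mem' := fun _ => rfl
  mul_mem' := fun hf hg i => (hf _).trans (hg i)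
  inv_mem' := by
    intro g hg i
    have := hg (g⁻¹ i)
    simpa using this.symm

/-- sign on a fibre -/
noncomputable def sgn {Y : Type*} [Fintype Y] [DecidableEq Y] (ρ : Y → ℕ) (a : ℕ) : Fib ρ →* ℤˣ where
  toFun g := Equiv.Perm.sign (g.1.subtypePerm (p := fun y => ρ y = a) (fun y => by rw [g.2 y]))
  map_one' := by
    rw [← Equiv.Perm.sign_one (α := {y // ρ y = a})]; congr 1
  map_mul' g h := by
    rw [← Equiv.Perm.sign_mul]; congr 1

lemma sgn_fix {Y : Type*} [Fintype Y] [DecidableEq Y] (ρ : Y → ℕ) (a : ℕ) (g : Fib ρ)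
    (h : ∀ y, ρ y = a → g.1 y = y) : sgn ρ a g = 1 := by
  show Equiv.Perm.sign _ = 1
  rw [← Equiv.Perm.sign_one (α := {y // ρ y = a})]
  congr 1
  ext y
  exact h _ y.2

lemma sgn_swap {Y : Type*} [Fintype Y] [DecidableEq Y] (ρ : Y → ℕ) (a : ℕ) (g : Fib ρ) {x y : Y}
    (hxy : x ≠ y) (hx : ρ x = a) (hy : ρ y = a)
    (h : g.1 = Equiv.swap x y) : sgn ρ a g = -1 := by
  have : Equiv.Perm.subtypePerm g.1 (p := fun y => ρ y = a) (fun y => by rw [g.2 y]) = Equiv.swap ⟨x, hx⟩ ⟨y, hy⟩ := by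
    ext z
    simp only [h, Equiv.Perm.subtypePerm_apply, Equiv.swap_apply_def]
    by_cases h1 : z.1 = x
    · have : z = ⟨x, hx⟩ := Subtype.ext h1
      simp [this]
    · by_cases h2 : z.1 = y
      · have : z = ⟨y, hy⟩ := Subtype.ext h2
        subst this
        simp [hxy.symm]
      · have h3 : z ≠ ⟨x, hx⟩ := fun h => h1 (by rw [h])
        have h4 : z ≠ ⟨y, hy⟩ := fun h => h2 (by rw [h])
        simp [h1, h2, h3, h4]
  show Equiv.Perm.sign _ = -1
  rw [this]
  apply Equiv.Perm.sign_swap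
  simpa using hxy

lemma Gp_Fib {g : Equiv.Perm X} (hg : g ∈ c.Gp) : g ∈ Fib (fun x => c.s (c.pr x)) := by
  intro x
  show c.s _ = c.s _
  rw [c.pr_barG hg, c.barG_mem hg]

/-- the induced block permutation, as a homomorphism -/
def barH : c.Gp →* Fib c.s where
  toFun g := ⟨c.barG g.1 g.2, c.barG_mem g.2⟩
  map_one' := by
    apply Subtype.ext
    ext i
    show c.pr (c.mk i 0) = i
    simp
  map_mul' g h := by
    apply Subtype.ext
    ext i
    show c.pr ((g * h).1 (c.mk i 0)) = c.barG g.1 g.2 (c.pr (h.1 (c.mk i 0)))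
    rw [← c.pr_barG g.2]
    rfl

lemma barG_B (σ : c.SI) (h : c.B σ ∈ c.Gp) : c.barG (c.B σ) h = σ.1 := by
  ext i
  show c.pr (c.B σ (c.mk i 0)) = _
  simp

lemma barG_pres {g : Equiv.Perm X} (hg : g ∈ c.Gp) (h : ∀ x, c.pr (g x) = c.pr x) (i : I) : c.barG g hg i = i := by
  show c.pr (g (c.mk i 0)) = _
  rw [h]; simp

/-- the sign homomorphism -/
noncomputable def sgnHom [Fintype X] [Fintype I] [DecidableEq X] [DecidableEq I] (D E' : Finset ℕ) :
    c.Gp →* (D ⊕ E' → ℤˣ) where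
  toFun g := Sum.elim (fun a => sgn (fun x => c.s (c.pr x)) a.1 ⟨g.1, c.Gp_Fib g.2⟩)
    (fun a => sgn c.s a.1 (c.barH g))
  map_one' := by
    funext x
    rcases x with a | a
    · show sgn (fun x => c.s (c.pr x)) a.1 1 = 1
      rw [map_one]
    · show sgn c.s a.1 (c.barH 1) = 1
      rw [map_one, map_one]
  map_mul' g h := by
    funext x
    rcases x with a | a
    · show sgn (fun x => c.s (c.pr x)) a.1 (⟨g.1, c.Gp_Fib g.2⟩ * ⟨h.1, c.Gp_Fib h.2⟩) = _
      rw [map_mul]; rfl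
    · show sgn c.s a.1 (c.barH (g * h)) = _
      rw [map_mul, map_mul]; rfl

lemma sgnHom_surj [Fintype X] [Fintype I] [DecidableEq X] [DecidableEq I] (D E' : Finset ℕ)
    (hD : ∀ a, a ∈ D ↔ 2 ≤ a ∧ ∃ i, c.s i = a) (hE : ∀ a, a ∈ E' ↔ 2 ≤ Nat.card {i // c.s i = a}) :
    (c.sgnHom D E').range = ⊤ := by
  classical
  set W := (c.sgnHom D E').range with hW
  have hb : ∀ (a : D) (z : ℤˣ), Pi.mulSingle (Sum.inl a) z ∈ W := by
    intro a z
    rcases Int.units_eq_one_or z with rfl | rfl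
    · rw [Pi.mulSingle_one]; exact W.one_mem
    obtain ⟨ha, i, hi⟩ := (hD a).1 a.2
    have hne : c.mk i 0 ≠ c.mk i 1 := by
      intro h
      have h1 := c.ka_mk (i := i) (a := 0) (by omega)
      rw [h, c.ka_mk (by omega)] at h1
      omega
    have hpr : ∀ x, c.pr (Equiv.swap (c.mk i 0) (c.mk i 1) x) = c.pr x := by
      intro x
      rw [Equiv.swap_apply_def]; split_ifs with h1 h2
      · rw [h1]; simp
      · rw [h2]; simp
      · rfl
    refine ⟨⟨_, c.pres_mem hpr⟩, ?_⟩
    funext x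
    rcases x with b | b
    · show sgn (fun x => c.s (c.pr x)) b.1 _ = _
      by_cases hab : b = a
      · subst hab
        rw [Pi.mulSingle_eq_same]
        exact sgn_swap _ _ _ hne (by simp [hi]) (by simp [hi]) rfl
      · rw [Pi.mulSingle_eq_of_ne (by simpa using hab)]
        apply sgn_fix
        intro y hy
        have : c.pr y ≠ i := by
          rintro rfl
          exact hab (Subtype.ext (hy.symm.trans hi))
        apply Equiv.swap_apply_of_ne_of_ne <;> (rintro rfl; simp at this)
    · show sgn c.s b.1 _ = _
      rw [Pi.mulSingle_eq_of_ne (by simp)]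
      apply sgn_fix
      intro j _
      exact c.barG_pres (c.pres_mem hpr) hpr j
  have ht : ∀ (a : E') (z : ℤˣ), Pi.mulSingle (Sum.inr a) z ∈ W := by
    intro a z
    rcases Int.units_eq_one_or z with rfl | rfl
    · rw [Pi.mulSingle_one]; exact W.one_mem
    have h2 := (hE a).1 a.2
    have : Nontrivial {i // c.s i = a.1} := Finite.one_lt_card_iff_nontrivial.1 h2
    obtain ⟨i, j, hij⟩ := this
    have hS : Equiv.swap i.1 j.1 ∈ c.SI := c.swap_mem_SI (by rw [i.2, j.2])
    set f := c.sgnHom D E' ⟨c.B ⟨_, hS⟩, c.B_mem _⟩ with hf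
    have hfW : f ∈ W := ⟨_, rfl⟩
    have h3 : f * ∏ b : D, Pi.mulSingle (Sum.inl b) (f (Sum.inl b)) ∈ W :=
      W.mul_mem hfW (W.prod_mem (fun b _ => hb b _))
    convert h3 using 1
    funext x
    rw [Pi.mul_apply, Finset.prod_apply]
    rcases x with b | b
    · rw [Pi.mulSingle_eq_of_ne (by simp), Finset.prod_eq_single b]
      · rw [Pi.mulSingle_eq_same]
        rcases Int.units_eq_one_or (f (Sum.inl b)) with h | h <;> rw [h] <;> rfl
      · intro b' _ hb'
        rw [Pi.mulSingle_eq_of_ne (by simpa using hb'.symm)]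
      · simp
    · rw [Finset.prod_eq_one, mul_one]
      · rw [hf]
        show _ = sgn c.s b.1 _
        by_cases hab : b = a
        · subst hab
          rw [Pi.mulSingle_eq_same]
          symm
          refine sgn_swap _ _ _ (fun h => hij (Subtype.ext h)) i.2 j.2 ?_
          exact c.barG_B _ (c.B_mem _)
        · rw [Pi.mulSingle_eq_of_ne (by simpa using hab)]
          symm
          apply sgn_fix
          intro y hy
          have : (c.barH ⟨c.B ⟨_, hS⟩, c.B_mem _⟩).1 = Equiv.swap i.1 j.1 := c.barG_B _ (c.B_mem _)
          rw [this]
          apply Equiv.swap_apply_of_ne_of_ne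
          · rintro rfl; exact hab (Subtype.ext (hy.symm.trans i.2))
          · rintro rfl; exact hab (Subtype.ext (hy.symm.trans j.2))
      · intro b' _
        rw [Pi.mulSingle_eq_of_ne (by simp)]
  rw [eq_top_iff]
  intro f _
  rw [← Finset.univ_prod_mulSingle f]
  apply W.prod_mem
  rintro (b | b) -
  · exact hb b _
  · exact ht b _

theorem group_lower [Finite X] [Finite I] (D E' : Finset ℕ)
    (hD : ∀ a, a ∈ D ↔ 2 ≤ a ∧ ∃ i, c.s i = a) (hE : ∀ a, a ∈ E' ↔ 2 ≤ Nat.card {i // c.s i = a})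
    (h3 : 3 ≤ Nat.card c.Gp) (S : Finset (Equiv.Perm X)) 
    (hS : Subgroup.closure (S : Set (Equiv.Perm X)) = c.Gp) : max 2 (D.card + E'.card) ≤ S.card := by
  classical
  have := Fintype.ofFinite X
  have := Fintype.ofFinite I
  apply max_le
  · by_contra hlt
    have hS1 : S.card ≤ 1 := by omega
    obtain ⟨z, hz⟩ : ∃ z : Equiv.Perm X, (S : Set (Equiv.Perm X)) ⊆ {z} := by
      rcases Finset.card_le_one_iff_subset_singleton.1 hS1 with ⟨z, hz⟩
      exact ⟨z, by exact_mod_cast hz⟩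
    have hG : ∀ g ∈ c.Gp, ∃ n : ℤ, z ^ n = g := by
      intro g hg
      rw [← hS] at hg
      exact Subgroup.mem_closure_singleton.1 (Subgroup.closure_mono hz hg)
    let H : Subgroup (Equiv.Perm X) :=
      { carrier := {g | g * g = 1 ∧ ∃ n : ℤ, z ^ n = g}
        one_mem' := ⟨by simp, 0, by simp⟩
        mul_mem' := by
          rintro a b ⟨ha, n, rfl⟩ ⟨hb, m, rfl⟩
          refine ⟨?_, n + m, zpow_add _ _ _⟩
          rw [((Commute.refl z).zpow_zpow m n).mul_mul_mul_comm, ha, hb, one_mul]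
        inv_mem' := by
          rintro a ⟨ha, n, rfl⟩
          refine ⟨?_, -n, zpow_neg _ _⟩
          rw [← mul_inv_rev, ha, inv_one] }
    have hle : c.Gp ≤ H := by
      apply c.Gp_le
      · intro x y hxy
        refine ⟨by simp, hG _ (c.pres_mem ?_)⟩
        intro w
        rw [Equiv.swap_apply_def]; split_ifs with h1 h2
        · rw [h1, hxy]
        · rw [h2, hxy]
        · rfl
      · intro i j hij
        refine (c.mem_HB).2 ⟨c.swap_mem_SI hij, ?_, hG _ (c.B_mem _)⟩
        rw [← map_mul]
        have : (⟨Equiv.swap i j, c.swap_mem_SI hij⟩ : c.SI) * ⟨Equiv.swap i j, c.swap_mem_SI hij⟩ = 1 := by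
          apply Subtype.ext; simp
        rw [this, map_one]
    have hsub : (c.Gp : Set (Equiv.Perm X)) ⊆ {1, z} := by
      intro g hg
      by_cases hS0 : z ∈ S
      · have hzG : z ∈ c.Gp := by rw [← hS]; exact Subgroup.subset_closure hS0
        have hzz : z * z = 1 := (hle hzG).1
        obtain ⟨n, rfl⟩ := hG g hg
        rcases Int.even_or_odd' n with ⟨k, rfl | rfl⟩
        · left; rw [zpow_mul, zpow_two, hzz, one_zpow]
        · right; rw [zpow_add, zpow_mul, zpow_two, hzz, one_zpow]; simp
      · have : (S : Set (Equiv.Perm X)) = ∅ := by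
          ext w
          simp only [Finset.mem_coe, mem_empty_iff_false, iff_false]
          intro hw
          have := hz hw
          rw [mem_singleton_iff] at this
          exact hS0 (this ▸ hw)
        rw [← hS, this, Subgroup.closure_empty] at hg
        left
        simpa using hg
    have h2 : Nat.card c.Gp ≤ 2 := by
      show Nat.card (c.Gp : Set (Equiv.Perm X)) ≤ 2
      rw [Nat.card_coe_set_eq]
      exact (Set.ncard_le_ncard hsub).trans ((Set.ncard_insert_le _ _).trans (by simp))
    omega
  · have hsub : ∀ g ∈ S, g ∈ c.Gp := fun g hg => hS ▸ Subgroup.subset_closure hg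
    let S' : Finset c.Gp := S.attach.image (fun g => ⟨g.1, hsub _ g.2⟩)
    have hS' : Subgroup.closure (S' : Set c.Gp) = ⊤ := by
      apply Subgroup.map_injective c.Gp.subtype_injective
      rw [MonoidHom.map_closure, ← MonoidHom.range_eq_map, Subgroup.range_subtype]
      refine Eq.trans ?_ hS
      congr 1
      ext g
      simp [S']
      exact hsub g
    let S'' : Finset (D ⊕ E' → ℤˣ) := S'.image (c.sgnHom D E')
    have hS'' : Subgroup.closure (S'' : Set (D ⊕ E' → ℤˣ)) = ⊤ := by
      rw [← c.sgnHom_surj D E' hD hE, MonoidHom.range_eq_map, ← hS', MonoidHom.map_closure]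
      simp [S'']
    have h := exp_two_card (fun f => by
      funext x
      rcases Int.units_eq_one_or (f x) with h | h <;> simp [h]) S'' hS''
    have hc : S''.card ≤ S.card := Finset.card_image_le.trans (Finset.card_image_le.trans (by simp))
    have h4 : Nat.card (D ⊕ E' → ℤˣ) = 2 ^ (D.card + E'.card) := by
      rw [Nat.card_fun]; simp
    rw [h4] at h
    exact (Nat.pow_le_pow_iff_right (by norm_num)).1 h |>.trans hc

end Coord


namespace Coord
variable {X I : Type*} (c : Coord X I)

lemma factor {M : Type*} [Monoid M] (S : Set M) (N : Submonoid M) {w : M} (hw : w ∈ Submonoid.closure S)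
    (hN : w ∉ N) : ∃ v ∈ Submonoid.closure S, ∃ e ∈ S, e ∉ N ∧ ∃ g ∈ Submonoid.closure S, g ∈ N ∧ w = v * (e * g) := by
  induction hw using Submonoid.closure_induction_left with
  | one => exact absurd N.one_mem hN
  | mul_left x hx y hy ih =>
    by_cases hyN : y ∈ N
    · exact ⟨1, Submonoid.one_mem _, x, hx, fun h => hN (N.mul_mem h hyN), y, hy, hyN, by rw [one_mul]⟩
    · obtain ⟨v, hv, e, he, heN, g, hg, hgN, rfl⟩ := ih hyN
      exact ⟨x * v, Submonoid.mul_mem _ (Submonoid.subset_closure hx) hv, e, he, heN, g, hg, hgN, by rw [mul_assoc]⟩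

lemma bar_surj {f : Function.End X} (hf : f ∈ c.T) (h : Surjective f) : Surjective (c.bar f) := by
  intro i
  obtain ⟨x, hx⟩ := h (c.mk i 0)
  refine ⟨c.pr x, ?_⟩
  rw [← c.pr_apply hf, hx]; simp

lemma isU_of_inj [Finite X] [Finite I] {f : Function.End X} (hf : f ∈ c.T) (h : Injective f) : c.IsU f := by
  have hb : Bijective f := Finite.injective_iff_bijective.1 h
  have hbar := Finite.injective_iff_surjective.2 (c.bar_surj hf hb.2)
  refine ⟨hb, fun x y => ⟨fun h => ?_, hf x y⟩⟩
  rw [c.pr_apply hf, c.pr_apply hf] at h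
  exact hbar h

lemma IsU.mem_T {c : Coord X I} {f : Function.End X} (hf : c.IsU f) : f ∈ c.T := fun x y h => (hf.2 x y).2 h

lemma IsU.toGp {c : Coord X I} {f : Function.End X} (hf : c.IsU f) : ∃ g ∈ c.Gp, toE g = f :=
  ⟨Equiv.ofBijective f hf.1, hf.2, rfl⟩

lemma IsU.size {c : Coord X I} {f : Function.End X} (hf : c.IsU f) (x : X) : c.s (c.pr (f x)) = c.s (c.pr x) := by
  obtain ⟨g, hg, rfl⟩ := hf.toGp
  exact c.Gp_Fib hg x

/-- injective maps -/
def InjM (X : Type*) : Submonoid (Function.End X) where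
  carrier := {f | Injective f}
  one_mem' := injective_id
  mul_mem' := fun hf hg => Injective.comp hf hg

/-- maps permuting the blocks and preserving sizes -/
def SizeM : Submonoid (Function.End X) where
  carrier := {f | f ∈ c.T ∧ Bijective (c.bar f) ∧ ∀ i, c.s (c.bar f i) = c.s i}
  one_mem' := by
    have h : c.bar (1 : Function.End X) = id := by
      funext i; show c.pr (c.mk i 0) = i; simp
    refine ⟨c.T.one_mem, ?_, ?_⟩
    · rw [h]; exact bijective_id
    · rw [h]; exact fun _ => rfl
  mul_mem' := by
    rintro f g ⟨h1, h2, h3⟩ ⟨k1, k2, k3⟩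
    have h : c.bar (f * g) = c.bar f ∘ c.bar g := by
      funext i; exact c.bar_mul h1 i
    refine ⟨c.T.mul_mem h1 k1, ?_, ?_⟩
    · rw [h]; exact h2.comp k2
    · rw [h]; intro i; rw [comp_apply, h3, k3]

lemma mem_SizeM {f : Function.End X} : f ∈ c.SizeM ↔ f ∈ c.T ∧ Bijective (c.bar f) ∧ ∀ i, c.s (c.bar f i) = c.s i :=
  Iff.rfl

lemma IsU.mem_SizeM [Finite X] [Finite I] {c : Coord X I} {f : Function.End X} (hf : c.IsU f) : f ∈ c.SizeM := by
  refine ⟨hf.mem_T, Finite.surjective_iff_bijective.1 (c.bar_surj hf.mem_T hf.1.2), fun i => ?_⟩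
  have := hf.size (c.mk i 0)
  rwa [c.pr_mk] at this

lemma bar_inj_of_mul {v h : Function.End X} (hv : v ∈ c.T) (hw : Injective (c.bar (v * h))) : Injective (c.bar h) := by
  intro i j hij
  apply hw
  rw [c.bar_mul hv, c.bar_mul hv, hij]

lemma ncard_block (i : I) : {x | c.pr x = i}.ncard = c.s i := by
  rw [← Nat.card_coe_set_eq]
  exact (Nat.card_congr (c.blockEquiv i)).trans (by simp)

lemma size_ge [Finite X] {v h : Function.End X} (hh : h ∈ c.T) (i : I) (A : Set X) (hA : ∀ x ∈ A, c.pr x = i)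
    (hinj : InjOn (v * h) A) : A.ncard ≤ c.s (c.bar h i) := by
  rw [← c.ncard_block (c.bar h i)]
  apply Set.ncard_le_ncard_of_injOn h _ _ (Set.toFinite _)
  · intro x hx
    show c.pr (h x) = _
    rw [c.pr_apply hh, hA x hx]
  · intro x hx y hy hxy
    apply hinj hx hy
    show v (h x) = v (h y)
    rw [hxy]

lemma perm_ge [Finite I] (b : I → I) (hb : Bijective b) (h : ∀ i, c.s i ≤ c.s (b i)) (i : I) : c.s (b i) = c.s i := by
  have := Fintype.ofFinite I
  have hsum : ∑ i, c.s (b i) = ∑ i, c.s i := (Equiv.ofBijective b hb).sum_comp c.s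
  have := (Finset.sum_eq_sum_iff_of_le (fun i _ => h i)).1 hsum.symm i (Finset.mem_univ _)
  exact this.symm

/-- first kind of generators -/
def Q1 (b : ℕ × ℕ) (e : Function.End X) : Prop :=
  ¬ Injective e ∧ ∀ x y, x ≠ y → e x = e y → c.pr x ≠ c.pr y ∧
    min (c.s (c.pr x)) (c.s (c.pr y)) = b.1 ∧ max (c.s (c.pr x)) (c.s (c.pr y)) = b.2

/-- second kind of generators -/
def Q2 (a : ℕ) (e : Function.End X) : Prop :=
  Injective (c.bar e) ∧ (∃ i, c.s i = a ∧ c.s (c.bar e i) < a) ∧ ∀ j, a < c.s j → c.s j ≤ c.s (c.bar e j)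

/-- third kind of generators -/
def Q3 (a : ℕ) (e : Function.End X) : Prop :=
  ¬ Injective e ∧ (∀ i, c.s (c.bar e i) = c.s i) ∧ ∀ x y, x ≠ y → e x = e y → c.pr x = c.pr y ∧ c.s (c.pr x) = a

lemma exists_Q1 [Finite X] [Finite I] [DecidableEq I] {S : Set (Function.End X)} (hS : Submonoid.closure S = c.T) {i d : I}
    (hid : d ≠ i) (hs : c.s d ≤ c.s i) : ∃ e ∈ S, c.Q1 (c.s d, c.s i) e := by
  set w := c.P (update id d i) with hw
  have hker : ∀ x y, w x = w y → x ≠ y → (c.pr x = d ∧ c.pr y = i) ∨ (c.pr x = i ∧ c.pr y = d) := by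
    intro x y hxy hne
    have hka : ∀ z, c.ka (w z) = c.ka z := by
      intro z
      apply c.ka_P
      by_cases hz : c.pr z = d
      · rw [hz, update_self]
        have := c.ka_lt z
        rw [hz] at this
        omega
      · rw [update_of_ne hz]; exact c.ka_lt z
    have hk : c.ka x = c.ka y := by rw [← hka x, ← hka y, hxy]
    have hp : update id d i (c.pr x) = update id d i (c.pr y) := by
      have := congrArg c.pr hxy
      rwa [hw, c.pr_P, c.pr_P] at this
    have hpne : c.pr x ≠ c.pr y := fun h => hne (c.ext' h hk)
    by_cases hx : c.pr x = d
    · by_cases hy : c.pr y = d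
      · exact absurd (hx.trans hy.symm) hpne
      · rw [hx, update_self, update_of_ne hy] at hp
        exact Or.inl ⟨hx, hp.symm⟩
    · by_cases hy : c.pr y = d
      · rw [hy, update_self, update_of_ne hx] at hp
        exact Or.inr ⟨hp, hy⟩
      · rw [update_of_ne hx, update_of_ne hy] at hp
        exact absurd hp hpne
  have hwN : w ∉ InjM X := by
    intro h
    have h1 : w (c.mk d 0) = w (c.mk i 0) := by
      simp only [hw, P]
      rw [c.pr_mk, c.pr_mk, update_self, update_of_ne hid.symm, c.ka_mk (c.s_pos d), c.ka_mk (c.s_pos i)]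
      rfl
    have := congrArg c.pr (h h1)
    simp at this
    exact hid this
  obtain ⟨v, hv, e, heS, heN, g, hg, hgN, hweq⟩ := factor S (InjM X) (w := w) (by rw [hS]; exact c.P_mem _) hwN
  have hgU : c.IsU g := c.isU_of_inj (by rw [← hS]; exact hg) hgN
  refine ⟨e, heS, heN, ?_⟩
  intro x y hne hxy
  obtain ⟨x, rfl⟩ := hgU.1.2 x
  obtain ⟨y, rfl⟩ := hgU.1.2 y
  have hk := hker x y (by rw [hweq]; show v (e (g x)) = v (e (g y)); rw [hxy]) (fun h => hne (by rw [h]))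
  have hp : c.pr (g x) ≠ c.pr (g y) := by
    rw [Ne, hgU.2]
    rcases hk with ⟨h1, h2⟩ | ⟨h1, h2⟩ <;> rw [h1, h2]
    · exact hid
    · exact hid.symm
  refine ⟨hp, ?_⟩
  rw [hgU.size, hgU.size]
  rcases hk with ⟨h1, h2⟩ | ⟨h1, h2⟩ <;> rw [h1, h2] <;> constructor <;> dsimp only <;> omega

lemma exists_Q2 [Finite X] [Finite I] [DecidableEq I] {S : Set (Function.End X)} (hS : Submonoid.closure S = c.T) {i d : I}
    (hs : c.s d < c.s i) : ∃ e ∈ S, c.Q2 (c.s i) e := by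
  set w := c.P (Equiv.swap i d) with hw
  have hid : i ≠ d := by rintro rfl; omega
  have hbw : c.bar w = Equiv.swap i d := by funext j; rw [hw, c.bar_P]
  have hwN : w ∉ c.SizeM := by
    rintro ⟨-, -, h⟩
    have := h i
    rw [hbw, Equiv.swap_apply_left] at this
    omega
  have hwinj : ∀ j, j ≠ i → InjOn w {x | c.pr x = j} := by
    intro j hj x hx y hy hxy
    have hx : c.pr x = j := hx
    have hy : c.pr y = j := hy
    have hle : c.s j ≤ c.s (Equiv.swap i d j) := by
      by_cases hjd : j = d
      · rw [hjd, Equiv.swap_apply_right]; omega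
      · rw [Equiv.swap_apply_of_ne_of_ne hj hjd]
    have hka : ∀ z, c.pr z = j → c.ka (w z) = c.ka z := by
      intro z hz
      apply c.ka_P
      have := c.ka_lt z
      rw [hz] at this ⊢
      omega
    apply c.ext' (hx.trans hy.symm)
    rw [← hka x hx, ← hka y hy, hxy]
  have hcl : ∀ f ∈ Submonoid.closure S, f ∈ c.T := fun f hf => hS ▸ hf
  obtain ⟨v, hv, e, heS, heN, g, hg, hgN, hweq⟩ := factor S c.SizeM (w := w) (by rw [hS]; exact c.P_mem _) hwN
  have heT : e ∈ c.T := hcl _ (Submonoid.subset_closure heS)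
  have hgT := hgN.1
  have hinj : Injective (c.bar (e * g)) := by
    apply c.bar_inj_of_mul (hcl _ hv)
    rw [← hweq, hbw]
    exact Equiv.injective _
  have heg : c.bar (e * g) = c.bar e ∘ c.bar g := by
    funext i; exact c.bar_mul heT i
  have hbe : Injective (c.bar e) := by
    rw [heg] at hinj
    exact (Injective.of_comp_iff' _ hgN.2.1).1 hinj
  have hge : ∀ j, j ≠ c.bar g i → c.s j ≤ c.s (c.bar e j) := by
    intro j hj
    obtain ⟨k, rfl⟩ := hgN.2.1.2 j
    have hk : k ≠ i := by rintro rfl; exact hj rfl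
    have := c.size_ge (v := v) (h := e * g) (c.T.mul_mem heT hgT) k {x | c.pr x = k} (fun _ h => h) (by rw [← hweq]; exact hwinj k hk)
    rw [c.ncard_block, heg] at this
    rw [hgN.2.2]
    exact this
  refine ⟨e, heS, hbe, ⟨c.bar g i, hgN.2.2 i, ?_⟩, ?_⟩
  · by_contra hlt
    apply heN
    refine ⟨heT, Finite.injective_iff_bijective.1 hbe, ?_⟩
    apply c.perm_ge _ (Finite.injective_iff_bijective.1 hbe)
    intro j
    by_cases hj : j = c.bar g i
    · rw [hj, hgN.2.2]; omega
    · exact hge j hj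
  · intro j hj
    apply hge
    rintro rfl
    rw [hgN.2.2] at hj
    omega

lemma exists_Q3 [Finite X] [Finite I] [DecidableEq I] {S : Set (Function.End X)} (hS : Submonoid.closure S = c.T) {i : I}
    (h2 : 2 ≤ c.s i) (hno : ∀ j, c.s j ≠ c.s i - 1) : ∃ e ∈ S, c.Q3 (c.s i) e := by
  set w := c.col i with hw
  have hwx : ∀ x, c.pr x = i → c.ka x < c.s i - 1 → w x = x := by
    intro x hx hlt
    simp only [hw, col, L]
    rw [if_pos hx, min_eq_left (by omega), c.mk_ka hx]
  have hwx' : ∀ x, c.pr x ≠ i → w x = x := by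
    intro x hx
    simp only [hw, col, L]
    rw [if_neg hx]
  have hprw : ∀ x, c.pr (w x) = c.pr x := by
    intro x
    by_cases hx : c.pr x = i
    · simp only [hw, col, L]
      rw [if_pos hx, c.pr_mk, hx]
    · rw [hwx' x hx]
  have hwT : w ∈ c.T := by
    intro x y h
    rw [hprw, hprw, h]
  have hbw : c.bar w = id := by
    funext j
    show c.pr (w _) = j
    rw [hprw]; simp
  have hwN : w ∉ InjM X := by
    intro h
    have h1 : w (c.mk i (c.s i - 1)) = w (c.mk i (c.s i - 2)) := by
      simp only [hw, col, L]
      rw [c.pr_mk, c.pr_mk, if_pos rfl, if_pos rfl, c.ka_mk (by omega), c.ka_mk (by omega)]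
      congr 1; omega
    have := congrArg c.ka (h h1)
    rw [c.ka_mk (by omega), c.ka_mk (by omega)] at this
    omega
  have hcl : ∀ f ∈ Submonoid.closure S, f ∈ c.T := fun f hf => hS ▸ hf
  obtain ⟨v, hv, e, heS, heN, g, hg, hgN, hweq⟩ := factor S (InjM X) (w := w) (by rw [hS]; exact hwT) hwN
  have heT : e ∈ c.T := hcl _ (Submonoid.subset_closure heS)
  have hgT := hcl _ hg
  have hgU : c.IsU g := c.isU_of_inj hgT hgN
  have hgS := hgU.mem_SizeM
  have hinj : Injective (c.bar (e * g)) := by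
    apply c.bar_inj_of_mul (hcl _ hv)
    rw [← hweq, hbw]
    exact injective_id
  have heg : c.bar (e * g) = c.bar e ∘ c.bar g := by
    funext i; exact c.bar_mul heT i
  have hbe : Injective (c.bar e) := by
    rw [heg] at hinj
    exact (Injective.of_comp_iff' _ hgS.2.1).1 hinj
  refine ⟨e, heS, heN, ?_, ?_⟩
  · apply c.perm_ge _ (Finite.injective_iff_bijective.1 hbe)
    intro j
    obtain ⟨k, rfl⟩ := hgS.2.1.2 j
    rw [hgS.2.2]
    by_cases hk : k = i
    · subst hk
      have := c.size_ge (v := v) (h := e * g) (c.T.mul_mem heT hgT) k {x | c.pr x = k ∧ c.ka x < c.s k - 1} (fun _ h => h.1) (by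
        rw [← hweq]
        intro x hx y hy hxy
        rwa [hwx x hx.1 hx.2, hwx y hy.1 hy.2] at hxy)
      have hcard : {x | c.pr x = k ∧ c.ka x < c.s k - 1}.ncard = c.s k - 1 := by
        have : {x | c.pr x = k ∧ c.ka x < c.s k - 1} = {x | c.pr x = k} \ {c.mk k (c.s k - 1)} := by
          ext x
          simp only [mem_ofPred_eq, mem_sdiff, mem_singleton_iff]
          refine and_congr_right (fun hx => ?_)
          have := c.ka_lt x
          rw [hx] at this
          constructor
          · rintro h rfl
            rw [c.ka_mk (by omega)] at h
            omega
          · intro h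
            by_contra hlt
            apply h
            rw [← c.mk_ka hx]
            congr 1; omega
        rw [this, Set.ncard_sdiff_singleton_of_mem (by simp), c.ncard_block]
      rw [hcard, heg, comp_apply] at this
      have := hno (c.bar e (c.bar g k))
      omega
    · have := c.size_ge (v := v) (h := e * g) (c.T.mul_mem heT hgT) k {x | c.pr x = k} (fun _ h => h) (by
        rw [← hweq]
        intro x hx y hy hxy
        have hx : c.pr x = k := hx
        have hy : c.pr y = k := hy
        rwa [hwx' x (by rw [hx]; exact hk), hwx' y (by rw [hy]; exact hk)] at hxy)
      rw [c.ncard_block, heg] at this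
      exact this
  · intro x y hne hxy
    obtain ⟨x, rfl⟩ := hgU.1.2 x
    obtain ⟨y, rfl⟩ := hgU.1.2 y
    have hwxy : w x = w y := by rw [hweq]; show v (e (g x)) = v (e (g y)); rw [hxy]
    have hp : c.pr x = c.pr y := by rw [← hprw x, ← hprw y, hwxy]
    rw [hgU.2, hgU.size]
    refine ⟨hp, ?_⟩
    by_cases hx : c.pr x = i
    · rw [hx]
    · rw [hwx' x hx, hwx' y (by rwa [← hp])] at hwxy
      exact absurd (by rw [hwxy]) hne

end Coord


namespace Coord
variable {X I : Type*} (c : Coord X I)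

lemma Q1_bar {b : ℕ × ℕ} {e : Function.End X} (heT : e ∈ c.T) (h : c.Q1 b e) : ¬ Injective (c.bar e) := by
  obtain ⟨h1, h2⟩ := h
  simp only [Injective, not_forall] at h1
  obtain ⟨x, y, hxy, hne⟩ := h1
  have := (h2 x y hne hxy).1
  intro hinj
  apply this
  apply hinj
  rw [← c.pr_apply heT, ← c.pr_apply heT, hxy]

lemma Q1_Q1 {b b' : ℕ × ℕ} {e : Function.End X} (h : c.Q1 b e) (h' : c.Q1 b' e) : b = b' := by
  obtain ⟨h1, h2⟩ := h
  simp only [Injective, not_forall] at h1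
  obtain ⟨x, y, hxy, hne⟩ := h1
  have e1 := (h2 x y hne hxy).2
  have e2 := (h'.2 x y hne hxy).2
  exact Prod.ext (e1.1.symm.trans e2.1) (e1.2.symm.trans e2.2)

lemma Q2_Q2 {a a' : ℕ} {e : Function.End X} (h : c.Q2 a e) (h' : c.Q2 a' e) : a = a' := by
  obtain ⟨-, ⟨i, hi, hi'⟩, h2⟩ := h
  obtain ⟨-, ⟨j, hj, hj'⟩, h3⟩ := h'
  rcases lt_trichotomy a a' with hlt | heq | hlt
  · have := h2 j (by omega); omega
  · exact heq
  · have := h3 i (by omega); omega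

lemma Q3_Q3 {a a' : ℕ} {e : Function.End X} (h : c.Q3 a e) (h' : c.Q3 a' e) : a = a' := by
  obtain ⟨h1, -, h2⟩ := h
  simp only [Injective, not_forall] at h1
  obtain ⟨x, y, hxy, hne⟩ := h1
  exact (h2 x y hne hxy).2.symm.trans (h'.2.2 x y hne hxy).2

lemma Q1_Q3 {b : ℕ × ℕ} {a : ℕ} {e : Function.End X} (h : c.Q1 b e) (h' : c.Q3 a e) : False := by
  obtain ⟨h1, h2⟩ := h
  simp only [Injective, not_forall] at h1
  obtain ⟨x, y, hxy, hne⟩ := h1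
  exact (h2 x y hne hxy).1 (h'.2.2 x y hne hxy).1

lemma Q2_Q3 {a a' : ℕ} {e : Function.End X} (h : c.Q2 a e) (h' : c.Q3 a' e) : False := by
  obtain ⟨-, ⟨i, hi, hi'⟩, -⟩ := h
  have := h'.2.1 i
  omega

lemma Q2_U [Finite X] [Finite I] {a : ℕ} {e : Function.End X} (h : c.Q2 a e) (hU : c.IsU e) : False := by
  obtain ⟨-, ⟨i, hi, hi'⟩, -⟩ := h
  have := hU.mem_SizeM.2.2 i
  omega

/-- lower bound for the number of generators which are not units -/
lemma rel_lower [Finite X] [Finite I] {S : Set (Function.End X)}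
    (hS : Submonoid.closure S = c.T) (hfin : S.Finite) (K1 : Finset (ℕ × ℕ)) (K2 K3 : Finset ℕ)
    (h1 : ∀ b ∈ K1, ∃ i d, d ≠ i ∧ c.s d ≤ c.s i ∧ b = (c.s d, c.s i))
    (h2 : ∀ a ∈ K2, ∃ i d, c.s d < c.s i ∧ a = c.s i)
    (h3 : ∀ a ∈ K3, ∃ i, 2 ≤ c.s i ∧ (∀ j, c.s j ≠ c.s i - 1) ∧ a = c.s i) :
    K1.card + K2.card + K3.card ≤ {e ∈ S | ¬ c.IsU e}.ncard := by
  classical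
  have k1 : ∀ b : K1, ∃ e ∈ S, c.Q1 b.1 e := by
    intro b
    obtain ⟨i, d, ha, hb, hc⟩ := h1 b.1 b.2
    rw [hc]
    exact c.exists_Q1 hS ha hb
  have k2 : ∀ b : K2, ∃ e ∈ S, c.Q2 b.1 e := by
    intro b
    obtain ⟨i, d, ha, hc⟩ := h2 b.1 b.2
    rw [hc]
    exact c.exists_Q2 hS ha
  have k3 : ∀ b : K3, ∃ e ∈ S, c.Q3 b.1 e := by
    intro b
    obtain ⟨i, ha, hb, hc⟩ := h3 b.1 b.2
    rw [hc]
    exact c.exists_Q3 hS ha hb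
  choose f1 m1 q1 using k1
  choose f2 m2 q2 using k2
  choose f3 m3 q3 using k3
  have hT : ∀ e ∈ S, e ∈ c.T := fun e he => hS ▸ Submonoid.subset_closure he
  have h12 : ∀ x y, f1 x ≠ f2 y := by
    intro x y h
    exact c.Q1_bar (hT _ (m1 x)) (q1 x) (h ▸ (q2 y).1)
  have h13 : ∀ x y, f1 x ≠ f3 y := fun x y h => c.Q1_Q3 (q1 x) (h ▸ q3 y)
  have h23 : ∀ x y, f2 x ≠ f3 y := fun x y h => c.Q2_Q3 (q2 x) (h ▸ q3 y)
  let f : (K1 ⊕ K2) ⊕ K3 → {e ∈ S | ¬ c.IsU e} := Sum.elim (Sum.elim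
    (fun x => ⟨f1 x, m1 x, fun h => (q1 x).1 h.1.1⟩) (fun x => ⟨f2 x, m2 x, c.Q2_U (q2 x)⟩))
    (fun x => ⟨f3 x, m3 x, fun h => (q3 x).1 h.1.1⟩)
  have hf : Injective f := by
    rintro ((x | x) | x) ((y | y) | y) h <;> have h := congrArg Subtype.val h <;> simp only [f, Sum.elim_inl, Sum.elim_inr] at h
    · rw [Subtype.ext (c.Q1_Q1 (q1 x) (h ▸ q1 y))]
    · exact (h12 _ _ h).elim
    · exact (h13 _ _ h).elim
    · exact (h12 _ _ h.symm).elim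
    · rw [Subtype.ext (c.Q2_Q2 (q2 x) (h ▸ q2 y))]
    · exact (h23 _ _ h).elim
    · exact (h13 _ _ h.symm).elim
    · exact (h23 _ _ h.symm).elim
    · rw [Subtype.ext (c.Q3_Q3 (q3 x) (h ▸ q3 y))]
  have : Finite {e ∈ S | ¬ c.IsU e} := (hfin.subset (fun _ h => h.1)).to_subtype
  have := Nat.card_le_card_of_injective f hf
  rw [Nat.card_coe_set_eq] at this
  simpa [Nat.card_sum] using this

lemma toE_injective {Y : Type*} : Injective (toE : Equiv.Perm Y → Function.End Y) := by
  intro f g h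
  ext x
  exact congrFun h x

lemma toE_isU {g : Equiv.Perm X} : c.IsU (toE g) ↔ g ∈ c.Gp :=
  ⟨fun h => h.2, fun h => ⟨g.bijective, h⟩⟩

lemma card_Gp : {f : Function.End X | c.IsU f}.ncard = Nat.card c.Gp := by
  have : {f : Function.End X | c.IsU f} = toE '' (c.Gp : Set (Equiv.Perm X)) := by
    ext f
    constructor
    · intro h
      obtain ⟨g, hg, rfl⟩ := IsU.toGp h
      exact ⟨g, hg, rfl⟩
    · rintro ⟨g, hg, rfl⟩
      exact (c.toE_isU).2 hg
  rw [this, Set.ncard_image_of_injective _ toE_injective, ← Nat.card_coe_set_eq]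
  rfl

/-- lower bound for the number of generators which are units -/
lemma unit_lower [Finite X] [Finite I] {S : Set (Function.End X)}
    (hS : Submonoid.closure S = c.T) (hfin : S.Finite) (D E' : Finset ℕ)
    (hD : ∀ a, a ∈ D ↔ 2 ≤ a ∧ ∃ i, c.s i = a) (hE : ∀ a, a ∈ E' ↔ 2 ≤ Nat.card {i // c.s i = a})
    (h3 : 3 ≤ {f : Function.End X | c.IsU f}.ncard) :
    max 2 (D.card + E'.card) ≤ {e ∈ S | c.IsU e}.ncard := by
  classical
  have hfin' : {e ∈ S | c.IsU e}.Finite := hfin.subset (fun _ h => h.1)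
  have hA : {g : Equiv.Perm X | toE g ∈ S ∧ c.IsU (toE g)}.Finite :=
    hfin'.preimage toE_injective.injOn
  set S' : Finset (Equiv.Perm X) := hA.toFinset with hS'
  have hmem : ∀ g, g ∈ S' ↔ toE g ∈ S ∧ c.IsU (toE g) := by
    intro g; rw [hS', Set.Finite.mem_toFinset]; rfl
  have hgen : ∀ f ∈ Submonoid.closure S, Bijective f → ∃ g ∈ Subgroup.closure (S' : Set (Equiv.Perm X)), toE g = f := by
    intro f hf
    induction hf using Submonoid.closure_induction with
    | mem f hf =>
      intro hb
      have hU : c.IsU f := c.isU_of_inj (hS ▸ Submonoid.subset_closure hf) hb.1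
      obtain ⟨g, hg, rfl⟩ := hU.toGp
      exact ⟨g, Subgroup.subset_closure (by exact_mod_cast (hmem g).2 ⟨hf, hU⟩), rfl⟩
    | one => intro _; exact ⟨1, Subgroup.one_mem _, rfl⟩
    | mul f g _ _ ihf ihg =>
      intro hb
      have hb' : Bijective (f ∘ g) := hb
      have hg : Bijective g := Finite.injective_iff_bijective.1 (Injective.of_comp hb'.1)
      have hf : Bijective f := Finite.surjective_iff_bijective.1 (Surjective.of_comp hb'.2)
      obtain ⟨a, ha, rfl⟩ := ihf hf
      obtain ⟨b, hb2, rfl⟩ := ihg hg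
      exact ⟨a * b, Subgroup.mul_mem _ ha hb2, rfl⟩
  have hcl : Subgroup.closure (S' : Set (Equiv.Perm X)) = c.Gp := by
    apply le_antisymm
    · rw [Subgroup.closure_le]
      intro g hg
      exact (c.toE_isU).1 ((hmem g).1 hg).2
    · intro g hg
      obtain ⟨g', hg', h⟩ := hgen (toE g) (by rw [hS]; exact ((c.toE_isU).2 hg).mem_T) g.bijective
      rwa [← toE_injective h]
  refine (c.group_lower D E' hD hE (by rwa [← c.card_Gp]) S' hcl).trans ?_
  rw [← Set.ncard_coe_finset]
  apply Set.ncard_le_ncard_of_injOn toE _ toE_injective.injOn hfin'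
  intro g hg
  exact (hmem g).1 hg

/-- full lower bound -/
theorem lower [Finite X] [Finite I] {S : Set (Function.End X)}
    (hS : Submonoid.closure S = c.T) (hfin : S.Finite) (D E' : Finset ℕ)
    (hD : ∀ a, a ∈ D ↔ 2 ≤ a ∧ ∃ i, c.s i = a) (hE : ∀ a, a ∈ E' ↔ 2 ≤ Nat.card {i // c.s i = a})
    (h3' : 3 ≤ {f : Function.End X | c.IsU f}.ncard)
    (K1 : Finset (ℕ × ℕ)) (K2 K3 : Finset ℕ)
    (h1 : ∀ b ∈ K1, ∃ i d, d ≠ i ∧ c.s d ≤ c.s i ∧ b = (c.s d, c.s i))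
    (h2 : ∀ a ∈ K2, ∃ i d, c.s d < c.s i ∧ a = c.s i)
    (h3 : ∀ a ∈ K3, ∃ i, 2 ≤ c.s i ∧ (∀ j, c.s j ≠ c.s i - 1) ∧ a = c.s i) :
    max 2 (D.card + E'.card) + (K1.card + K2.card + K3.card) ≤ S.ncard := by
  have e1 := c.unit_lower hS hfin D E' hD hE h3'
  have e2 := c.rel_lower hS hfin K1 K2 K3 h1 h2 h3
  have : S.ncard = {e ∈ S | c.IsU e}.ncard + {e ∈ S | ¬ c.IsU e}.ncard := by
    rw [← Set.ncard_union_eq _ (hfin.subset (fun _ h => h.1)) (hfin.subset (fun _ h => h.1))]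
    · congr 1
      ext e
      constructor
      · intro h
        by_cases hU : c.IsU e
        · exact Or.inl ⟨h, hU⟩
        · exact Or.inr ⟨h, hU⟩
      · rintro (h | h) <;> exact h.1
    · rw [Set.disjoint_left]
      intro e h h'
      exact h'.2 h.2
  omega

/-- full upper bound -/
theorem upper [Finite X] [Finite I] (D E' : Finset ℕ)
    (hD : ∀ a, a ∈ D ↔ 2 ≤ a ∧ ∃ i, c.s i = a) (hE : ∀ a, a ∈ E' ↔ 2 ≤ Nat.card {i // c.s i = a})
    (K1 : Finset (ℕ × ℕ)) (K2 K3 : Finset ℕ)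
    (h1 : ∀ i d, d ≠ i → c.s d ≤ c.s i → (c.s d, c.s i) ∈ K1)
    (h2 : ∀ i d, c.s d < c.s i → c.s i ∈ K2)
    (h3 : ∀ i, 2 ≤ c.s i → (∀ j, c.s j ≠ c.s i - 1) → c.s i ∈ K3) :
    ∃ S : Set (Function.End X), S.Finite ∧ Submonoid.closure S = c.T ∧
      S.ncard ≤ max 2 (D.card + E'.card) + (K1.card + K2.card + K3.card) := by
  classical
  obtain ⟨S0, hS0, hS0G⟩ := c.group_upper D E' hD hE
  have k1 : ∀ b : ℕ × ℕ, ∃ e ∈ c.T, ∀ i d, d ≠ i → c.s d ≤ c.s i → b = (c.s d, c.s i) →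
      ∃ i' d', d' ≠ i' ∧ c.s i' = c.s i ∧ c.s d' = c.s d ∧ c.P (Function.update id d' i') = e := by
    intro b
    by_cases hb : ∃ i d, d ≠ i ∧ c.s d ≤ c.s i ∧ b = (c.s d, c.s i)
    · obtain ⟨i', d', h1, h2, rfl⟩ := hb
      refine ⟨_, c.P_mem (Function.update id d' i'), fun i d hid hs h => ⟨i', d', h1, ?_, ?_, rfl⟩⟩
      · simpa using congrArg Prod.snd h
      · simpa using congrArg Prod.fst h
    · exact ⟨1, c.T.one_mem, fun i d h1 h2 h3 => (hb ⟨i, d, h1, h2, h3⟩).elim⟩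
  have k2 : ∀ a : ℕ, ∃ e ∈ c.T, ∀ i d, c.s d < c.s i → (∀ j, ¬(c.s d < c.s j ∧ c.s j < c.s i)) → a = c.s i →
      ∃ i' d', c.s i' = c.s i ∧ c.s d' = c.s d ∧ c.P (Equiv.swap i' d') = e := by
    intro a
    by_cases hb : ∃ i d, c.s d < c.s i ∧ (∀ j, ¬(c.s d < c.s j ∧ c.s j < c.s i)) ∧ a = c.s i
    · obtain ⟨i', d', h1, h2, rfl⟩ := hb
      refine ⟨_, c.P_mem (Equiv.swap i' d'), fun i d hid hs h => ⟨i', d', h, ?_, rfl⟩⟩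
      have ha := hs d'
      have hb := h2 d
      omega
    · exact ⟨1, c.T.one_mem, fun i d h1 h2 h3 => (hb ⟨i, d, h1, h2, h3⟩).elim⟩
  have k3 : ∀ a : ℕ, ∃ e ∈ c.T, ∀ i, a = c.s i → ∃ i', c.s i' = c.s i ∧ c.col i' = e := by
    intro a
    by_cases hb : ∃ i, a = c.s i
    · obtain ⟨i', rfl⟩ := hb
      refine ⟨c.col i', ?_, fun i h => ⟨i', h, rfl⟩⟩
      have hpr : ∀ x, c.pr (c.col i' x) = c.pr x := by
        intro x
        simp only [col, L]
        split_ifs with h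
        · simp [h]
        · rfl
      intro x y h
      rw [hpr, hpr, h]
    · exact ⟨1, c.T.one_mem, fun i h => (hb ⟨i, h⟩).elim⟩
  choose f1 m1 q1 using k1
  choose f2 m2 q2 using k2
  choose f3 m3 q3 using k3
  let F : Finset (Function.End X) := S0.image toE ∪ (K1.image f1 ∪ K2.image f2 ∪ K3.image f3)
  have hF0 : ∀ g ∈ S0, toE g ∈ F := fun g hg => Finset.mem_union_left _ (Finset.mem_image_of_mem _ hg)
  have hF1 : ∀ b ∈ K1, f1 b ∈ F := fun b hb => Finset.mem_union_right _
    (Finset.mem_union_left _ (Finset.mem_union_left _ (Finset.mem_image_of_mem _ hb)))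
  have hF2 : ∀ b ∈ K2, f2 b ∈ F := fun b hb => Finset.mem_union_right _
    (Finset.mem_union_left _ (Finset.mem_union_right _ (Finset.mem_image_of_mem _ hb)))
  have hF3 : ∀ b ∈ K3, f3 b ∈ F := fun b hb => Finset.mem_union_right _
    (Finset.mem_union_right _ (Finset.mem_image_of_mem _ hb))
  refine ⟨F, F.finite_toSet, le_antisymm ?_ ?_, ?_⟩
  · rw [Submonoid.closure_le]
    intro e he
    simp only [F, Finset.coe_union, Finset.coe_image, mem_union, mem_image, Finset.mem_coe] at he
    rcases he with ⟨g, hg, rfl⟩ | (⟨b, hb, rfl⟩ | ⟨b, hb, rfl⟩) | ⟨b, hb, rfl⟩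
    · have : g ∈ c.Gp := hS0G ▸ Subgroup.subset_closure hg
      exact ((c.toE_isU).2 this).mem_T
    · exact m1 b
    · exact m2 b
    · exact m3 b
  · set M := Submonoid.closure (F : Set (Function.End X)) with hM
    have hFM : ∀ e ∈ F, e ∈ M := fun e he => Submonoid.subset_closure he
    apply c.rel_upper M
    · intro g hg
      obtain ⟨g, hgG, rfl⟩ := hg.toGp
      rw [← hS0G] at hgG
      have hmon : g ∈ Submonoid.closure (S0 : Set (Equiv.Perm X)) := by
        rw [← Subgroup.closure_toSubmonoid_of_finite]
        exact hgG
      clear hg hgG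
      induction hmon using Submonoid.closure_induction with
      | mem g hg => exact hFM _ (hF0 g hg)
      | one => exact M.one_mem
      | mul f g _ _ h1 h2 =>
        have := M.mul_mem h1 h2
        exact this
    · intro i hi hj
      obtain ⟨i', ha, hb⟩ := q3 (c.s i) i rfl
      exact ⟨i', ha, hb ▸ hFM _ (hF3 _ (h3 i hi hj))⟩
    · intro i d hs hj
      obtain ⟨i', d', ha, hb, hc⟩ := q2 (c.s i) i d hs hj rfl
      exact ⟨i', d', ha, hb, hc ▸ hFM _ (hF2 _ (h2 i d hs))⟩
    · intro i d hid hs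
      obtain ⟨i', d', h0, ha, hb, hc⟩ := q1 _ i d hid hs rfl
      exact ⟨i', d', h0, ha, hb, hc ▸ hFM _ (hF1 _ (h1 i d hid hs))⟩
  · rw [Set.ncard_coe_finset]
    have e0 : (S0.image toE).card ≤ S0.card := Finset.card_image_le
    have e1 : (K1.image f1).card ≤ K1.card := Finset.card_image_le
    have e2 : (K2.image f2).card ≤ K2.card := Finset.card_image_le
    have e3 : (K3.image f3).card ≤ K3.card := Finset.card_image_le
    have e4 := Finset.card_union_le (S0.image toE) (K1.image f1 ∪ K2.image f2 ∪ K3.image f3)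
    have e5 := Finset.card_union_le (K1.image f1 ∪ K2.image f2) (K3.image f3)
    have e6 := Finset.card_union_le (K1.image f1) (K2.image f2)
    show (S0.image toE ∪ (K1.image f1 ∪ K2.image f2 ∪ K3.image f3)).card ≤ _
    omega

end Coord


section Assembly
variable {X : Type*}

/-- Numbering of the block over `i`. -/
noncomputable def fibEquiv [Finite X] (r : Setoid X) (i : Quotient r) :
    {x : X // (Quotient.mk r x) = i} ≃ Fin (Nat.card {x : X // (Quotient.mk r x) = i}) :=
  Finite.equivFin _

lemma fib_pos [Finite X] (r : Setoid X) (i : Quotient r) :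
    0 < Nat.card {x : X // (Quotient.mk r x) = i} := by
  obtain ⟨x, hx⟩ := Quotient.exists_rep i
  have : Nonempty {x : X // (Quotient.mk r x) = i} := ⟨⟨x, hx⟩⟩
  exact Nat.card_pos

lemma fib_val [Finite X] (r : Setoid X) (i j : Quotient r) (x : X) (h : Quotient.mk r x = i)
    (hj : Quotient.mk r x = j) :
    (fibEquiv r i ⟨x, h⟩).val = (fibEquiv r j ⟨x, hj⟩).val := by
  subst h; subst hj; rfl

/-- Coordinates attached to an equivalence relation. -/
noncomputable def coordOf [Finite X] (r : Setoid X) : Coord X (Quotient r) where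
  pr := Quotient.mk r
  s := fun i => Nat.card {x : X // (Quotient.mk r x) = i}
  ka := fun x => (fibEquiv r (Quotient.mk r x) ⟨x, rfl⟩).val
  mk := fun i a => ((fibEquiv r i).symm
    ⟨min a (Nat.card {x : X // (Quotient.mk r x) = i} - 1), by have := fib_pos r i; omega⟩).1
  pr_mk := fun i a => ((fibEquiv r i).symm _).2
  ka_mk' := by
    intro i a
    have h := ((fibEquiv r i).symm
      ⟨min a (Nat.card {x : X // (Quotient.mk r x) = i} - 1),
        by have := fib_pos r i; omega⟩).2
    rw [fib_val r _ i _ rfl h]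
    simp
  ka_lt := fun x => (fibEquiv r (Quotient.mk r x) ⟨x, rfl⟩).isLt
  mk_eq := by
    intro x
    have h : (⟨min (fibEquiv r (Quotient.mk r x) ⟨x, rfl⟩).val
        (Nat.card {y : X // (Quotient.mk r y) = Quotient.mk r x} - 1),
        by have := fib_pos r (Quotient.mk r x); omega⟩ :
        Fin (Nat.card {y : X // (Quotient.mk r y) = Quotient.mk r x}))
        = fibEquiv r (Quotient.mk r x) ⟨x, rfl⟩ := by
      apply Fin.ext
      have := (fibEquiv r (Quotient.mk r x) ⟨x, rfl⟩).isLt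
      simp only
      omega
    rw [h]
    simp

lemma coordOf_pr [Finite X] (r : Setoid X) (x y : X) :
    (coordOf r).pr x = (coordOf r).pr y ↔ r x y := Quotient.eq

lemma coordOf_count [Finite X] (r : Setoid X) (a : ℕ) :
    {B | B ∈ Setoid.classes r ∧ B.ncard = a}.ncard
      = Nat.card {i // (coordOf r).s i = a} := by
  have h : {B | B ∈ Setoid.classes r ∧ B.ncard = a} =
      (fun i => {x | (coordOf r).pr x = i}) '' {i | (coordOf r).s i = a} := by
    ext B
    simp only [Set.mem_setOf_eq, Set.mem_image]
    constructor
    · rintro ⟨⟨y, rfl⟩, hB⟩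
      have : {x | (coordOf r).pr x = (coordOf r).pr y} = {x | r x y} := by
        ext x; exact coordOf_pr r x y
      exact ⟨(coordOf r).pr y, by rw [← hB, ← (coordOf r).ncard_block, this], this⟩
    · rintro ⟨i, hi, rfl⟩
      refine ⟨?_, by rw [(coordOf r).ncard_block, hi]⟩
      refine ⟨(coordOf r).mk i 0, ?_⟩
      ext x
      simp only [Set.mem_setOf_eq]
      rw [← coordOf_pr, (coordOf r).pr_mk]
  rw [h, Set.ncard_image_of_injective, ← Nat.card_coe_set_eq]
  · rfl
  · intro i j hij
    have : (coordOf r).mk i 0 ∈ {x | (coordOf r).pr x = j} := by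
      simp only at hij
      rw [← hij]; simp
    simpa using this

lemma pairs_card (E : Finset ℕ) :
    ((E ×ˢ E).filter (fun x => x.1 < x.2)).card = E.card.choose 2 := by
  induction E using Finset.induction_on_max with
  | empty => simp
  | insert a s hs ih =>
    have ha : a ∉ s := fun h => lt_irrefl _ (hs a h)
    have : ((insert a s ×ˢ insert a s).filter (fun x : ℕ × ℕ => x.1 < x.2))
        = ((s ×ˢ s).filter (fun x => x.1 < x.2)) ∪ s.image (fun b => (b, a)) := by
      ext ⟨u, v⟩
      simp only [Finset.mem_filter, Finset.mem_product, Finset.mem_insert, Finset.mem_union,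
        Finset.mem_image, Prod.mk.injEq]
      constructor
      · rintro ⟨⟨hu | hu, hv | hv⟩, h⟩
        · omega
        · have := hs v hv; omega
        · right; exact ⟨u, hu, rfl, hv.symm⟩
        · left; exact ⟨⟨hu, hv⟩, h⟩
      · rintro (⟨⟨hu, hv⟩, h⟩ | ⟨b, hb, rfl, rfl⟩)
        · exact ⟨⟨Or.inr hu, Or.inr hv⟩, h⟩
        · exact ⟨⟨Or.inr hb, Or.inl rfl⟩, hs _ hb⟩
    rw [this, Finset.card_union_of_disjoint, ih, Finset.card_image_of_injective,
      Finset.card_insert_of_notMem ha, Nat.choose_succ_succ' s.card 1, Nat.choose_one_right, add_comm]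
    · intro x y h; simpa using h
    · rw [Finset.disjoint_left]
      rintro ⟨u, v⟩ h1 h2
      simp only [Finset.mem_filter, Finset.mem_product, Finset.mem_image, Prod.mk.injEq] at h1 h2
      obtain ⟨b, hb, rfl, rfl⟩ := h2
      exact ha h1.1.2

/-- rank of `T` in terms of size finsets -/
lemma rank_core {I : Type*} [Finite X] [Finite I] (c : Coord X I) (D E E' K3 : Finset ℕ)
    (hE0 : E.Nonempty)
    (hE : ∀ a, a ∈ E ↔ ∃ i, c.s i = a)
    (hD : ∀ a, a ∈ D ↔ 2 ≤ a ∧ ∃ i, c.s i = a)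
    (hE' : ∀ a, a ∈ E' ↔ 2 ≤ Nat.card {i // c.s i = a})
    (hK3 : ∀ a, a ∈ K3 ↔ 2 ≤ a ∧ (∃ i, c.s i = a) ∧ ∀ j, c.s j ≠ a - 1)
    (h3 : 3 ≤ {f : Function.End X | c.IsU f}.ncard) :
    sInf {k | ∃ S : Set (Function.End X), S.Finite ∧ S.ncard = k ∧
      (Submonoid.closure S : Set (Function.End X)) = c.T} =
    max 2 (D.card + E'.card) + ((E.card.choose 2 + E'.card) + (E.card - 1) + K3.card) := by
  classical
  set K1 : Finset (ℕ × ℕ) := ((E ×ˢ E).filter (fun x => x.1 < x.2)) ∪ E'.image (fun a => (a, a))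
    with hK1
  set K2 : Finset ℕ := E.erase (E.min' hE0) with hK2
  have c1 : K1.card = E.card.choose 2 + E'.card := by
    rw [hK1, Finset.card_union_of_disjoint, pairs_card, Finset.card_image_of_injective]
    · intro x y h; simpa using h
    · rw [Finset.disjoint_left]
      rintro ⟨u, v⟩ h1 h2
      simp only [Finset.mem_filter, Finset.mem_image, Prod.mk.injEq] at h1 h2
      obtain ⟨b, hb, rfl, rfl⟩ := h2
      exact lt_irrefl _ h1.2
  have c2 : K2.card = E.card - 1 := Finset.card_erase_of_mem (Finset.min'_mem _ _)
  rw [← c1, ← c2]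
  have two : ∀ a, 2 ≤ Nat.card {i // c.s i = a} ↔ ∃ i d, d ≠ i ∧ c.s i = a ∧ c.s d = a := by
    intro a
    have : 2 ≤ Nat.card {i // c.s i = a} ↔ Nontrivial {i // c.s i = a} := by
      rw [← Finite.one_lt_card_iff_nontrivial]; rfl
    rw [this]
    constructor
    · rintro ⟨⟨i, hi⟩, ⟨d, hd⟩, h⟩
      exact ⟨i, d, fun hh => h (by simp [hh]), hi, hd⟩
    · rintro ⟨i, d, h, hi, hd⟩
      exact ⟨⟨i, hi⟩, ⟨d, hd⟩, fun hh => h (by simpa using hh.symm)⟩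
  apply le_antisymm
  · obtain ⟨S, hf, hc, hle⟩ := c.upper D E' hD hE' K1 K2 K3 (by
      intro i d hd hle
      rw [hK1, Finset.mem_union]
      rcases hle.lt_or_eq with h | h
      · left
        simp only [Finset.mem_filter, Finset.mem_product]
        exact ⟨⟨(hE _).2 ⟨d, rfl⟩, (hE _).2 ⟨i, rfl⟩⟩, h⟩
      · right
        rw [Finset.mem_image]
        exact ⟨c.s i, (hE' _).2 ((two _).2 ⟨i, d, hd, rfl, h⟩), by rw [h]⟩) (by
      intro i d h
      rw [hK2, Finset.mem_erase]
      refine ⟨?_, (hE _).2 ⟨i, rfl⟩⟩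
      have := E.min'_le _ ((hE _).2 ⟨d, rfl⟩)
      omega) (by
      intro i h2 hj
      exact (hK3 _).2 ⟨h2, ⟨i, rfl⟩, hj⟩)
    refine le_trans (Nat.sInf_le ⟨S, hf, rfl, ?_⟩) hle
    rw [hc]
  · obtain ⟨S0, hf0, hc0, _⟩ := c.upper D E' hD hE'
      (((E ×ˢ E))) E E (by
      intro i d hd hle
      simp only [Finset.mem_product]
      exact ⟨(hE _).2 ⟨d, rfl⟩, (hE _).2 ⟨i, rfl⟩⟩) (fun i d h => (hE _).2 ⟨i, rfl⟩)
      (fun i _ _ => (hE _).2 ⟨i, rfl⟩)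
    refine le_csInf ⟨S0.ncard, ⟨S0, hf0, rfl, by rw [hc0]⟩⟩ ?_
    rintro k ⟨S, hf, rfl, hc⟩
    refine c.lower (SetLike.coe_injective hc) hf D E' hD hE' h3 K1 K2 K3 ?_ ?_ ?_
    · intro b hb
      rw [hK1, Finset.mem_union] at hb
      rcases hb with hb | hb
      · obtain ⟨u, v⟩ := b
        simp only [Finset.mem_filter, Finset.mem_product, hE] at hb
        obtain ⟨⟨⟨d, rfl⟩, ⟨i, rfl⟩⟩, h⟩ := hb
        exact ⟨i, d, fun hh => by rw [hh] at h; exact lt_irrefl _ h, h.le, rfl⟩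
      · rw [Finset.mem_image] at hb
        obtain ⟨a, ha, rfl⟩ := hb
        obtain ⟨i, d, h, hi, hd⟩ := (two a).1 ((hE' _).1 ha)
        exact ⟨i, d, h, by omega, by rw [hi, hd]⟩
    · intro a ha
      rw [hK2, Finset.mem_erase] at ha
      obtain ⟨i, hi⟩ := (hE _).1 ha.2
      obtain ⟨d, hd⟩ := (hE _).1 (E.min'_mem hE0)
      refine ⟨i, d, ?_, hi.symm⟩
      have := E.min'_le _ ha.2
      have := ha.1
      omega
    · intro a ha
      obtain ⟨h2, ⟨i, hi⟩, hj⟩ := (hK3 a).1 ha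
      subst hi
      exact ⟨i, h2, hj, rfl⟩

end Assembly

/-- If `|S(X,P)| ≥ 3`, then the rank of `T(X,P)` equals
`max{2, 2p+q+g(t)} + C(p+q,2) + 2p + q + g'(t) − 1 + l + h(p,q,t)`. -/
theorem rank_TXP {X : Type*} [Fintype X] [Nonempty X] (r : Setoid X)
    (p q t : ℕ) (n m : Fin p → ℕ) (l : Fin q → ℕ)
    (hn2 : ∀ i, 2 ≤ n i) (hm2 : ∀ i, 2 ≤ m i) (hl2 : ∀ j, 2 ≤ l j)
    (hninj : Function.Injective n) (hlinj : Function.Injective l)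
    (hnl : ∀ i j, n i ≠ l j)
    (hcn : ∀ i, blockCount r (n i) = m i)
    (hcl : ∀ j, blockCount r (l j) = 1)
    (hct : blockCount r 1 = t)
    (hcover : ∀ s, 2 ≤ s → blockCount r s ≠ 0 → (∃ i, s = n i) ∨ (∃ j, s = l j))
    (hS3 : 3 ≤ (SXP r).ncard) :
    setRank (TSet r) =
      max 2 (2 * p + q + gg t) + (p + q).choose 2 + 2 * p + q + gg' t - 1 +
        {s : ℕ | 2 ≤ s ∧ blockCount r s ≠ 0 ∧ blockCount r (s - 1) = 0}.ncard +
        hh p q t := by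
  classical
  set c := coordOf r with hc
  have hcount : ∀ a, blockCount r a = Nat.card {i // c.s i = a} := fun a => coordOf_count r a
  have hne : ∀ a, blockCount r a ≠ 0 ↔ ∃ i, c.s i = a := by
    intro a
    rw [hcount, ← Nat.pos_iff_ne_zero, Nat.card_pos_iff]
    constructor
    · rintro ⟨⟨⟨i, hi⟩⟩, _⟩; exact ⟨i, hi⟩
    · rintro ⟨i, hi⟩; exact ⟨⟨⟨i, hi⟩⟩, inferInstance⟩
  have hT : TSet r = (c.T : Set (Function.End X)) := by
    ext f
    change (∀ x y, r x y → r (f x) (f y)) ↔ ∀ x y, c.pr x = c.pr y → c.pr (f x) = c.pr (f y)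
    simp only [hc, coordOf_pr]
  have hU : SXP r = {f : Function.End X | c.IsU f} := by
    ext f
    change (Bijective f ∧ ∀ x y, r (f x) (f y) ↔ r x y) ↔
      (Bijective f ∧ ∀ x y, c.pr (f x) = c.pr (f y) ↔ c.pr x = c.pr y)
    simp only [hc, coordOf_pr]
  rw [hU] at hS3
  set Dn : Finset ℕ := Finset.univ.image n with hDn
  set Dl : Finset ℕ := Finset.univ.image l with hDl
  have mDn : ∀ a, a ∈ Dn ↔ ∃ i, n i = a := by intro a; simp [hDn]
  have mDl : ∀ a, a ∈ Dl ↔ ∃ i, l i = a := by intro a; simp [hDl]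
  have cDn : Dn.card = p := by rw [hDn, Finset.card_image_of_injective _ hninj]; simp
  have cDl : Dl.card = q := by rw [hDl, Finset.card_image_of_injective _ hlinj]; simp
  have mD : ∀ a, a ∈ Dn ∪ Dl ↔ 2 ≤ a ∧ ∃ i, c.s i = a := by
    intro a
    rw [Finset.mem_union, mDn, mDl, ← hne]
    constructor
    · rintro (⟨i, rfl⟩ | ⟨i, rfl⟩)
      · refine ⟨hn2 i, ?_⟩; have := hm2 i; rw [hcn]; omega
      · refine ⟨hl2 i, ?_⟩; rw [hcl]; omega
    · rintro ⟨h2, h⟩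
      rcases hcover a h2 h with ⟨i, hi⟩ | ⟨i, hi⟩
      · exact Or.inl ⟨i, hi.symm⟩
      · exact Or.inr ⟨i, hi.symm⟩
  have cD : (Dn ∪ Dl).card = p + q := by
    rw [Finset.card_union_of_disjoint, cDn, cDl]
    rw [Finset.disjoint_left]
    intro a h1 h2
    obtain ⟨i, rfl⟩ := (mDn _).1 h1
    obtain ⟨j, hj⟩ := (mDl _).1 h2
    exact hnl i j hj.symm
  set W1 : Finset ℕ := if 1 ≤ t then {1} else ∅ with hW1
  set W2 : Finset ℕ := if 2 ≤ t then {1} else ∅ with hW2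
  have mW1 : ∀ a, a ∈ W1 ↔ a = 1 ∧ 1 ≤ t := by
    intro a; rw [hW1]; split_ifs with h <;> simp [h]
  have mW2 : ∀ a, a ∈ W2 ↔ a = 1 ∧ 2 ≤ t := by
    intro a; rw [hW2]; split_ifs with h <;> simp [h]
  have cW1 : W1.card = gg' t := by rw [hW1, gg']; split_ifs <;> simp
  have cW2 : W2.card = gg t := by rw [hW2, gg]; split_ifs <;> simp
  have mE : ∀ a, a ∈ (Dn ∪ Dl) ∪ W1 ↔ ∃ i, c.s i = a := by
    intro a
    rw [Finset.mem_union, mD, mW1]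
    constructor
    · rintro (h | ⟨rfl, h⟩)
      · exact h.2
      · rw [← hne, hct]; omega
    · intro h
      by_cases h1 : a = 1
      · right
        refine ⟨h1, ?_⟩
        rw [← hne, h1, hct] at h; omega
      · left
        refine ⟨?_, h⟩
        obtain ⟨i, hi⟩ := h
        have := c.s_pos i
        omega
  have cE : ((Dn ∪ Dl) ∪ W1).card = p + q + gg' t := by
    rw [Finset.card_union_of_disjoint, cD, cW1]
    rw [Finset.disjoint_left]
    intro a h1 h2
    have h3 := ((mD a).1 h1).1
    have h4 := ((mW1 a).1 h2).1
    omega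
  have mE' : ∀ a, a ∈ Dn ∪ W2 ↔ 2 ≤ Nat.card {i // c.s i = a} := by
    intro a
    rw [← hcount, Finset.mem_union, mDn, mW2]
    constructor
    · rintro (⟨i, rfl⟩ | ⟨rfl, h⟩)
      · rw [hcn]; exact hm2 i
      · rw [hct]; exact h
    · intro h
      have h0 : ∃ i, c.s i = a := by rw [← hne]; omega
      have h1 := (mE a).2 h0
      rw [Finset.mem_union, Finset.mem_union, mDn, mDl, mW1] at h1
      rcases h1 with (h1 | ⟨j, rfl⟩) | ⟨rfl, h1⟩
      · exact Or.inl h1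
      · rw [hcl] at h; omega
      · rw [hct] at h; exact Or.inr ⟨rfl, h⟩
  have cE' : (Dn ∪ W2).card = p + gg t := by
    rw [Finset.card_union_of_disjoint, cDn, cW2]
    rw [Finset.disjoint_left]
    intro a h1 h2
    obtain ⟨i, rfl⟩ := (mDn a).1 h1
    have := hn2 i
    have h4 := ((mW2 _).1 h2).1
    omega
  set K3 : Finset ℕ := ((Dn ∪ Dl) ∪ W1).filter (fun a => 2 ≤ a ∧ blockCount r (a - 1) = 0) with hK3
  have sK3 : {s : ℕ | 2 ≤ s ∧ blockCount r s ≠ 0 ∧ blockCount r (s - 1) = 0} = (K3 : Set ℕ) := by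
    ext a
    rw [hK3, Finset.mem_coe, Finset.mem_filter, mE, ← hne]
    change (2 ≤ a ∧ blockCount r a ≠ 0 ∧ blockCount r (a - 1) = 0) ↔ _
    tauto
  have mK3 : ∀ a, a ∈ K3 ↔ 2 ≤ a ∧ (∃ i, c.s i = a) ∧ ∀ j, c.s j ≠ a - 1 := by
    intro a
    rw [hK3, Finset.mem_filter, mE]
    have : blockCount r (a - 1) = 0 ↔ ∀ j, c.s j ≠ a - 1 := by
      rw [← not_iff_not, ← ne_eq, hne]; push Not; rfl
    rw [this]; tauto
  have hE0 : ((Dn ∪ Dl) ∪ W1).Nonempty := by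
    obtain ⟨x⟩ := ‹Nonempty X›
    exact ⟨c.s (c.pr x), (mE _).2 ⟨_, rfl⟩⟩
  have hE1 := Finset.card_pos.2 hE0
  have key := rank_core c (Dn ∪ Dl) ((Dn ∪ Dl) ∪ W1) (Dn ∪ W2) K3 hE0 mE mD mE' mK3 hS3
  rw [← hT, cD, cE', cE] at key
  rw [cE] at hE1
  rw [sK3, Set.ncard_coe_finset, setRank, key]
  have e1 : p + q + (p + gg t) = 2 * p + q + gg t := by omega
  rw [e1]
  generalize max 2 (2 * p + q + gg t) = M
  have hch : (p + q + 1).choose 2 = (p + q).choose 2 + (p + q) := by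
    rw [Nat.choose_succ_succ' (p + q) 1, Nat.choose_one_right, add_comm]
  unfold gg gg' hh at *
  by_cases h0 : t = 0
  · simp [h0] at *; omega
  · by_cases h1 : t = 1
    · simp [h1, hch] at *; omega
    · have h2 : 2 ≤ t := by omega
      have h3 : 1 ≤ t := by omega
      rw [if_pos h3, if_pos h2, if_neg h0, if_neg h1, hch]
      omega
end

section
/- Suppose |S(X,P)| ≥ 3. Then the rank of the group S(X,P) equals max{2, 2p+q+g(t)}. -/
open Function Set

/-- The group `S(X,P)` of permutations of `X` preserving the partition induced by
the equivalence relation `r`, as a subgroup of `Equiv.Perm X`. -/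
def SGrp {X : Type*} (r : Setoid X) : Subgroup (Equiv.Perm X) where
  carrier := {g | ∀ x y : X, r (g x) (g y) ↔ r x y}
  one_mem' := by intro x y; simp
  mul_mem' := by
    intro a b ha hb x y
    simp only [Equiv.Perm.mul_apply]
    rw [ha, hb]
  inv_mem' := by
    intro a ha x y
    have h := ha (a⁻¹ x) (a⁻¹ y)
    simpa using h.symm

/-- The rank of a group: the least cardinality of a generating subset. -/
noncomputable def grank (G : Type*) [Group G] : ℕ :=
  sInf {k | ∃ S : Set G, S.Finite ∧ S.ncard = k ∧ Subgroup.closure S = ⊤}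

namespace SXP

open Equiv

theorem grank_le {G : Type*} [Group G] (S : Set G) (hf : S.Finite)
    (h : Subgroup.closure S = ⊤) : grank G ≤ S.ncard :=
  Nat.sInf_le ⟨S, hf, rfl, h⟩

theorem le_grank {G : Type*} [Group G] [Finite G] (k : ℕ)
    (h : ∀ S : Set G, S.Finite → Subgroup.closure S = ⊤ → k ≤ S.ncard) : k ≤ grank G := by
  refine le_csInf ⟨_, Set.univ, Set.toFinite _, rfl, Subgroup.closure_univ⟩ ?_
  rintro _ ⟨S, hf, rfl, hS⟩
  exact h S hf hS

theorem grank_le_of_equiv {G H : Type*} [Group G] [Group H] [Finite G] [Finite H] (e : G ≃* H) :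
    grank H ≤ grank G := by
  refine le_grank _ fun S hf hS => ?_
  refine (grank_le (Set.image e.toMonoidHom S) (hf.image _) ?_).trans (Set.ncard_image_le hf)
  rw [← MonoidHom.map_closure, hS, ← MonoidHom.range_eq_map, MonoidHom.range_eq_top]
  exact e.surjective

theorem grank_congr {G H : Type*} [Group G] [Group H] [Finite G] [Finite H] (e : G ≃* H) :
    grank G = grank H :=
  le_antisymm (grank_le_of_equiv e.symm) (grank_le_of_equiv e)

/-- Splitting a commuting product of an involution and an element of odd order. -/
theorem split_mem {G : Type*} [Group G] {H : Subgroup G} {a b : G} (hc : Commute a b)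
    (ha : a ^ 2 = 1) (hb : Odd (orderOf b)) (h : a * b ∈ H) : a ∈ H ∧ b ∈ H := by
  have h1 : (a * b) ^ orderOf b = a := by
    rw [hc.mul_pow, pow_orderOf_eq_one, mul_one]
    obtain ⟨k, hk⟩ := hb
    rw [hk, pow_succ, pow_mul, ha, one_pow, one_mul]
  have ha' : a ∈ H := by
    rw [← h1]; exact H.pow_mem h _
  refine ⟨ha', ?_⟩
  have := H.mul_mem (H.inv_mem ha') h
  rwa [inv_mul_cancel_left] at this

/-- `S_n` is generated by a transposition and an element of odd order. -/
theorem perm_gen (n : ℕ) (hn : 2 ≤ n) : ∃ a b : Perm (Fin n), a.IsSwap ∧ Odd (orderOf b) ∧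
    Subgroup.closure {a, b} = ⊤ := by
  obtain ⟨k, rfl⟩ := Nat.exists_eq_add_of_le' hn
  set σ := finRotate (k + 2) with hσ
  have hcyc : σ.IsCycle := isCycle_finRotate
  have hsup : σ.support = Finset.univ := support_finRotate
  have hne : ∀ x, σ x ≠ x := fun x => by
    rw [← Perm.mem_support, hsup]; exact Finset.mem_univ x
  have hcl := Perm.closure_cycle_adjacent_swap hcyc hsup 0
  have hsw : (swap (0 : Fin (k + 2)) (σ 0)).IsSwap := ⟨0, σ 0, (hne 0).symm, rfl⟩
  rcases Nat.even_or_odd k with hk | hk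
  · refine ⟨swap 0 (σ 0), swap 0 (σ 0) * σ, hsw, ?_, ?_⟩
    · by_cases h2 : σ (σ 0) = 0
      · have : k = 0 := by
          by_contra hk0
          have h3 : (σ (σ 0)).val = 2 := by
            obtain ⟨j, rfl⟩ := Nat.exists_eq_succ_of_ne_zero hk0
            have e1 : σ 0 = ⟨1, by omega⟩ := finRotate_of_lt (n := j + 2) (k := 0) (by omega)
            have e2 : σ ⟨1, by omega⟩ = ⟨2, by omega⟩ :=
              finRotate_of_lt (n := j + 2) (k := 1) (by omega)
            rw [e1, e2]
          rw [h2] at h3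
          simp at h3
        subst this
        have : swap 0 (σ 0) * σ = 1 := by rw [hσ]; decide
        rw [this]; simp
      · rw [(hcyc.swap_mul (hne 0) h2).orderOf, Perm.support_swap_mul_eq _ _ h2, hsup,
          Finset.card_sdiff_of_subset (by simp)]
        simp
        exact hk.add_one
    · rw [eq_top_iff, ← hcl, Subgroup.closure_le]
      have ha : swap 0 (σ 0) ∈ Subgroup.closure {swap 0 (σ 0), swap 0 (σ 0) * σ} :=
        Subgroup.subset_closure (by simp)
      have hb : swap 0 (σ 0) * σ ∈ Subgroup.closure {swap 0 (σ 0), swap 0 (σ 0) * σ} :=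
        Subgroup.subset_closure (by simp)
      rintro x (rfl | rfl)
      · have := mul_mem (inv_mem ha) hb
        rwa [inv_mul_cancel_left] at this
      · exact ha
  · refine ⟨swap 0 (σ 0), σ, hsw, ?_, ?_⟩
    · rw [hcyc.orderOf, hsup]
      simp
      exact hk.add_even even_two
    · rw [Set.pair_comm]; exact hcl

theorem IsSwap.sq {α : Type*} [DecidableEq α] {a : Perm α} (h : a.IsSwap) : a ^ 2 = 1 := by
  obtain ⟨x, y, _, rfl⟩ := h
  rw [pow_two, swap_mul_self]

/-- A normal subgroup containing a transposition is everything. -/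
theorem top_of_normal {n : ℕ} {a b : Perm (Fin n)} (ha : a.IsSwap)
    (hg : Subgroup.closure {a, b} = ⊤) (L : Subgroup (Perm (Fin n))) (haL : a ∈ L)
    (hb : ∀ g ∈ L, b * g * b⁻¹ ∈ L) : L = ⊤ := by
  have hb' : b ∈ Subgroup.normalizer (L : Set (Perm (Fin n))) := by
    exact Subgroup.mem_normalizer_fintype hb
  have ha' : a ∈ Subgroup.normalizer (L : Set (Perm (Fin n))) := Subgroup.le_normalizer haL
  have hN : L.Normal := by
    rw [← Subgroup.normalizer_eq_top_iff, eq_top_iff, ← hg, Subgroup.closure_le]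
    rintro x (rfl | rfl) <;> assumption
  rw [eq_top_iff, ← Perm.closure_isSwap, Subgroup.closure_le]
  rintro g ⟨x, y, hxy, rfl⟩
  obtain ⟨u, v, huv, rfl⟩ := ha
  obtain ⟨c, hc⟩ := isConj_iff.1 (Perm.isConj_swap huv hxy)
  rw [← hc]
  exact hN.conj_mem _ haL c

end SXP
namespace SXP

open Equiv

/-- The wreath product `S_s wr S_m`. -/
abbrev Wr (m s : ℕ) : Type :=
  (Fin m → Perm (Fin s)) ⋊[(mulAutArrow : Perm (Fin m) →* MulAut (Fin m → Perm (Fin s)))]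
    Perm (Fin m)

instance (m s : ℕ) : Finite (Wr m s) := Finite.of_equiv _ SemidirectProduct.equivProd.symm

/-- Top group. -/
abbrev top (m s : ℕ) : Perm (Fin m) →* Wr m s := SemidirectProduct.inr

/-- Local copy at block `k`. -/
def loc (m s : ℕ) (k : Fin m) : Perm (Fin s) →* Wr m s :=
  SemidirectProduct.inl.comp (MonoidHom.mulSingle (fun _ => Perm (Fin s)) k)

/-- Diagonal copy. -/
def diag (m s : ℕ) : Perm (Fin s) →* Wr m s :=
  SemidirectProduct.inl.comp (Pi.constMonoidHom (Fin m) (Perm (Fin s)))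

theorem arrow_apply {m s : ℕ} (σ : Perm (Fin m)) (f : Fin m → Perm (Fin s)) (k : Fin m) :
    (mulAutArrow σ : MulAut (Fin m → Perm (Fin s))) f k = f (σ⁻¹ k) := rfl

theorem top_loc {m s : ℕ} (σ : Perm (Fin m)) (k : Fin m) (g : Perm (Fin s)) :
    top m s σ * loc m s k g = loc m s (σ k) g * top m s σ := by
  apply SemidirectProduct.ext
  · funext j
    by_cases h : j = σ k
    · subst h
      simp [loc]
      change (Pi.mulSingle k g : Fin m → Perm (Fin s)) (σ⁻¹ (σ k)) = g
      simp
    · have : σ⁻¹ j ≠ k := fun h' => h (by rw [← h']; simp)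
      simp [loc, Pi.mulSingle_eq_of_ne h]
      exact Pi.mulSingle_eq_of_ne this _
  · simp [loc]

theorem top_diag {m s : ℕ} (σ : Perm (Fin m)) (g : Perm (Fin s)) :
    Commute (top m s σ) (diag m s g) := by
  apply SemidirectProduct.ext
  · funext j
    simp [diag]
    rfl
  · simp [diag]

theorem diag_loc {m s : ℕ} (k : Fin m) (b g : Perm (Fin s)) :
    diag m s b * loc m s k g * (diag m s b)⁻¹ = loc m s k (b * g * b⁻¹) := by
  rw [mul_inv_eq_iff_eq_mul]
  simp only [diag, loc, MonoidHom.comp_apply, ← map_mul]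
  congr 1
  funext j
  by_cases h : j = k
  · subst h; simp
  · simp [Pi.mulSingle_eq_of_ne h]

/-- A subgroup containing the top group and one local copy is everything. -/
theorem wr_top_of {m s : ℕ} (H : Subgroup (Wr m s)) (k : Fin m) (h1 : ∀ σ, top m s σ ∈ H)
    (h2 : ∀ g, loc m s k g ∈ H) : H = ⊤ := by
  have h3 : ∀ j g, loc m s j g ∈ H := by
    intro j g
    have := top_loc (swap k j) k g
    rw [swap_apply_left, ← mul_inv_eq_iff_eq_mul] at this
    rw [← this]
    exact mul_mem (mul_mem (h1 _) (h2 _)) (inv_mem (h1 _))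
  rw [eq_top_iff]
  intro w _
  rw [← SemidirectProduct.inl_left_mul_inr_right w]
  refine mul_mem ?_ (h1 _)
  have : w.left ∈ H.comap SemidirectProduct.inl :=
    Subgroup.pi_mem_of_mulSingle_mem _ fun i => h3 i _
  exact this

theorem wr_top_of' {m s : ℕ} {a b : Perm (Fin s)} (ha : a.IsSwap)
    (hg : Subgroup.closure {a, b} = ⊤) (H : Subgroup (Wr m s)) (k : Fin m)
    (h1 : ∀ σ, top m s σ ∈ H)
    (h2 : loc m s k a ∈ H) (h3 : diag m s b ∈ H) : H = ⊤ := by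
  refine wr_top_of H k h1 fun g => ?_
  have := top_of_normal ha hg (H.comap (loc m s k)) h2 (fun g hgL => by
    rw [Subgroup.mem_comap, ← diag_loc]
    exact mul_mem (mul_mem h3 hgL) (inv_mem h3))
  rw [← Subgroup.mem_comap, this]
  trivial

theorem hom_gen {G H : Type*} [Group G] [Group H] (φ : G →* H) {a b : G}
    (hg : Subgroup.closure {a, b} = ⊤) (K : Subgroup H) (ha : φ a ∈ K) (hb : φ b ∈ K) (g : G) :
    φ g ∈ K := by
  rw [← Subgroup.mem_comap]
  have : K.comap φ = ⊤ := by
    rw [eq_top_iff, ← hg, Subgroup.closure_le]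
    rintro x (rfl | rfl) <;> assumption
  rw [this]; trivial

theorem odd_map {G H : Type*} [Group G] [Group H] (φ : G →* H) {b : G} (hb : Odd (orderOf b)) :
    Odd (orderOf (φ b)) := hb.of_dvd_nat (orderOf_map_dvd φ b)

/-- Case of both parameters at least two: three generators. -/
theorem wr_gen3 (m s : ℕ) (hm : 2 ≤ m) (hs : 2 ≤ s) : ∃ x a b : Wr m s,
    a ^ 2 = 1 ∧ Odd (orderOf b) ∧ Subgroup.closure {x, a, b} = ⊤ := by
  obtain ⟨a, b, ha, hb, hab⟩ := perm_gen s hs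
  obtain ⟨T, C, hT, hC, hTC⟩ := perm_gen m hm
  refine ⟨top m s T * diag m s b, loc m s ⟨0, by omega⟩ a, top m s C, ?_, odd_map _ hC, ?_⟩
  · rw [← map_pow, IsSwap.sq ha, map_one]
  · set H := Subgroup.closure
      {top m s T * diag m s b, loc m s ⟨0, by omega⟩ a, top m s C} with hH
    have hx : top m s T * diag m s b ∈ H := Subgroup.subset_closure (by simp)
    obtain ⟨h1, h2⟩ := split_mem (top_diag T b) (by rw [← map_pow, IsSwap.sq hT, map_one])
      (odd_map _ hb) hx
    refine wr_top_of' ha hab H ⟨0, by omega⟩ (hom_gen _ hTC H h1 ?_) ?_ h2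
    · exact Subgroup.subset_closure (by simp)
    · exact Subgroup.subset_closure (by simp)

/-- Case of both parameters at least two: two generators. -/
theorem wr_gen2 (m s : ℕ) (hm : 2 ≤ m) (hs : 2 ≤ s) : ∃ x y : Wr m s,
    Subgroup.closure {x, y} = ⊤ := by
  obtain ⟨a, b, ha, hb, hab⟩ := perm_gen s hs
  obtain ⟨n, rfl⟩ := Nat.exists_eq_add_of_le' hm
  rcases Nat.eq_zero_or_pos n with rfl | hn
  · refine ⟨top 2 s (swap 0 1) * diag 2 s b, loc 2 s 0 a, ?_⟩
    set H := Subgroup.closure {top 2 s (swap 0 1) * diag 2 s b, loc 2 s 0 a} with hH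
    have hx : top 2 s (swap 0 1) * diag 2 s b ∈ H := Subgroup.subset_closure (by simp)
    obtain ⟨h1, h2⟩ := split_mem (top_diag _ b) (by rw [← map_pow]; simp [sq])
      (odd_map _ hb) hx
    refine wr_top_of' ha hab H 0 ?_ ?_ h2
    · intro σ
      have : σ = 1 ∨ σ = swap 0 1 := by revert σ; decide
      rcases this with rfl | rfl
      · rw [map_one]; exact one_mem _
      · exact h1
    · exact Subgroup.subset_closure (by simp)
  · have hTsq : (swap (0 : Fin (n + 2)) 1) ^ 2 = 1 := by simp [sq]
    refine ⟨top (n + 2) s (swap 0 1) * diag (n + 2) s b,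
      top (n + 2) s (finRotate (n + 2)) * loc (n + 2) s (Fin.last _) a, ?_⟩
    set H := Subgroup.closure {top (n + 2) s (swap 0 1) * diag (n + 2) s b,
      top (n + 2) s (finRotate (n + 2)) * loc (n + 2) s (Fin.last _) a} with hH
    have hx : top (n + 2) s (swap 0 1) * diag (n + 2) s b ∈ H :=
      Subgroup.subset_closure (by simp)
    have hy : top (n + 2) s (finRotate (n + 2)) * loc (n + 2) s (Fin.last _) a ∈ H :=
      Subgroup.subset_closure (by simp)
    obtain ⟨h1, h2⟩ := split_mem (top_diag _ b) (by rw [← map_pow, hTsq, map_one])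
      (odd_map _ hb) hx
    have key : ∀ i : ℕ, ∀ hi : i < n + 1,
        top (n + 2) s (swap ⟨i, by omega⟩ ⟨i + 1, by omega⟩) ∈ H := by
      intro i
      induction i with
      | zero => intro _; exact h1
      | succ i ih =>
        intro hi
        have h3 := ih (by omega)
        have e1 : finRotate (n + 2) ⟨i, by omega⟩ = ⟨i + 1, by omega⟩ :=
          finRotate_of_lt (n := n + 1) (by omega)
        have e2 : finRotate (n + 2) ⟨i + 1, by omega⟩ = ⟨i + 1 + 1, by omega⟩ :=
          finRotate_of_lt (n := n + 1) (by omega)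
        have h4 := mul_mem (mul_mem hy h3) (inv_mem hy)
        have h5 := top_loc (s := s) (swap (⟨i, by omega⟩ : Fin (n + 2)) ⟨i + 1, by omega⟩)
          (Fin.last (n + 1)) a
        rw [swap_apply_of_ne_of_ne (by simp [Fin.ext_iff]; omega)
          (by simp [Fin.ext_iff]; omega)] at h5
        rw [mul_assoc (top _ _ _), ← h5, mul_inv_rev] at h4
        have h6 := swap_apply_apply (finRotate (n + 2)) ⟨i, by omega⟩ ⟨i + 1, by omega⟩
        rw [e1, e2] at h6
        rw [h6, map_mul, map_mul, map_inv]
        convert h4 using 1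
        group
    have htop : ∀ σ, top (n + 2) s σ ∈ H := by
      intro σ
      have h7 : (Submonoid.closure
          (Set.range fun i : Fin (n + 1) => swap i.castSucc i.succ)) ≤
          (H.comap (top (n + 2) s)).toSubmonoid := by
        rw [Submonoid.closure_le]
        rintro _ ⟨i, rfl⟩
        exact key i i.2
      rw [Perm.mclosure_swap_castSucc_succ] at h7
      exact h7 (Submonoid.mem_top σ)
    refine wr_top_of' ha hab H (Fin.last _) htop ?_ h2
    have := mul_mem (inv_mem (htop (finRotate (n + 2)))) hy
    rwa [inv_mul_cancel_left] at this

/-- Case of exactly one parameter at least two. -/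
theorem wr_gen1 (m s : ℕ) (h : (2 ≤ m ∧ s = 1) ∨ (m = 1 ∧ 2 ≤ s)) : ∃ a b : Wr m s,
    a ^ 2 = 1 ∧ Odd (orderOf b) ∧ Subgroup.closure {a, b} = ⊤ := by
  rcases h with ⟨hm, rfl⟩ | ⟨rfl, hs⟩
  · obtain ⟨T, C, hT, hC, hTC⟩ := perm_gen m hm
    refine ⟨top m 1 T, top m 1 C, ?_, odd_map _ hC, ?_⟩
    · rw [← map_pow, IsSwap.sq hT, map_one]
    · refine wr_top_of _ ⟨0, by omega⟩ (hom_gen _ hTC _ ?_ ?_) ?_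
      · exact Subgroup.subset_closure (by simp)
      · exact Subgroup.subset_closure (by simp)
      · intro g
        rw [Subsingleton.elim g 1, map_one]; exact one_mem _
  · obtain ⟨T, C, hT, hC, hTC⟩ := perm_gen s hs
    refine ⟨loc 1 s 0 T, loc 1 s 0 C, ?_, odd_map _ hC, ?_⟩
    · rw [← map_pow, IsSwap.sq hT, map_one]
    · refine wr_top_of _ 0 ?_ (hom_gen _ hTC _ ?_ ?_)
      · intro g
        rw [Subsingleton.elim g 1, map_one]; exact one_mem _
      · exact Subgroup.subset_closure (by simp)
      · exact Subgroup.subset_closure (by simp)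

theorem wr_trivial : Subsingleton (Wr 1 1) :=
  ⟨fun _ _ => SemidirectProduct.ext (Subsingleton.elim _ _) (Subsingleton.elim _ _)⟩

end SXP
namespace SXP

open Equiv

theorem gg_of_le {k : ℕ} (h : 2 ≤ k) : gg k = 1 := if_pos h

theorem gg_of_not {k : ℕ} (h : ¬ 2 ≤ k) : gg k = 0 := if_neg h

theorem wr_trivial' {m s : ℕ} (hm : m = 1) (hs : s = 1) : Subsingleton (Wr m s) := by
  subst hm; subst hs; exact wr_trivial

theorem wr_data (m s : ℕ) (hm : 1 ≤ m) (hs : 1 ≤ s) : ∃ x a b : Wr m s,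
    a ^ 2 = 1 ∧ Odd (orderOf b) ∧ Subgroup.closure {x, a, b} = ⊤ ∧
      (¬ (2 ≤ m ∧ 2 ≤ s) → x = 1) := by
  by_cases h : 2 ≤ m ∧ 2 ≤ s
  · obtain ⟨x, a, b, h1, h2, h3⟩ := wr_gen3 m s h.1 h.2
    exact ⟨x, a, b, h1, h2, h3, fun h' => absurd h h'⟩
  · by_cases h' : m = 1 ∧ s = 1
    · have := wr_trivial' h'.1 h'.2
      exact ⟨1, 1, 1, one_pow _, by simp, Subsingleton.elim _ _, fun _ => rfl⟩
    · obtain ⟨a, b, h1, h2, h3⟩ := wr_gen1 m s (by omega)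
      refine ⟨1, a, b, h1, h2, ?_, fun _ => rfl⟩
      rw [eq_top_iff, ← h3]
      exact Subgroup.closure_mono (by simp)

theorem wr_data2 (m s : ℕ) (hm : 1 ≤ m) (hs : 1 ≤ s) : ∃ x y : Wr m s,
    Subgroup.closure {x, y} = ⊤ := by
  by_cases h : 2 ≤ m ∧ 2 ≤ s
  · exact wr_gen2 m s h.1 h.2
  · by_cases h' : m = 1 ∧ s = 1
    · have := wr_trivial' h'.1 h'.2
      exact ⟨1, 1, Subsingleton.elim _ _⟩
    · obtain ⟨a, b, h1, h2, h3⟩ := wr_gen1 m s (by omega)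
      exact ⟨a, b, h3⟩

theorem exists_rot (α : Type*) [Fintype α] (h : 2 ≤ Fintype.card α) :
    ∃ f : α → α, Function.Surjective f ∧ ∀ a, f a ≠ a := by
  obtain ⟨k, hk⟩ := Nat.exists_eq_add_of_le' h
  let e : α ≃ Fin (k + 2) := Fintype.equivFinOfCardEq hk
  refine ⟨fun a => e.symm (finRotate (k + 2) (e a)),
    (e.trans ((finRotate (k + 2)).trans e.symm)).surjective, fun a ha => ?_⟩
  have h1 : finRotate (k + 2) (e a) = e a := by
    rw [← e.symm_apply_eq.1 ha.symm.symm]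
    simpa using congrArg e ha
  have : e a ∈ (finRotate (k + 2)).support := by rw [support_finRotate]; simp
  exact Perm.mem_support.1 this h1

section Prod

theorem card_sum {I : Type*} [Fintype I] (m s : I → ℕ) : (∑ i, (gg (m i) + gg (s i))) =
    Fintype.card {i // 2 ≤ m i ∧ 2 ≤ s i} + Fintype.card {i // 2 ≤ m i ∨ 2 ≤ s i} := by
  rw [Fintype.card_subtype, Fintype.card_subtype, Finset.card_filter, Finset.card_filter,
    ← Finset.sum_add_distrib]
  refine Finset.sum_congr rfl fun i _ => ?_
  unfold gg
  by_cases h1 : 2 ≤ m i <;> by_cases h2 : 2 ≤ s i <;> simp [h1, h2]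

theorem upper_many {I : Type*} [Fintype I] [DecidableEq I] (m s : I → ℕ)
    (hm : ∀ i, 1 ≤ m i) (hs : ∀ i, 1 ≤ s i)
    (h : 2 ≤ Fintype.card {i // 2 ≤ m i ∨ 2 ≤ s i}) :
    grank (∀ i, Wr (m i) (s i)) ≤ ∑ i, (gg (m i) + gg (s i)) := by
  choose x a b ha hb hg hx using fun i => wr_data (m i) (s i) (hm i) (hs i)
  obtain ⟨f, hf, hne⟩ := exists_rot _ h
  let M : ∀ i, Wr (m i) (s i) →* (∀ i, Wr (m i) (s i)) := fun i =>
    MonoidHom.mulSingle (fun i => Wr (m i) (s i)) i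
  let S1 : Set (∀ i, Wr (m i) (s i)) :=
    Set.range fun i : {i // 2 ≤ m i ∧ 2 ≤ s i} => M i.1 (x i.1)
  let S2 : Set (∀ i, Wr (m i) (s i)) :=
    Set.range fun i : {i // 2 ≤ m i ∨ 2 ≤ s i} => M i.1 (a i.1) * M (f i).1 (b (f i).1)
  have hcard : (S1 ∪ S2).ncard ≤ ∑ i, (gg (m i) + gg (s i)) := by
    rw [card_sum]
    refine (Set.ncard_union_le _ _).trans (add_le_add ?_ ?_)
    · rw [← Nat.card_eq_fintype_card, ← Set.ncard_univ]
      change (Set.range _).ncard ≤ _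
      rw [← Set.image_univ]
      exact Set.ncard_image_le
    · rw [← Nat.card_eq_fintype_card, ← Set.ncard_univ]
      change (Set.range _).ncard ≤ _
      rw [← Set.image_univ]
      exact Set.ncard_image_le
  refine (grank_le (S1 ∪ S2) (Set.toFinite _) ?_).trans hcard
  set H := Subgroup.closure (S1 ∪ S2) with hH
  have hsplit : ∀ i : {i // 2 ≤ m i ∨ 2 ≤ s i}, M i.1 (a i.1) ∈ H ∧ M (f i).1 (b (f i).1) ∈ H := by
    intro i
    refine split_mem ?_ ?_ (odd_map _ (hb _)) (Subgroup.subset_closure (Or.inr ⟨i, rfl⟩))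
    · exact Pi.mulSingle_commute (fun h' => hne i (Subtype.ext h'.symm)) _ _
    · rw [← map_pow, ha, map_one]
  rw [eq_top_iff]
  intro w _
  refine Subgroup.pi_mem_of_mulSingle_mem _ fun i => ?_
  change M i (w i) ∈ H
  by_cases hi : 2 ≤ m i ∨ 2 ≤ s i
  · have : H.comap (M i) = ⊤ := by
      rw [eq_top_iff, ← hg i, Subgroup.closure_le]
      rintro y (rfl | rfl | rfl)
      · by_cases hi2 : 2 ≤ m i ∧ 2 ≤ s i
        · exact Subgroup.subset_closure (Or.inl ⟨⟨i, hi2⟩, rfl⟩)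
        · rw [hx i hi2]; exact one_mem _
      · exact (hsplit ⟨i, hi⟩).1
      · obtain ⟨j, hj⟩ := hf ⟨i, hi⟩
        have := (hsplit j).2
        rw [hj] at this
        exact this
    rw [← Subgroup.mem_comap, this]
    trivial
  · have := hm i
    have := hs i
    have := wr_trivial' (m := m i) (s := s i) (by omega) (by omega)
    rw [Subsingleton.elim (w i) 1, map_one]
    exact one_mem _

theorem upper_few {I : Type*} [Fintype I] [DecidableEq I] (m s : I → ℕ)
    (hm : ∀ i, 1 ≤ m i) (hs : ∀ i, 1 ≤ s i)
    (h : Fintype.card {i // 2 ≤ m i ∨ 2 ≤ s i} ≤ 1)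
    (h3 : 3 ≤ Nat.card (∀ i, Wr (m i) (s i))) :
    grank (∀ i, Wr (m i) (s i)) ≤ 2 := by
  have htriv : ∀ i, ¬ (2 ≤ m i ∨ 2 ≤ s i) → Subsingleton (Wr (m i) (s i)) := fun i hi => by
    have := hm i
    have := hs i
    exact wr_trivial' (m := m i) (s := s i) (by omega) (by omega)
  have hex : ∃ i, 2 ≤ m i ∨ 2 ≤ s i := by
    by_contra hcon
    push Not at hcon
    have : Subsingleton (∀ i, Wr (m i) (s i)) :=
      @Pi.instSubsingleton _ _ fun i => htriv i (by have := hcon i; omega)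
    have := Finite.card_le_one_iff_subsingleton.2 this
    omega
  obtain ⟨i0, hi0⟩ := hex
  obtain ⟨x, y, hxy⟩ := wr_data2 (m i0) (s i0) (hm _) (hs _)
  let M : ∀ i, Wr (m i) (s i) →* (∀ i, Wr (m i) (s i)) := fun i =>
    MonoidHom.mulSingle (fun i => Wr (m i) (s i)) i
  refine (grank_le {M i0 x, M i0 y} (Set.toFinite _) ?_).trans ((Set.ncard_insert_le _ _).trans (by simp))
  rw [eq_top_iff]
  intro w _
  refine Subgroup.pi_mem_of_mulSingle_mem _ fun i => ?_
  change M i (w i) ∈ _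
  by_cases hi : 2 ≤ m i ∨ 2 ≤ s i
  · have : i = i0 := by
      have := Fintype.card_le_one_iff.1 h ⟨i, hi⟩ ⟨i0, hi0⟩
      exact congrArg Subtype.val this
    subst this
    exact hom_gen _ hxy _ (Subgroup.subset_closure (by simp)) (Subgroup.subset_closure (by simp)) _
  · have := htriv i hi
    rw [Subsingleton.elim (w i) 1, map_one]
    exact one_mem _

/-- Independent sign characters bound the number of generators from below. -/
theorem lower_char {G J : Type*} [Group G] [Fintype J] [DecidableEq J] (φ : J → G →* ℤˣ) (g : J → G)
    (h1 : ∀ j, φ j (g j) = -1) (h2 : ∀ j k, k ≠ j → φ k (g j) = 1)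
    (S : Set G) (hf : S.Finite) (hS : Subgroup.closure S = ⊤) : Fintype.card J ≤ S.ncard := by
  have := hf.fintype
  classical
  let χ : Finset J → G →* ℤˣ := fun A => ∏ j ∈ A, φ j
  have hχ : ∀ A j, χ A (g j) = if j ∈ A then -1 else 1 := by
    intro A j
    simp only [χ, MonoidHom.finsetProd_apply]
    split_ifs with hj
    · rw [Finset.prod_eq_single_of_mem j hj (fun k _ hk => h2 j k hk), h1]
    · exact Finset.prod_eq_one fun k hk => h2 j k (fun h => hj (h ▸ hk))
  let F : Finset J → (S → ℤˣ) := fun A x => χ A x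
  have hF : Function.Injective F := by
    intro A B hAB
    have : χ A = χ B := by
      refine MonoidHom.eq_of_eqOn_dense hS ?_
      intro x hx
      exact congrFun hAB ⟨x, hx⟩
    ext j
    have h3 := DFunLike.congr_fun this (g j)
    rw [hχ, hχ] at h3
    by_cases hA : j ∈ A <;> by_cases hB : j ∈ B <;> simp_all
  have h4 := Fintype.card_le_of_injective F hF
  rw [Fintype.card_finset, Fintype.card_fun, Fintype.card_units_int] at h4
  have h5 := (Nat.pow_le_pow_iff_right (by norm_num)).1 h4
  rwa [← Nat.card_eq_fintype_card (α := S), Nat.card_coe_set_eq] at h5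

/-- Product of the local signs. -/
def baseSign (m s : ℕ) : Wr m s →* ℤˣ where
  toFun w := ∏ k, Perm.sign (w.left k)
  map_one' := by simp
  map_mul' w v := by
    simp only [SemidirectProduct.mul_left, Pi.mul_apply, map_mul, Finset.prod_mul_distrib]
    congr 1
    simp only [arrow_apply]
    exact Equiv.prod_comp (w.right⁻¹) fun k => Perm.sign (v.left k)

theorem baseSign_loc (m s : ℕ) (k : Fin m) (g : Perm (Fin s)) :
    baseSign m s (loc m s k g) = Perm.sign g := by
  change ∏ j, Perm.sign ((Pi.mulSingle k g : Fin m → Perm (Fin s)) j) = _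
  rw [Finset.prod_eq_single k]
  · simp
  · intro j _ hj
    rw [Pi.mulSingle_eq_of_ne hj, map_one]
  · simp

theorem baseSign_top (m s : ℕ) (g : Perm (Fin m)) : baseSign m s (top m s g) = 1 := by
  simp [baseSign]

/-- Sign of the permutation of the blocks. -/
def topSign (m s : ℕ) : Wr m s →* ℤˣ := Perm.sign.comp SemidirectProduct.rightHom

theorem topSign_loc (m s : ℕ) (k : Fin m) (g : Perm (Fin s)) :
    topSign m s (loc m s k g) = 1 := by
  simp [topSign, loc]

theorem topSign_top (m s : ℕ) (g : Perm (Fin m)) : topSign m s (top m s g) = Perm.sign g := by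
  simp [topSign]

theorem exists_neg (k : ℕ) (h : 2 ≤ k) : ∃ g : Perm (Fin k), Perm.sign g = -1 := by
  obtain ⟨a, _, ha, _⟩ := perm_gen k h
  exact ⟨a, ha.sign_eq⟩

theorem lower_sum {I : Type*} [Fintype I] [DecidableEq I] (m s : I → ℕ)
    (hm : ∀ i, 1 ≤ m i)
    (S : Set (∀ i, Wr (m i) (s i))) (hf : S.Finite) (hS : Subgroup.closure S = ⊤) :
    ∑ i, (gg (m i) + gg (s i)) ≤ S.ncard := by
  let J := {i // 2 ≤ m i} ⊕ {i // 2 ≤ s i}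
  have hJ : Fintype.card J = ∑ i, (gg (m i) + gg (s i)) := by
    rw [Fintype.card_sum, Fintype.card_subtype, Fintype.card_subtype, Finset.card_filter,
      Finset.card_filter, ← Finset.sum_add_distrib]
    rfl
  rw [← hJ]
  choose u hu using fun i : {i // 2 ≤ m i} => exists_neg (m i.1) i.2
  choose v hv using fun i : {i // 2 ≤ s i} => exists_neg (s i.1) i.2
  let ev : ∀ i, (∀ i, Wr (m i) (s i)) →* Wr (m i) (s i) := fun i => Pi.evalMonoidHom _ i
  let φ : J → (∀ i, Wr (m i) (s i)) →* ℤˣ :=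
    Sum.elim (fun i => (topSign _ _).comp (ev i.1)) (fun i => (baseSign _ _).comp (ev i.1))
  let g : J → (∀ i, Wr (m i) (s i)) :=
    Sum.elim (fun i => Pi.mulSingle i.1 (top _ _ (u i)))
      (fun i => Pi.mulSingle i.1 (loc _ _ ⟨0, hm i.1⟩ (v i)))
  refine lower_char φ g ?_ ?_ S hf hS
  · rintro (i | i)
    · simp [φ, g, ev, topSign_top, hu]
    · simp [φ, g, ev, baseSign_loc, hv]
  · rintro (i | i) (k | k) hk
    · have : k.1 ≠ i.1 := fun h => hk (by rw [Subtype.ext h])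
      simp [φ, g, ev, Pi.mulSingle_eq_of_ne this]
    · by_cases h : k.1 = i.1
      · obtain ⟨k, hk⟩ := k
        obtain ⟨i, hi⟩ := i
        simp only at h
        subst h
        simp [φ, g, ev, baseSign_top]
      · simp [φ, g, ev, Pi.mulSingle_eq_of_ne h]
    · by_cases h : k.1 = i.1
      · obtain ⟨k, hk⟩ := k
        obtain ⟨i, hi⟩ := i
        simp only at h
        subst h
        simp [φ, g, ev, topSign_loc]
      · simp [φ, g, ev, Pi.mulSingle_eq_of_ne h]
    · have : k.1 ≠ i.1 := fun h => hk (by rw [Subtype.ext h])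
      simp [φ, g, ev, Pi.mulSingle_eq_of_ne this]

theorem perm_noncomm (k : ℕ) (h : 3 ≤ k) : ∃ g h : Perm (Fin k), g * h ≠ h * g := by
  obtain ⟨n, rfl⟩ := Nat.exists_eq_add_of_le' h
  refine ⟨swap 0 1, swap 1 2, fun hc => ?_⟩
  have := congrArg (fun σ : Perm (Fin (n + 3)) => (σ 2).val) hc
  have e02 : (2 : Fin (n + 3)) ≠ 0 := by
    simp [Fin.ext_iff, Nat.mod_eq_of_lt (show 2 < n + 3 by omega)]
  have e12 : (2 : Fin (n + 3)) ≠ 1 := by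
    simp [Fin.ext_iff, Nat.mod_eq_of_lt (show 2 < n + 3 by omega)]
  simp only [Perm.mul_apply, swap_apply_right, swap_apply_of_ne_of_ne e02 e12] at this
  simp at this

theorem card_wr_le (m s : ℕ) (h1 : 1 ≤ m) (h2 : m ≤ 2) (h3 : 1 ≤ s) (h4 : s ≤ 2)
    (h : gg m + gg s ≤ 1) :
    Nat.card (Wr m s) ≤ 2 ^ (gg m + gg s) := by
  rw [SemidirectProduct.card]
  interval_cases m <;> interval_cases s <;> simp_all [gg, Nat.card_eq_fintype_card, Fintype.card_perm]

theorem lower_two {I : Type*} [Fintype I] [DecidableEq I] (m s : I → ℕ)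
    (hm : ∀ i, 1 ≤ m i) (hs : ∀ i, 1 ≤ s i)
    (h3 : 3 ≤ Nat.card (∀ i, Wr (m i) (s i)))
    (S : Set (∀ i, Wr (m i) (s i))) (hf : S.Finite) (hS : Subgroup.closure S = ⊤) :
    2 ≤ S.ncard := by
  by_contra hcon
  have hN := (lower_sum m s hm S hf hS).trans (show S.ncard ≤ 1 by omega)
  have hcomm : ∀ x y : (∀ i, Wr (m i) (s i)), x * y = y * x := by
    have hsub : ∃ z, S ⊆ {z} := (Set.ncard_le_one_iff_subset_singleton hf).1 (by omega)
    obtain ⟨z, hz⟩ := hsub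
    have hz' : Subgroup.zpowers z = ⊤ := by
      rw [eq_top_iff, ← hS, Subgroup.zpowers_eq_closure]
      exact Subgroup.closure_mono hz
    intro x y
    obtain ⟨k, rfl⟩ := Subgroup.mem_zpowers_iff.1 (hz' ▸ Subgroup.mem_top x)
    obtain ⟨l, rfl⟩ := Subgroup.mem_zpowers_iff.1 (hz' ▸ Subgroup.mem_top y)
    exact (Commute.zpow_zpow_self z k l)
  have hcomm' : ∀ i, ∀ x y : Wr (m i) (s i), x * y = y * x := by
    intro i x y
    have := hcomm (Pi.mulSingle i x) (Pi.mulSingle i y)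
    rw [← Pi.mulSingle_mul, ← Pi.mulSingle_mul] at this
    exact Pi.mulSingle_injective (M := fun i => Wr (m i) (s i)) i this
  have hm' : ∀ i, m i ≤ 2 := by
    intro i
    by_contra h
    obtain ⟨g, h, hgh⟩ := perm_noncomm (m i) (by omega)
    have := hcomm' i (top _ _ g) (top _ _ h)
    rw [← map_mul, ← map_mul] at this
    exact hgh (SemidirectProduct.inr_injective this)
  have hs' : ∀ i, s i ≤ 2 := by
    intro i
    by_contra h
    obtain ⟨g, h, hgh⟩ := perm_noncomm (s i) (by omega)
    have := hcomm' i (loc _ _ ⟨0, hm i⟩ g) (loc _ _ ⟨0, hm i⟩ h)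
    rw [← map_mul, ← map_mul] at this
    exact hgh (Pi.mulSingle_injective (M := fun _ => Perm (Fin (s i))) (⟨0, hm i⟩ : Fin (m i))
      (SemidirectProduct.inl_injective this))
  have hle : Nat.card (∀ i, Wr (m i) (s i)) ≤ 2 := by
    rw [Nat.card_pi]
    calc ∏ i, Nat.card (Wr (m i) (s i)) ≤ ∏ i, 2 ^ (gg (m i) + gg (s i)) := by
          refine Finset.prod_le_prod' fun i _ =>
            card_wr_le _ _ (hm i) (hm' i) (hs i) (hs' i) ?_
          exact (Finset.single_le_sum (f := fun i => gg (m i) + gg (s i))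
            (fun _ _ => Nat.zero_le _) (Finset.mem_univ i)).trans hN
      _ = 2 ^ ∑ i, (gg (m i) + gg (s i)) := by rw [Finset.prod_pow_eq_pow_sum]
      _ ≤ 2 ^ 1 := Nat.pow_le_pow_right (by norm_num) hN
  omega

theorem prod_rank {I : Type*} [Fintype I] [DecidableEq I] (m s : I → ℕ)
    (hm : ∀ i, 1 ≤ m i) (hs : ∀ i, 1 ≤ s i)
    (h3 : 3 ≤ Nat.card (∀ i, Wr (m i) (s i))) :
    grank (∀ i, Wr (m i) (s i)) = max 2 (∑ i, (gg (m i) + gg (s i))) := by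
  apply le_antisymm
  · by_cases h : 2 ≤ Fintype.card {i // 2 ≤ m i ∨ 2 ≤ s i}
    · exact (upper_many m s hm hs h).trans (le_max_right _ _)
    · exact (upper_few m s hm hs (by omega) h3).trans (le_max_left _ _)
  · exact max_le (le_grank _ fun S hf hS => lower_two m s hm hs h3 S hf hS)
      (le_grank _ fun S hf hS => lower_sum m s hm S hf hS)

end Prod

end SXP
namespace SXP

open Equiv

/-- The imprimitive action of the wreath product. -/
def wrAct (m s : ℕ) : Wr m s →* Perm (Fin m × Fin s) :=
  MonoidHom.mk' (fun w =>
    { toFun := fun z => (w.right z.1, w.left (w.right z.1) z.2)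
      invFun := fun z => (w.right⁻¹ z.1, (w.left z.1)⁻¹ z.2)
      left_inv := fun z => by simp
      right_inv := fun z => by simp })
    (fun w v => by
      ext z
      · simp
      · have : (mulAutArrow w.right : MulAut (Fin m → Perm (Fin s))) v.left
            (w.right (v.right z.1)) = v.left (v.right z.1) := by
          rw [arrow_apply]; simp
        simp only [SemidirectProduct.mul_left, SemidirectProduct.mul_right, Perm.mul_apply,
          Pi.mul_apply, Equiv.coe_fn_mk, this])

theorem wrAct_apply (m s : ℕ) (w : Wr m s) (z : Fin m × Fin s) :
    wrAct m s w z = (w.right z.1, w.left (w.right z.1) z.2) := rfl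

theorem wrAct_injective (m s : ℕ) (hs : 1 ≤ s) : Function.Injective (wrAct m s) := by
  intro w v h
  have h1 : w.right = v.right := by
    ext k
    have := congrArg (fun σ : Perm (Fin m × Fin s) => (σ (k, ⟨0, hs⟩)).1.val) h
    exact this
  refine SemidirectProduct.ext ?_ h1
  funext k
  apply Equiv.ext
  intro y
  have := congrArg (fun σ : Perm (Fin m × Fin s) => (σ (w.right⁻¹ k, y)).2) h
  have e : w.right (w.right⁻¹ k) = k := by simp
  simp only [wrAct_apply, ← h1, e] at this
  exact this

theorem wrAct_mem_range (m s : ℕ) (hs : 1 ≤ s) (P : Perm (Fin m × Fin s))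
    (hP : ∀ z z', (P z).1 = (P z').1 ↔ z.1 = z'.1) : ∃ w, wrAct m s w = P := by
  let z0 : Fin s := ⟨0, hs⟩
  have hσ : Function.Bijective fun k => (P (k, z0)).1 :=
    Finite.injective_iff_bijective.1 fun k k' h => (hP (k, z0) (k', z0)).1 h
  have hF : ∀ k, Function.Bijective fun y => (P (k, y)).2 := fun k =>
    Finite.injective_iff_bijective.1 fun y y' h => by
      have h1 : (P (k, y)).1 = (P (k, y')).1 := (hP _ _).2 rfl
      have := P.injective (Prod.ext h1 h)
      exact congrArg Prod.snd this
  let σ : Perm (Fin m) := Equiv.ofBijective _ hσ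
  let f : Fin m → Perm (Fin s) := fun k => Equiv.ofBijective _ (hF (σ⁻¹ k))
  refine ⟨⟨f, σ⟩, ?_⟩
  apply Equiv.ext
  rintro ⟨k, y⟩
  rw [wrAct_apply]
  refine Prod.ext ?_ ?_
  · exact (hP (k, z0) (k, y)).2 rfl
  · change (P (σ⁻¹ (σ k), y)).2 = _
    have e : σ⁻¹ (σ k) = k := by simp
    rw [e]

section Model

variable {I : Type*} (m s : I → ℕ)

/-- The model set. -/
abbrev Mod : Type _ := Σ i, Fin (m i) × Fin (s i)

/-- The block of a point. -/
def blk (a : Mod m s) : Σ i, Fin (m i) := ⟨a.1, a.2.1⟩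

/-- The action of the product on the model. -/
def modAct : (∀ i, Wr (m i) (s i)) →* Perm (Mod m s) :=
  (Perm.sigmaCongrRightHom fun i => Fin (m i) × Fin (s i)).comp
    (MonoidHom.pi fun i => (wrAct (m i) (s i)).comp (Pi.evalMonoidHom (fun i => Wr (m i) (s i)) i))

theorem modAct_apply (w : ∀ i, Wr (m i) (s i)) (i : I) (z : Fin (m i) × Fin (s i)) :
    modAct m s w ⟨i, z⟩ = ⟨i, wrAct _ _ (w i) z⟩ := rfl

theorem modAct_injective (hs : ∀ i, 1 ≤ s i) : Function.Injective (modAct m s) := by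
  intro w v h
  have h1 := Perm.sigmaCongrRightHom_injective h
  funext i
  exact wrAct_injective _ _ (hs i) (congrFun h1 i)

theorem card_blk (b : Σ i, Fin (m i)) : Nat.card {c : Mod m s // blk m s c = b} = s b.1 := by
  obtain ⟨i, k⟩ := b
  have e : Fin (s i) ≃ {c : Mod m s // blk m s c = ⟨i, k⟩} := by
    refine Equiv.ofBijective (fun y => ⟨⟨i, k, y⟩, rfl⟩) ⟨?_, ?_⟩
    · intro y y' h
      have h1 := Subtype.ext_iff.1 h
      simpa using h1
    · rintro ⟨⟨i', k', y'⟩, h⟩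
      simp only [blk] at h
      cases h
      exact ⟨y', rfl⟩
  rw [← Nat.card_congr e]
  simp

theorem modAct_range (hs : ∀ i, 1 ≤ s i) (hinj : Function.Injective s) (h : Perm (Mod m s)) :
    (∃ w, modAct m s w = h) ↔
      ∀ a b, blk m s (h a) = blk m s (h b) ↔ blk m s a = blk m s b := by
  constructor
  · rintro ⟨w, rfl⟩ ⟨i, k, y⟩ ⟨i', k', y'⟩
    simp only [modAct_apply, blk, wrAct_apply]
    constructor
    · intro h
      have hi : i = i' := congrArg Sigma.fst h
      subst hi
      simpa using h
    · intro h
      have hi : i = i' := congrArg Sigma.fst h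
      subst hi
      simpa using h
  · intro hh
    have hfst : ∀ a, (h a).1 = a.1 := by
      intro a
      apply hinj
      have e1 := card_blk m s (blk m s a)
      have e2 := card_blk m s (blk m s (h a))
      have e : {c : Mod m s // blk m s c = blk m s a} ≃
          {c : Mod m s // blk m s c = blk m s (h a)} :=
        h.subtypeEquiv fun c => (hh c a).symm
      rw [Nat.card_congr e, e2] at e1
      exact e1
    have hex : ∀ i (z : Fin (m i) × Fin (s i)), ∃ z' : Fin (m i) × Fin (s i),
        h ⟨i, z⟩ = ⟨i, z'⟩ := by
      intro i z
      have h1 := hfst ⟨i, z⟩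
      generalize h ⟨i, z⟩ = a at h1
      obtain ⟨i', z'⟩ := a
      simp only at h1
      subst h1
      exact ⟨z', rfl⟩
    choose H hH using hex
    have hHinj : ∀ i, Function.Bijective (H i) := fun i =>
      Finite.injective_iff_bijective.1 fun z z' hz => by
        have : h ⟨i, z⟩ = h ⟨i, z'⟩ := by rw [hH, hH, hz]
        simpa using h.injective this
    have hw : ∀ i, ∃ w, wrAct (m i) (s i) w = Equiv.ofBijective _ (hHinj i) := by
      intro i
      refine wrAct_mem_range _ _ (hs i) _ fun z z' => ?_
      have := hh ⟨i, z⟩ ⟨i, z'⟩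
      rw [hH, hH] at this
      simpa [blk] using this
    choose w hw using hw
    refine ⟨w, Equiv.ext ?_⟩
    rintro ⟨i, z⟩
    rw [modAct_apply, hw, hH]
    rfl

/-- The group of the partition is a product of wreath products. -/
theorem exists_mulEquiv {X : Type*} (r : Setoid X) (hs : ∀ i, 1 ≤ s i)
    (hinj : Function.Injective s) (Ψ : Mod m s ≃ X)
    (hΨ : ∀ a b, r (Ψ a) (Ψ b) ↔ blk m s a = blk m s b) :
    Nonempty ((∀ i, Wr (m i) (s i)) ≃* SGrp r) := by
  let F : (∀ i, Wr (m i) (s i)) →* Perm X := Ψ.permCongrHom.toMonoidHom.comp (modAct m s)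
  have hF : Function.Injective F := Ψ.permCongrHom.injective.comp (modAct_injective m s hs)
  have hr : F.range = SGrp r := by
    ext g
    obtain ⟨h, rfl⟩ := Ψ.permCongrHom.surjective g
    have h1 : Ψ.permCongrHom h ∈ F.range ↔ ∃ w, modAct m s w = h := by
      rw [MonoidHom.mem_range]
      exact exists_congr fun w => Ψ.permCongrHom.injective.eq_iff
    rw [h1, modAct_range m s hs hinj]
    change _ ↔ ∀ x y : X, r (Ψ (h (Ψ.symm x))) (Ψ (h (Ψ.symm y))) ↔ r x y
    rw [Ψ.forall_congr_left]
    refine forall_congr' fun x => ?_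
    rw [Ψ.forall_congr_left]
    refine forall_congr' fun y => ?_
    rw [hΨ, ← hΨ (Ψ.symm x), Ψ.apply_symm_apply, Ψ.apply_symm_apply]
  exact ⟨(MonoidHom.ofInjective hF).trans (MulEquiv.subgroupCongr hr)⟩

end Model

end SXP
namespace SXP

open Equiv

theorem blockCount_eq {X : Type*} (r : Setoid X) (n : ℕ) :
    blockCount r n =
      Nat.card {b : Quotient r // Nat.card {x : X // (Quotient.mk r x) = b} = n} := by
  have hinj : Function.Injective fun b : Quotient r => {x : X | Quotient.mk r x = b} := by
    intro b c h
    obtain ⟨x, rfl⟩ := Quotient.exists_rep b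
    have : x ∈ {y : X | Quotient.mk r y = c} := by
      have h' : {y : X | Quotient.mk r y = Quotient.mk r x} = {y : X | Quotient.mk r y = c} := h
      rw [← h']; rfl
    exact this
  have himg : {B | B ∈ Setoid.classes r ∧ B.ncard = n} =
      Set.image (fun b : Quotient r => {x : X | Quotient.mk r x = b})
        {b | Nat.card {x : X // (Quotient.mk r x) = b} = n} := by
    ext B
    constructor
    · rintro ⟨⟨y, rfl⟩, hB⟩
      have he : {x : X | Quotient.mk r x = Quotient.mk r y} = {x | r x y} := by
        ext x
        exact Quotient.eq
      refine ⟨Quotient.mk r y, ?_, he⟩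
      rw [← he, ← Nat.card_coe_set_eq] at hB
      exact hB
    · rintro ⟨b, hb, rfl⟩
      obtain ⟨y, rfl⟩ := Quotient.exists_rep b
      refine ⟨⟨y, ?_⟩, ?_⟩
      · ext x
        exact Quotient.eq
      · rw [← Nat.card_coe_set_eq]
        exact hb
  unfold blockCount
  rw [himg, Set.ncard_image_of_injective _ hinj, ← Nat.card_coe_set_eq]
  rfl

theorem exists_model {X : Type*} [Finite X] (r : Setoid X) (A : Finset ℕ)
    (hA : ∀ n, n ∈ A ↔ blockCount r n ≠ 0) :
    ∃ Ψ : Mod (fun i : A => blockCount r i.1) (fun i : A => i.1) ≃ X,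
      ∀ a b, r (Ψ a) (Ψ b) ↔ blk _ _ a = blk _ _ b := by
  let sz : Quotient r → ℕ := fun b => Nat.card {x : X // (Quotient.mk r x) = b}
  let E : ∀ n, {b : Quotient r // sz b = n} ≃ Fin (blockCount r n) := fun n =>
    (Finite.equivFin _).trans (finCongr (blockCount_eq r n).symm)
  let F : ∀ b, {x : X // (Quotient.mk r x) = b} ≃ Fin (sz b) := fun b => Finite.equivFin _
  let f : Mod (fun i : A => blockCount r i.1) (fun i : A => i.1) → X := fun a =>
    ((F ((E a.1.1).symm a.2.1).1).symm (Fin.cast ((E a.1.1).symm a.2.1).2.symm a.2.2)).1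
  have hq : ∀ a, Quotient.mk r (f a) = ((E a.1.1).symm a.2.1).1 := fun a =>
    ((F ((E a.1.1).symm a.2.1).1).symm (Fin.cast ((E a.1.1).symm a.2.1).2.symm a.2.2)).2
  have hrel : ∀ a b, r (f a) (f b) ↔ blk _ _ a = blk _ _ b := by
    rintro a b
    have h0 : r (f a) (f b) ↔ Quotient.mk r (f a) = Quotient.mk r (f b) := Quotient.eq.symm
    rw [h0, hq, hq]
    obtain ⟨⟨i, hi⟩, k, y⟩ := a
    obtain ⟨⟨i', hi'⟩, k', y'⟩ := b
    constructor
    · intro h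
      simp only at h
      have h1 := ((E i).symm k).2
      have h2 := ((E i').symm k').2
      have : i = i' := by rw [← h1, ← h2, h]
      subst this
      have := (E i).symm.injective (Subtype.ext h)
      subst this
      rfl
    · intro h
      simp only [blk] at h
      cases h
      rfl
  have hf : Function.Bijective f := by
    constructor
    · intro a b hab
      have h1 := (hrel a b).1 (by rw [hab])
      obtain ⟨i, k, y⟩ := a
      obtain ⟨i', k', y'⟩ := b
      simp only [blk] at h1
      cases h1
      have h2 := (F _).symm.injective (Subtype.ext hab)
      have h3 : y = y' := by
        have := congrArg Fin.val h2
        exact Fin.ext this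
      rw [h3]
    · intro x
      let b := Quotient.mk r x
      have hb : sz b ∈ A := by
        rw [hA, blockCount_eq]
        have : Nonempty {c : Quotient r // Nat.card {x : X // (Quotient.mk r x) = c} = sz b} :=
          ⟨⟨b, rfl⟩⟩
        exact Nat.card_pos.ne'
      have key : ∀ c : {c : Quotient r // sz c = sz b}, ∀ hc : c = ⟨b, rfl⟩,
          ((F c.1).symm (Fin.cast c.2.symm (F b ⟨x, rfl⟩))).1 = x := by
        rintro c rfl
        simp
      exact ⟨⟨⟨sz b, hb⟩, E (sz b) ⟨b, rfl⟩, F b ⟨x, rfl⟩⟩,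
        key _ ((E (sz b)).symm_apply_apply _)⟩
  exact ⟨Equiv.ofBijective f hf, hrel⟩

theorem exists_sizes {X : Type*} [Finite X] (r : Setoid X) :
    ∃ A : Finset ℕ, ∀ n, n ∈ A ↔ blockCount r n ≠ 0 := by
  have hfin : {n | blockCount r n ≠ 0}.Finite := by
    refine (Set.finite_range
      fun b : Quotient r => Nat.card {x : X // (Quotient.mk r x) = b}).subset ?_
    intro n hn
    by_contra h
    apply hn
    rw [blockCount_eq]
    have : IsEmpty {b : Quotient r // Nat.card {x : X // (Quotient.mk r x) = b} = n} :=
      ⟨fun b => h ⟨b.1, b.2⟩⟩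
    exact Nat.card_of_isEmpty
  exact ⟨hfin.toFinset, fun n => by simp⟩

theorem blockCount_zero {X : Type*} [Finite X] (r : Setoid X) : blockCount r 0 = 0 := by
  rw [blockCount_eq]
  have : IsEmpty {b : Quotient r // Nat.card {x : X // (Quotient.mk r x) = b} = 0} := by
    refine ⟨fun ⟨b, hb⟩ => ?_⟩
    obtain ⟨x, rfl⟩ := Quotient.exists_rep b
    have : Nonempty {y : X // Quotient.mk r y = Quotient.mk r x} := ⟨⟨x, rfl⟩⟩
    exact Nat.card_pos.ne' hb
  exact Nat.card_of_isEmpty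

end SXP

/-- If `|S(X,P)| ≥ 3`, then the rank of the group `S(X,P)`
equals `max{2, 2p+q+g(t)}`. -/
theorem rank_SXP {X : Type*} [Fintype X] [Nonempty X] (r : Setoid X)
    (p q t : ℕ) (n m : Fin p → ℕ) (l : Fin q → ℕ)
    (hn2 : ∀ i, 2 ≤ n i) (hm2 : ∀ i, 2 ≤ m i) (hl2 : ∀ j, 2 ≤ l j)
    (hninj : Function.Injective n) (hlinj : Function.Injective l)
    (hnl : ∀ i j, n i ≠ l j)
    (hcn : ∀ i, blockCount r (n i) = m i)
    (hcl : ∀ j, blockCount r (l j) = 1)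
    (hct : blockCount r 1 = t)
    (hcover : ∀ s, 2 ≤ s → blockCount r s ≠ 0 → (∃ i, s = n i) ∨ (∃ j, s = l j))
    (hS3 : 3 ≤ Nat.card (SGrp r)) :
    grank (SGrp r) = max 2 (2 * p + q + gg t) := by
  obtain ⟨A, hA⟩ := SXP.exists_sizes r
  obtain ⟨Ψ, hΨ⟩ := SXP.exists_model r A hA
  have hpos : ∀ i : A, 1 ≤ i.1 := by
    rintro ⟨i, hi⟩
    rw [hA] at hi
    rcases Nat.eq_zero_or_pos i with rfl | h
    · exact absurd (SXP.blockCount_zero r) hi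
    · exact h
  have hpos' : ∀ i : A, 1 ≤ blockCount r i.1 := fun i =>
    Nat.one_le_iff_ne_zero.2 ((hA _).1 i.2)
  obtain ⟨e⟩ := SXP.exists_mulEquiv _ _ r hpos Subtype.val_injective Ψ hΨ
  rw [← SXP.grank_congr e, SXP.prod_rank _ _ hpos' hpos (by rwa [Nat.card_congr e.toEquiv])]
  congr 1
  rw [Finset.sum_coe_sort A fun i => gg (blockCount r i) + gg i,
    ← Finset.sum_filter_add_sum_filter_not A fun i => 2 ≤ i]
  congr 1
  · have hA2 : A.filter (fun i => 2 ≤ i) = Finset.univ.image n ∪ Finset.univ.image l := by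
      ext i
      simp only [Finset.mem_filter, hA, Finset.mem_union, Finset.mem_image, Finset.mem_univ,
        true_and]
      constructor
      · rintro ⟨h1, h2⟩
        rcases hcover i h2 h1 with ⟨j, rfl⟩ | ⟨j, rfl⟩
        · exact Or.inl ⟨j, rfl⟩
        · exact Or.inr ⟨j, rfl⟩
      · rintro (⟨j, rfl⟩ | ⟨j, rfl⟩)
        · refine ⟨?_, hn2 j⟩
          rw [hcn]
          have := hm2 j
          omega
        · refine ⟨?_, hl2 j⟩
          rw [hcl]
          exact one_ne_zero
    rw [hA2, Finset.sum_union, Finset.sum_image (fun _ _ _ _ h => hninj h),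
      Finset.sum_image (fun _ _ _ _ h => hlinj h)]
    · simp only [hcn, hcl, SXP.gg_of_le (hn2 _), SXP.gg_of_le (hm2 _), SXP.gg_of_le (hl2 _)]
      simp [gg, mul_comm]
    · rw [Finset.disjoint_left]
      intro i hi hj
      simp only [Finset.mem_image, Finset.mem_univ, true_and] at hi hj
      obtain ⟨i, rfl⟩ := hi
      obtain ⟨j, hj⟩ := hj
      exact hnl i j hj.symm
  · have hsub : A.filter (fun i => ¬ 2 ≤ i) ⊆ {1} := by
      intro i hi
      rw [Finset.mem_filter] at hi
      have := hpos ⟨i, hi.1⟩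
      simp only at this
      rw [Finset.mem_singleton]
      omega
    rw [Finset.sum_subset hsub]
    · simp [hct, gg]
    · intro i hi hi'
      rw [Finset.mem_singleton] at hi
      subst hi
      have : blockCount r 1 = 0 := by
        by_contra h
        exact hi' (Finset.mem_filter.2 ⟨(hA 1).2 h, by norm_num⟩)
      rw [this]
      rfl
end
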